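/- arXiv:2309.16766 — 4 statements merged into one kernel-verified Lean document; each statement's English description precedes it below -/
import Mathlib

section
/- Let H be a complex Hilbert space, 𝒜 a von Neumann algebra on H, and Ω ∈ H a vector that is cyclic and separating for 𝒜. Then there exists an antiunitary operator J on H with J ∘ J = id such that for every a ∈ 𝒜 the operator J ∘ a ∘ J belongs to the commutant 𝒜', and for every a' ∈ 𝒜' the operator J ∘ a' ∘ J belongs to 𝒜 (so that J 𝒜 J = 𝒜'). (Existence of a modular conjugation.) -/
open scoped ComplexInnerProductSpace

noncomputable section

variable {H : Type*} [NormedAddCommGroup H] [InnerProductSpace ℂ H] [CompleteSpace H]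

/-- A vector `Ω` is cyclic for a set `S` of bounded operators if `{a Ω : a ∈ S}` is dense. -/
def IsCyclicVector (S : Set (H →L[ℂ] H)) (Ω : H) : Prop :=
  Dense {x : H | ∃ a ∈ S, a Ω = x}

/-!
The proof uses bounded operators only. Let `K` be the closure of `{a Ω | a ∈ A self-adjoint}`, a
real subspace of `H`, and let `P` and `Q` be the real orthogonal projections onto `K` and `iK`.
Then `R = P + Q` and `S = 2 - R` are complex linear and positive, `P - Q` is antilinear with square
`R S`, and the conjugation `J` is the phase in the polar decomposition `P - Q = J T`,
`T = √(R S)`; thus `Δ = S R⁻¹` is the modular operator.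

To see that `J x J ∈ A` for `x ∈ A'`, a Radon–Nikodym argument gives, for every `c > 0`, some
`h ∈ A` with `2 T (J x J) T = c S h R + c⁻¹ R h S`. With `c = e^{-q}` this Sylvester type equation
is inverted: up to powers of `R S`, the operator `J x J` is the integral over `q` of the solutions
`h_q`. Instead of imaginary powers of `Δ`, the inversion uses the semigroup `e^{-xΔ}`: the equation
says that a product of two heat operators around `h_q` is a primitive of a product around `J x J`,
and the integral over `q` then becomes a convolution integral.
-/

namespace TomitaTakesaki

open Filter Topology MeasureTheory

section StrongLimits

variable {𝕜 E F : Type*} [NontriviallyNormedField 𝕜] [NormedAddCommGroup E] [NormedSpace 𝕜 E]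
  [NormedAddCommGroup F] [NormedSpace 𝕜 F]

lemma cauchySeq_apply_of_dense {D : Set E} (hD : Dense D) {h : ℕ → E →L[𝕜] F} {C : ℝ}
    (hC : ∀ n, ‖h n‖ ≤ C) (hcauchy : ∀ d ∈ D, CauchySeq fun n => h n d) (x : E) :
    CauchySeq fun n => h n x := by
  have hC0 : 0 ≤ C := (norm_nonneg _).trans (hC 0)
  rw [Metric.cauchySeq_iff]
  intro ε hε
  obtain ⟨d, hdx, hd⟩ := Metric.dense_iff.1 hD x (ε / 3 / (C + 1)) (by positivity)
  obtain ⟨N, hN⟩ := Metric.cauchySeq_iff.1 (hcauchy d hd) (ε / 3) (by positivity)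
  have hnear : ∀ n, dist (h n x) (h n d) < ε / 3 := fun n => by
    rw [Metric.mem_ball, dist_comm, lt_div_iff₀ (by positivity)] at hdx
    calc dist (h n x) (h n d) ≤ C * dist x d := by
          simpa only [dist_eq_norm, map_sub] using (h n).le_of_opNorm_le (hC n) (x - d)
      _ ≤ dist x d * (C + 1) := by nlinarith [dist_nonneg (x := x) (y := d)]
      _ < ε / 3 := hdx
  refine ⟨N, fun m hm n hn => ?_⟩
  calc dist (h m x) (h n x)
      ≤ dist (h m x) (h m d) + dist (h m d) (h n d) + dist (h n d) (h n x) := dist_triangle4 _ _ _ _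
    _ < ε / 3 + ε / 3 + ε / 3 := by
        gcongr
        exacts [hnear m, hN m hm n hn, dist_comm (h n x) (h n d) ▸ hnear n]
    _ = ε := by ring

lemma exists_strong_limit [CompleteSpace F] {D : Set E} (hD : Dense D) {h : ℕ → E →L[𝕜] F} {C : ℝ}
    (hC : ∀ n, ‖h n‖ ≤ C) (hcauchy : ∀ d ∈ D, CauchySeq fun n => h n d) :
    ∃ g : E →L[𝕜] F, ‖g‖ ≤ C ∧ ∀ x, Tendsto (fun n => h n x) atTop (𝓝 (g x)) := by
  choose g hg using fun x =>
    cauchySeq_tendsto_of_complete (cauchySeq_apply_of_dense hD hC hcauchy x)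
  refine ⟨.ofTendstoOfBoundedRange g h (tendsto_pi_nhds.2 hg)
    (isBounded_iff_forall_norm_le.2 ⟨C, Set.forall_mem_range.2 hC⟩), ?_, hg⟩
  refine ContinuousLinearMap.opNorm_le_bound _ ((norm_nonneg _).trans (hC 0)) fun x => ?_
  exact le_of_tendsto (hg x).norm (.of_forall fun n => (h n).le_of_opNorm_le (hC n) x)

end StrongLimits

section Commutant

variable {A : VonNeumannAlgebra H} {S : Set (H →L[ℂ] H)} {Ω : H} {a b T : H →L[ℂ] H}

lemma star_apply_inner (a : H →L[ℂ] H) (x y : H) : ⟪star a x, y⟫ = ⟪x, a y⟫ :=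
  a.adjoint_inner_left y x

lemma inner_star_apply (a : H →L[ℂ] H) (x y : H) : ⟪x, star a y⟫ = ⟪a x, y⟫ :=
  a.adjoint_inner_right x y

lemma apply_comm_of_mem_commutant (ha : a ∈ A) (hb : b ∈ A.commutant) (x : H) :
    a (b x) = b (a x) :=
  DFunLike.congr_fun (VonNeumannAlgebra.mem_commutant_iff.1 hb a ha) x

lemma mem_commutant_of_apply_comm (h : ∀ y ∈ A, ∀ x, T (y x) = y (T x)) : T ∈ A.commutant :=
  VonNeumannAlgebra.mem_commutant_iff.2 fun y hy => ContinuousLinearMap.ext fun x => (h y hy x).symm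

lemma mem_of_apply_comm (h : ∀ y ∈ A.commutant, ∀ x, T (y x) = y (T x)) : T ∈ A :=
  A.commutant_commutant ▸ mem_commutant_of_apply_comm h

lemma smul_mem (c : ℂ) (ha : a ∈ A) : c • a ∈ A :=
  A.toStarSubalgebra.smul_mem ha c

lemma cfc_mem (ha : a ∈ A) (f : ℝ → ℝ) : cfc f a ∈ A :=
  mem_of_apply_comm fun _ hy x =>
    DFunLike.congr_fun (Commute.cfc_real (VonNeumannAlgebra.mem_commutant_iff.1 hy a ha) f).eq x

omit [CompleteSpace H] in
lemma _root_.IsCyclicVector.funext {X : Type*} [TopologicalSpace X] [T2Space X]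
    (h : IsCyclicVector S Ω) {f g : H → X} (hf : Continuous f) (hg : Continuous g)
    (hfg : ∀ a ∈ S, f (a Ω) = g (a Ω)) : f = g :=
  Continuous.ext_on h hf hg (by rintro _ ⟨a, ha, rfl⟩; exact hfg a ha)

omit [CompleteSpace H] in
lemma _root_.IsCyclicVector.ext_inner (h : IsCyclicVector S Ω) {x y : H}
    (hxy : ∀ a ∈ S, ⟪x, a Ω⟫ = ⟪y, a Ω⟫) : x = y :=
  ext_inner_right ℂ (congrFun (h.funext (f := (⟪x, ·⟫)) (g := (⟪y, ·⟫))
    (by fun_prop) (by fun_prop) hxy))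

lemma exists_mem_of_tendsto_apply (hsep : IsCyclicVector (A.commutant : Set (H →L[ℂ] H)) Ω)
    {h : ℕ → H →L[ℂ] H} {C : ℝ} (hA : ∀ n, h n ∈ A) (hC : ∀ n, ‖h n‖ ≤ C) {α β : H}
    (hα : Tendsto (fun n => h n Ω) atTop (𝓝 α))
    (hβ : Tendsto (fun n => star (h n) Ω) atTop (𝓝 β)) :
    ∃ g ∈ A, ‖g‖ ≤ C ∧ g Ω = α ∧ star g Ω = β := by
  have hcauchy : ∀ d ∈ {x | ∃ y ∈ (A.commutant : Set (H →L[ℂ] H)), y Ω = x},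
      CauchySeq fun n => h n d := by
    rintro _ ⟨y, hy, rfl⟩
    simp only [apply_comm_of_mem_commutant (hA _) hy]
    exact ((y.continuous.tendsto _).comp hα).cauchySeq
  obtain ⟨g, hgC, hg⟩ := exists_strong_limit hsep hC hcauchy
  refine ⟨g, mem_of_apply_comm fun y hy x => ?_, hgC, tendsto_nhds_unique (hg Ω) hα,
    ext_inner_right ℂ fun v => ?_⟩
  · refine tendsto_nhds_unique (hg (y x)) (((y.continuous.tendsto _).comp (hg x)).congr fun n => ?_)
    exact (apply_comm_of_mem_commutant (hA n) hy x).symm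
  · have h1 : Tendsto (fun n => ⟪star (h n) Ω, v⟫) atTop (𝓝 ⟪Ω, g v⟫) := by
      simpa only [star_apply_inner] using tendsto_const_nhds.inner (hg v)
    rw [star_apply_inner]
    exact tendsto_nhds_unique h1 (hβ.inner tendsto_const_nhds)

end Commutant

section RadonNikodym

variable {A : VonNeumannAlgebra H} {Ω : H}

lemma exists_sqrt_mul_star_add_sq {k : H →L[ℂ] H} (hk : k ∈ A) {ε : ℝ} (hε : 0 < ε) :
    ∃ b ∈ A, ∃ p ∈ A, 0 ≤ b ∧ 0 ≤ p ∧ b * p = 1 ∧ ‖p‖ ≤ ε⁻¹ ∧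
      b * b = k * star k + (ε ^ 2) • 1 := by
  have hm : 0 ≤ k * star k := mul_star_self_nonneg k
  have hmA : k * star k ∈ A := mul_mem hk (star_mem hk)
  set f : ℝ → ℝ := fun t => √(ε ^ 2 + |t|) with hf
  have hfε : ∀ t, ε ≤ f t := fun t => Real.le_sqrt_of_sq_le (by linarith [abs_nonneg t])
  have hf0 : ∀ t, 0 < f t := fun t => hε.trans_le (hfε t)
  have hfc : Continuous f := by fun_prop
  have hfi : Continuous fun t => (f t)⁻¹ := hfc.inv₀ fun t => (hf0 t).ne'
  refine ⟨cfc f (k * star k), cfc_mem hmA _, cfc (fun t => (f t)⁻¹) (k * star k), cfc_mem hmA _,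
    cfc_nonneg fun t _ => (hf0 t).le, cfc_nonneg fun t _ => (inv_pos.2 (hf0 t)).le, ?_, ?_, ?_⟩
  · rw [← cfc_mul f _ _ hfc.continuousOn hfi.continuousOn]
    simp only [mul_inv_cancel₀ (hf0 _).ne', cfc_const_one ℝ (k * star k)]
  · refine norm_cfc_le (by positivity) fun t _ => ?_
    rw [Real.norm_of_nonneg (inv_pos.2 (hf0 t)).le]
    exact inv_anti₀ hε (hfε t)
  · rw [← cfc_mul f f _ hfc.continuousOn hfc.continuousOn]
    have hsq : (spectrum ℝ (k * star k)).EqOn (fun t => f t * f t) fun t => t + ε ^ 2 := by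
      intro t ht
      simp only [hf, abs_of_nonneg (spectrum_nonneg_of_nonneg hm ht), add_comm t]
      exact Real.mul_self_sqrt (add_nonneg (sq_nonneg ε) (spectrum_nonneg_of_nonneg hm ht))
    rw [cfc_congr hsq, cfc_add_const (ε ^ 2) (fun t => t) _, cfc_id' ℝ (k * star k),
      Algebra.algebraMap_eq_smul_one]

omit [CompleteSpace H] in
lemma re_inner_nonneg {b : H →L[ℂ] H} (hb : 0 ≤ b) (x : H) : 0 ≤ (⟪b x, x⟫).re :=
  (ContinuousLinearMap.nonneg_iff_isPositive b).1 hb |>.re_inner_nonneg_left x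

lemma two_mul_re_inner_le {b p : H →L[ℂ] H} (hp : 0 ≤ p) (hpb : p * b = 1) {c : ℝ}
    (hc : 0 < c) (x y : H) :
    2 * (⟪x, y⟫).re ≤ c * (⟪p y, y⟫).re + c⁻¹ * (⟪b x, x⟫).re := by
  have hpb_apply : ∀ v, p (b v) = v := fun v => DFunLike.congr_fun hpb v
  have hcross : ⟪p y, b x⟫ = ⟪y, x⟫ := by
    rw [← inner_star_apply, (IsSelfAdjoint.of_nonneg hp).star_eq, hpb_apply]
  have hpos := re_inner_nonneg hp ((c : ℂ) • y - b x)
  simp only [map_sub, map_smul, hpb_apply, inner_sub_left, inner_sub_right, inner_smul_left,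
    inner_smul_right, hcross, Complex.conj_ofReal, Complex.sub_re, Complex.re_ofReal_mul] at hpos
  have hsymm : (⟪y, x⟫).re = (⟪x, y⟫).re := inner_re_symm (𝕜 := ℂ) y x
  have hsymm' : (⟪x, b x⟫).re = (⟪b x, x⟫).re := inner_re_symm (𝕜 := ℂ) x (b x)
  rw [hsymm, hsymm'] at hpos
  have hexp : c * (⟪p y, y⟫).re + c⁻¹ * (⟪b x, x⟫).re - 2 * (⟪x, y⟫).re =
      c⁻¹ * (c * (c * (⟪p y, y⟫).re) - c * (⟪x, y⟫).re - (c * (⟪x, y⟫).re - (⟪b x, x⟫).re)) := by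
    field_simp
    ring
  linarith [mul_nonneg (inv_pos.2 hc).le hpos]

lemma re_inner_apply_le_of_mem_commutant {x' b : H →L[ℂ] H} (hx' : x' ∈ A.commutant)
    (hx1 : ‖x'‖ ≤ 1) (hb : b ∈ A) (hb0 : 0 ≤ b) (x : H) :
    (⟪b (x' x), x' x⟫).re ≤ (⟪b x, x⟫).re := by
  have hcomm : Commute b (1 - star x' * x') :=
    (Commute.one_right b).sub_right
      (VonNeumannAlgebra.mem_commutant_iff.1 (mul_mem (star_mem hx') hx') b hb)
  have hpos : 0 ≤ 1 - star x' * x' :=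
    sub_nonneg.2 <| (CStarAlgebra.norm_le_one_iff_of_nonneg _).1 <| by
      rw [CStarRing.norm_star_mul_self]; nlinarith [norm_nonneg x']
  have h := re_inner_nonneg (hcomm.mul_nonneg hb0 hpos) x
  have heq : ⟪b (star x' (x' x)), x⟫ = ⟪b (x' x), x' x⟫ := by
    rw [apply_comm_of_mem_commutant hb (star_mem hx'), star_apply_inner]
  simp only [mul_apply_eq_comp, sub_apply, one_apply_eq_self, map_sub, inner_sub_left, heq,
    Complex.sub_re] at h
  linarith

lemma norm_star_mul_le_one {k b p : H →L[ℂ] H} {r : ℝ} (hp : star p = p) (hpb : p * b = 1)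
    (hkp : k * (star k * p) = b - (r ^ 2) • p) : ‖star k * p‖ ≤ 1 := by
  have heq : star (star k * p) * (star k * p) = 1 - (r ^ 2) • (p * p) := by
    rw [star_mul, star_star, hp, mul_assoc, hkp, mul_sub, hpb, mul_smul_comm]
  have hle : star (star k * p) * (star k * p) ≤ 1 := by
    rw [heq, sub_le_self_iff]
    exact smul_nonneg (by positivity) (by simpa only [hp] using star_mul_self_nonneg p)
  rw [← CStarAlgebra.norm_le_one_iff_of_nonneg _ (star_mul_self_nonneg _),
    CStarRing.norm_star_mul_self] at hle
  nlinarith [norm_nonneg (star k * p)]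

-- With `b = (k k* + ε²)^(1/2)` and `h = k* b⁻¹`, positivity of `b⁻¹` at `c k Ω - b x' Ω` is the
-- claim up to the error `c⁻¹ ε² ⟪Ω, b⁻¹ Ω⟫`.
lemma exists_contraction_re_inner_sub_le (Ω : H) {x' : H →L[ℂ] H} (hx' : x' ∈ A.commutant)
    (hx1 : ‖x'‖ ≤ 1) {c : ℝ} (hc : 0 < c) {k : H →L[ℂ] H} (hk : k ∈ A) {ε : ℝ} (hε : 0 < ε) :
    ∃ h ∈ A, ‖h‖ ≤ 1 ∧ 2 * (⟪x' Ω, k Ω⟫).re - c⁻¹ * (ε * ‖Ω‖ ^ 2) ≤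
      c * (⟪star h Ω, k Ω⟫).re + c⁻¹ * (⟪star k Ω, h Ω⟫).re := by
  obtain ⟨b, hbA, p, hpA, hb0, hp0, hbp, hpε, hbb⟩ := exists_sqrt_mul_star_add_sq hk hε
  have hbs : star b = b := (IsSelfAdjoint.of_nonneg hb0).star_eq
  have hps : star p = p := (IsSelfAdjoint.of_nonneg hp0).star_eq
  have hpb : p * b = 1 := by simpa [hbs, hps] using congrArg star hbp
  have hkkp : k * (star k * p) = b - (ε ^ 2) • p := by
    rw [← mul_assoc, ← sub_eq_iff_eq_add.2 hbb, sub_mul, mul_assoc, hbp, mul_one, smul_mul_assoc,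
      one_mul]
  refine ⟨star k * p, mul_mem (star_mem hk) hpA, norm_star_mul_le_one hps hpb hkkp, ?_⟩
  have h1 : ⟪star (star k * p) Ω, k Ω⟫ = ⟪p (k Ω), k Ω⟫ := by
    rw [star_mul, star_star, hps, mul_apply_eq_comp]
  have h2 : (⟪star k Ω, (star k * p) Ω⟫).re = (⟪b Ω, Ω⟫).re - ε ^ 2 * (⟪Ω, p Ω⟫).re := by
    rw [star_apply_inner, ← mul_apply_eq_comp, hkkp, sub_apply, inner_sub_right, Complex.sub_re,
      ← star_apply_inner, hbs, smul_apply, ← Complex.coe_smul, inner_smul_right,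
      Complex.re_ofReal_mul]
  have h3 : ε ^ 2 * (⟪Ω, p Ω⟫).re ≤ ε * ‖Ω‖ ^ 2 :=
    calc ε ^ 2 * (⟪Ω, p Ω⟫).re ≤ ε ^ 2 * (‖Ω‖ * (ε⁻¹ * ‖Ω‖)) := by
          gcongr
          exact (Complex.re_le_norm _).trans <| (norm_inner_le_norm _ _).trans <| by
            gcongr; exact p.le_of_opNorm_le hpε _
      _ = ε * ‖Ω‖ ^ 2 := by field_simp
  have h4 := two_mul_re_inner_le hp0 hpb hc (x' Ω) (k Ω)
  have h5 := mul_le_mul_of_nonneg_left (re_inner_apply_le_of_mem_commutant hx' hx1 hbA hb0 Ω)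
    (inv_pos.2 hc).le
  have h6 := mul_le_mul_of_nonneg_left h3 (inv_pos.2 hc).le
  rw [h1, h2]
  linarith

lemma exists_contraction_re_inner_le_add (Ω : H) {x' : H →L[ℂ] H} (hx' : x' ∈ A.commutant)
    (hx1 : ‖x'‖ ≤ 1) {c : ℝ} (hc : 0 < c) {k : H →L[ℂ] H} (hk : k ∈ A) {ε : ℝ} (hε : 0 < ε) :
    ∃ h ∈ A, ‖h‖ ≤ 1 ∧ 2 * (⟪x' Ω, k Ω⟫).re ≤
      c * (⟪star h Ω, k Ω⟫).re + c⁻¹ * (⟪star k Ω, h Ω⟫).re + ε := by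
  obtain ⟨h, hA, h1, hle⟩ := exists_contraction_re_inner_sub_le Ω hx' hx1 hc hk
    (ε := ε * c / (1 + ‖Ω‖ ^ 2)) (by positivity)
  have hsmall : c⁻¹ * (ε * c / (1 + ‖Ω‖ ^ 2) * ‖Ω‖ ^ 2) ≤ ε :=
    calc c⁻¹ * (ε * c / (1 + ‖Ω‖ ^ 2) * ‖Ω‖ ^ 2) = ε * (‖Ω‖ ^ 2 / (1 + ‖Ω‖ ^ 2)) := by field_simp
      _ ≤ ε := mul_le_of_le_one_right hε.le (div_le_one_of_le₀ (by linarith) (by positivity))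
  exact ⟨h, hA, h1, by linarith⟩

end RadonNikodym

lemma exists_forall_inner_eq_of_approx {E : Type*} [NormedAddCommGroup E] [InnerProductSpace ℝ E]
    [CompleteSpace E] {D : Set E} (hne : D.Nonempty) (hconv : Convex ℝ D) (hclosed : IsClosed D)
    {M : ℝ} (hM : ∀ e ∈ D, ‖e‖ ≤ M) {G : Submodule ℝ E} (hDG : D ⊆ G) (q : E)
    (happrox : ∀ g ∈ G, ∀ ε > 0, ∃ e ∈ D, inner ℝ q g - ε ≤ inner ℝ e g) :
    ∃ d ∈ D, ∀ g ∈ G, inner ℝ q g = inner ℝ d g := by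
  have : CompleteSpace G.topologicalClosure := G.isClosed_topologicalClosure.completeSpace_coe
  set p := G.topologicalClosure.starProjection q
  have hp : ∀ g ∈ G.topologicalClosure, inner ℝ q g = inner ℝ p g := fun g hg => by
    simpa only [inner_sub_left, sub_eq_zero] using
      G.topologicalClosure.starProjection_inner_eq_zero q g hg
  obtain ⟨d, hd, hmin⟩ := exists_norm_eq_iInf_of_complete_convex hne hclosed.isComplete hconv p
  have hmin' := (norm_eq_iInf_iff_real_inner_le_zero hconv hd).1 hmin
  have hdp : p - d ∈ G.topologicalClosure :=
    sub_mem (Submodule.starProjection_apply_mem _ q) (G.le_topologicalClosure (hDG hd))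
  have hbound : ∀ g ∈ G, inner ℝ (p - d) g ≤ M * ‖g - (p - d)‖ + ‖d‖ * ‖g - (p - d)‖ := by
    intro g hg
    refine le_of_forall_pos_sub_le fun ε hε => ?_
    obtain ⟨e, he, heg⟩ := happrox g hg ε hε
    have h1 : inner ℝ (e - d) (p - d) ≤ 0 := by rw [real_inner_comm]; exact hmin' e he
    have h2 : inner ℝ e (g - (p - d)) ≤ M * ‖g - (p - d)‖ :=
      (real_inner_le_norm _ _).trans (by gcongr; exact hM e he)
    have h3 : -(‖d‖ * ‖g - (p - d)‖) ≤ inner ℝ d (g - (p - d)) :=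
      (abs_le.1 (abs_real_inner_le_norm _ _)).1
    rw [hp g (G.le_topologicalClosure hg)] at heg
    simp only [inner_sub_left, inner_sub_right] at *
    linarith
  have hzero : p - d = 0 := by
    have hle : inner ℝ (p - d) (p - d) ≤
        M * ‖(p - d) - (p - d)‖ + ‖d‖ * ‖(p - d) - (p - d)‖ :=
      closure_minimal (t := {g | inner ℝ (p - d) g ≤ M * ‖g - (p - d)‖ + ‖d‖ * ‖g - (p - d)‖})
        hbound (isClosed_le (by fun_prop) (by fun_prop)) hdp
    rw [sub_self, norm_zero, mul_zero, mul_zero, add_zero] at hle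
    exact inner_self_eq_zero.1 (hle.antisymm real_inner_self_nonneg)
  exact ⟨d, hd, fun g hg => by rw [hp g (G.le_topologicalClosure hg), sub_eq_zero.1 hzero]⟩

attribute [local instance] InnerProductSpace.complexToReal

/-- The map `k ↦ (s⁻¹ k Ω, s k* Ω)`, whose range over a von Neumann algebra is, up to the weight
`s`, the graph of Tomita's conjugation `k Ω ↦ k* Ω`. -/
def starGraph (s : ℝ) (Ω : H) : (H →L[ℂ] H) →L[ℝ] WithLp 2 (H × H) :=
  (WithLp.prodContinuousLinearEquiv 2 ℝ H H).symm.toContinuousLinearMap ∘L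
    (s⁻¹ • (ContinuousLinearMap.apply ℂ H Ω).restrictScalars ℝ).prod
      (s • ((ContinuousLinearMap.apply ℂ H Ω).restrictScalars ℝ ∘L
        (starL' ℝ : (H →L[ℂ] H) ≃L[ℝ] (H →L[ℂ] H)).toContinuousLinearMap))

section StarGraph

variable {A : VonNeumannAlgebra H} {Ω : H} {s : ℝ}

lemma starGraph_apply (s : ℝ) (Ω : H) (k : H →L[ℂ] H) :
    starGraph s Ω k = WithLp.toLp 2 (s⁻¹ • k Ω, s • star k Ω) := rfl

lemma inner_starGraph (hs : s ≠ 0) (Ω : H) (h k : H →L[ℂ] H) :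
    inner ℝ (starGraph s Ω h) (starGraph s Ω (star k)) =
      s ^ 2 * (⟪star h Ω, k Ω⟫).re + (s ^ 2)⁻¹ * (⟪star k Ω, h Ω⟫).re := by
  have hsymm : inner ℝ (h Ω) (star k Ω) = (⟪star k Ω, h Ω⟫).re := real_inner_comm _ _
  have hre : inner ℝ (star h Ω) (k Ω) = (⟪star h Ω, k Ω⟫).re := rfl
  simp only [WithLp.prod_inner_apply, starGraph_apply, star_star, real_inner_smul_left,
    real_inner_smul_right, hsymm, hre]
  field_simp
  ring

/-- The real linear space underlying a von Neumann algebra. -/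
def realSubmodule (A : VonNeumannAlgebra H) : Submodule ℝ (H →L[ℂ] H) :=
  A.toStarSubalgebra.toSubalgebra.toSubmodule.restrictScalars ℝ

lemma isClosed_starGraph_image (hs : s ≠ 0)
    (hsep : IsCyclicVector (A.commutant : Set (H →L[ℂ] H)) Ω) :
    IsClosed (starGraph s Ω '' (A ∩ Metric.closedBall 0 1)) := by
  refine IsSeqClosed.isClosed fun e p he hp => ?_
  choose h hh heq using he
  obtain rfl : (fun n => starGraph s Ω (h n)) = e := funext heq
  have h1 : Tendsto (fun n => h n Ω) atTop (𝓝 (s • p.fst)) := by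
    simpa only [starGraph_apply, WithLp.toLp_fst, smul_smul, mul_inv_cancel₀ hs, one_smul,
      Function.comp_def] using (((WithLp.continuous_fst 2 H H).tendsto p).comp hp).const_smul s
  have h2 : Tendsto (fun n => star (h n) Ω) atTop (𝓝 (s⁻¹ • p.snd)) := by
    simpa only [starGraph_apply, WithLp.toLp_snd, smul_smul, inv_mul_cancel₀ hs, one_smul,
      Function.comp_def] using (((WithLp.continuous_snd 2 H H).tendsto p).comp hp).const_smul s⁻¹
  obtain ⟨g, gA, g1, hα, hβ⟩ := exists_mem_of_tendsto_apply hsep (fun n => (hh n).1)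
    (fun n => mem_closedBall_zero_iff.1 (hh n).2) h1 h2
  refine ⟨g, ⟨gA, mem_closedBall_zero_iff.2 g1⟩, WithLp.ofLp_injective 2 (Prod.ext ?_ ?_)⟩
  · exact (congrArg (s⁻¹ • ·) hα).trans (inv_smul_smul₀ hs _)
  · exact (congrArg (s • ·) hβ).trans (smul_inv_smul₀ hs _)

lemma exists_radonNikodym_re (hsep : IsCyclicVector (A.commutant : Set (H →L[ℂ] H)) Ω)
    {x' : H →L[ℂ] H} (hx' : x' ∈ A.commutant) (hx1 : ‖x'‖ ≤ 1) {c : ℝ} (hc : 0 < c) :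
    ∃ h ∈ A, ‖h‖ ≤ 1 ∧ ∀ k ∈ A,
      2 * (⟪x' Ω, k Ω⟫).re = c * (⟪star h Ω, k Ω⟫).re + c⁻¹ * (⟪star k Ω, h Ω⟫).re := by
  have hs : √c ≠ 0 := (Real.sqrt_pos.2 hc).ne'
  have hsq : √c ^ 2 = c := Real.sq_sqrt hc.le
  let q : WithLp 2 (H × H) := WithLp.toLp 2 (0, (2 * (√c)⁻¹) • x' Ω)
  have hq : ∀ k, inner ℝ q (starGraph √c Ω (star k)) = 2 * (⟪x' Ω, k Ω⟫).re := fun k => by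
    have hre : inner ℝ (x' Ω) (k Ω) = (⟪x' Ω, k Ω⟫).re := rfl
    simp only [q, WithLp.prod_inner_apply, starGraph_apply, star_star, inner_zero_left, zero_add,
      real_inner_smul_left, real_inner_smul_right, hre]
    field_simp
  have hinner : ∀ h k, inner ℝ (starGraph √c Ω h) (starGraph √c Ω (star k)) =
      c * (⟪star h Ω, k Ω⟫).re + c⁻¹ * (⟪star k Ω, h Ω⟫).re := fun h k => by
    rw [inner_starGraph hs, hsq]
  have happrox : ∀ g ∈ (realSubmodule A).map (starGraph √c Ω).toLinearMap, ∀ ε > 0,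
      ∃ e ∈ starGraph √c Ω '' (A ∩ Metric.closedBall 0 1), inner ℝ q g - ε ≤ inner ℝ e g := by
    rintro _ ⟨k, hk, rfl⟩ ε hε
    obtain ⟨h, hA, h1, hle⟩ := exists_contraction_re_inner_le_add Ω hx' hx1 hc
      (star_mem (s := A) hk) hε
    refine ⟨_, Set.mem_image_of_mem _ ⟨hA, mem_closedBall_zero_iff.2 h1⟩, ?_⟩
    rw [sub_le_iff_le_add]
    rwa [← hq, ← hinner, star_star] at hle
  obtain ⟨_, ⟨h, ⟨hA, h1⟩, rfl⟩, hh⟩ := exists_forall_inner_eq_of_approx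
    (D := starGraph √c Ω '' (A ∩ Metric.closedBall 0 1))
    (G := (realSubmodule A).map (starGraph √c Ω).toLinearMap) (M := ‖starGraph √c Ω‖)
    ⟨_, Set.mem_image_of_mem _ ⟨zero_mem A, Metric.mem_closedBall_self zero_le_one⟩⟩
    (((realSubmodule A).convex.inter (convex_closedBall 0 1)).linear_image
      (starGraph √c Ω).toLinearMap)
    (isClosed_starGraph_image hs hsep)
    (by
      rintro _ ⟨h, ⟨-, h1⟩, rfl⟩
      simpa using (starGraph √c Ω).le_opNorm_of_le (mem_closedBall_zero_iff.1 h1))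
    (Set.image_mono Set.inter_subset_left) q happrox
  refine ⟨h, hA, mem_closedBall_zero_iff.1 h1, fun k hk => ?_⟩
  rw [← hq, ← hinner]
  exact hh _ ⟨star k, star_mem (s := A) hk, rfl⟩

theorem exists_radonNikodym (hsep : IsCyclicVector (A.commutant : Set (H →L[ℂ] H)) Ω)
    {x' : H →L[ℂ] H} (hx' : x' ∈ A.commutant) (hx1 : ‖x'‖ ≤ 1) {c : ℝ} (hc : 0 < c) :
    ∃ h ∈ A, ‖h‖ ≤ 1 ∧ ∀ k ∈ A,
      2 * ⟪x' Ω, k Ω⟫ = c * ⟪star h Ω, k Ω⟫ + (c : ℂ)⁻¹ * ⟪star k Ω, h Ω⟫ := by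
  obtain ⟨h, hA, h1, hre⟩ := exists_radonNikodym_re hsep hx' hx1 hc
  refine ⟨h, hA, h1, fun k hk => ?_⟩
  have hI := hre (Complex.I • k) (smul_mem _ hk)
  simp only [smul_apply, star_smul, inner_smul_left, inner_smul_right] at hI
  simp only [Complex.star_def, Complex.conj_I, map_neg, neg_neg, Complex.I_mul_re] at hI
  rw [← Complex.ofReal_inv]
  apply Complex.ext
  · simpa using hre k hk
  · simp
    linarith

end StarGraph

section Density

open ContinuousLinearMap (adjoint)

variable {A : VonNeumannAlgebra H} {Ω ζ : H}

lemma starProjection_apply_comm {E : Type*} [NormedAddCommGroup E] [InnerProductSpace ℂ E]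
    [CompleteSpace E] (G : Submodule ℂ E) [G.HasOrthogonalProjection] {T : E →L[ℂ] E}
    (hT : ∀ u ∈ G, T u ∈ G) (hT' : ∀ u ∈ G, star T u ∈ G) (u : E) :
    G.starProjection (T u) = T (G.starProjection u) := by
  refine Submodule.eq_starProjection_of_mem_orthogonal (hT _ (G.starProjection_apply_mem u)) ?_
  rw [← map_sub, Submodule.mem_orthogonal]
  intro w hw
  rw [← star_apply_inner]
  exact (Submodule.mem_orthogonal _ _).1 (G.sub_starProjection_mem_orthogonal u) _ (hT' w hw)

lemma adjoint_fstL_apply (x : H) : adjoint (WithLp.fstL 2 ℂ H H) x = WithLp.toLp 2 (x, 0) :=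
  ext_inner_right ℂ fun v => by
    simp [ContinuousLinearMap.adjoint_inner_left, WithLp.prod_inner_apply, WithLp.fstL]

lemma adjoint_sndL_apply (x : H) : adjoint (WithLp.sndL 2 ℂ H H) x = WithLp.toLp 2 (0, x) :=
  ext_inner_right ℂ fun v => by
    simp [ContinuousLinearMap.adjoint_inner_left, WithLp.prod_inner_apply, WithLp.sndL]

/-- The operator `a ⊕ a` on `H ⊕ H`. -/
def diagonal (a : H →L[ℂ] H) : WithLp 2 (H × H) →L[ℂ] WithLp 2 (H × H) :=
  adjoint (WithLp.fstL 2 ℂ H H) ∘L a ∘L WithLp.fstL 2 ℂ H H +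
    adjoint (WithLp.sndL 2 ℂ H H) ∘L a ∘L WithLp.sndL 2 ℂ H H

lemma diagonal_apply (a : H →L[ℂ] H) (u : WithLp 2 (H × H)) :
    diagonal a u = WithLp.toLp 2 (a u.fst, a u.snd) := by
  change adjoint (WithLp.fstL 2 ℂ H H) (a u.fst) + adjoint (WithLp.sndL 2 ℂ H H) (a u.snd) = _
  rw [adjoint_fstL_apply, adjoint_sndL_apply, ← WithLp.toLp_add, Prod.mk_add_mk, add_zero, zero_add]

lemma star_diagonal (a : H →L[ℂ] H) : star (diagonal a) = diagonal (star a) := by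
  simp only [diagonal, ContinuousLinearMap.star_eq_adjoint, map_add,
    ContinuousLinearMap.adjoint_comp, ContinuousLinearMap.adjoint_adjoint,
    ContinuousLinearMap.comp_assoc]

/-- The graph of `x Ω ↦ x ζ`, where `x` runs through `A`, as a closed relation. -/
def orbitGraph (A : VonNeumannAlgebra H) (Ω ζ : H) : Submodule ℂ (WithLp 2 (H × H)) :=
  ((A.toStarSubalgebra.toSubalgebra.toSubmodule).map
    ((WithLp.linearEquiv 2 ℂ (H × H)).symm.toLinearMap ∘ₗ
      ((ContinuousLinearMap.apply ℂ H Ω).toLinearMap.prod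
        (ContinuousLinearMap.apply ℂ H ζ).toLinearMap))).topologicalClosure

lemma toLp_mem_orbitGraph {x : H →L[ℂ] H} (hx : x ∈ A) :
    WithLp.toLp 2 (x Ω, x ζ) ∈ orbitGraph A Ω ζ :=
  Submodule.le_topologicalClosure _ ⟨x, hx, rfl⟩

instance : (orbitGraph A Ω ζ).HasOrthogonalProjection :=
  have : CompleteSpace (orbitGraph A Ω ζ) :=
    (Submodule.isClosed_topologicalClosure _).completeSpace_coe
  inferInstance

lemma diagonal_apply_mem_orbitGraph {a : H →L[ℂ] H} (ha : a ∈ A) {u : WithLp 2 (H × H)}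
    (hu : u ∈ orbitGraph A Ω ζ) : diagonal a u ∈ orbitGraph A Ω ζ := by
  refine map_mem_closure (diagonal a).continuous hu ?_
  rintro _ ⟨x, hx, rfl⟩
  exact ⟨a * x, mul_mem (S := VonNeumannAlgebra H) (s := A) ha hx,
    (diagonal_apply a (WithLp.toLp 2 (x Ω, x ζ))).symm⟩

lemma starProjection_orbitGraph_diagonal {a : H →L[ℂ] H} (ha : a ∈ A) (u : WithLp 2 (H × H)) :
    (orbitGraph A Ω ζ).starProjection (diagonal a u) =
      diagonal a ((orbitGraph A Ω ζ).starProjection u) :=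
  starProjection_apply_comm _ (fun _ => diagonal_apply_mem_orbitGraph ha)
    (fun _ hu => star_diagonal a ▸ diagonal_apply_mem_orbitGraph (star_mem ha) hu) u

/-- The upper right corner of the projection onto the orbit graph, as an operator on `H`. -/
def corner (A : VonNeumannAlgebra H) (Ω ζ : H) : H →L[ℂ] H :=
  WithLp.fstL 2 ℂ H H ∘L (orbitGraph A Ω ζ).starProjection ∘L adjoint (WithLp.sndL 2 ℂ H H)

lemma corner_apply (x : H) :
    corner A Ω ζ x = ((orbitGraph A Ω ζ).starProjection (WithLp.toLp 2 (0, x))).fst := by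
  rw [← adjoint_sndL_apply]; rfl

lemma star_corner_apply (x : H) :
    star (corner A Ω ζ) x = ((orbitGraph A Ω ζ).starProjection (WithLp.toLp 2 (x, 0))).snd := by
  have hself : adjoint (orbitGraph A Ω ζ).starProjection = (orbitGraph A Ω ζ).starProjection :=
    isSelfAdjoint_starProjection _
  rw [← adjoint_fstL_apply, corner, ContinuousLinearMap.star_eq_adjoint]
  simp only [ContinuousLinearMap.adjoint_comp, ContinuousLinearMap.adjoint_adjoint, hself]
  rfl

lemma corner_mem_commutant : corner A Ω ζ ∈ A.commutant := by
  refine mem_commutant_of_apply_comm fun y hy x => ?_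
  have hdiag : WithLp.toLp 2 (0, y x) = diagonal y (WithLp.toLp 2 (0, x)) := by
    simp [diagonal_apply]
  rw [corner_apply, corner_apply, hdiag, starProjection_orbitGraph_diagonal hy, diagonal_apply,
    WithLp.toLp_fst]

omit [InnerProductSpace ℂ H] [CompleteSpace H] in
lemma toLp_eq_add (x y : H) :
    (WithLp.toLp 2 (x, y) : WithLp 2 (H × H)) = WithLp.toLp 2 (x, 0) + WithLp.toLp 2 (0, y) := by
  rw [← WithLp.toLp_add, Prod.mk_add_mk, add_zero, zero_add]

lemma starProjection_orbitGraph_fst_add_snd :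
    (orbitGraph A Ω ζ).starProjection (WithLp.toLp 2 (Ω, 0)) +
      (orbitGraph A Ω ζ).starProjection (WithLp.toLp 2 (0, ζ)) = WithLp.toLp 2 (Ω, ζ) := by
  rw [← map_add, ← toLp_eq_add, Submodule.starProjection_eq_self_iff]
  exact toLp_mem_orbitGraph (one_mem A)

lemma starProjection_orbitGraph_swap (hA : ∀ x ∈ A, ⟪x Ω, ζ⟫ = -⟪ζ, star x Ω⟫) :
    (orbitGraph A Ω ζ).starProjection (WithLp.toLp 2 (ζ, 0)) +
      (orbitGraph A Ω ζ).starProjection (WithLp.toLp 2 (0, Ω)) = 0 := by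
  rw [← map_add, ← toLp_eq_add, Submodule.starProjection_apply_eq_zero_iff, orbitGraph,
    Submodule.orthogonal_closure, Submodule.mem_orthogonal]
  rintro _ ⟨x, hx, rfl⟩
  change ⟪x Ω, ζ⟫ + ⟪x ζ, Ω⟫ = 0
  rw [hA x hx, ← inner_star_apply, neg_add_cancel]

lemma norm_sq_starProjection_orbitGraph (hA : ∀ x ∈ A, ⟪x Ω, ζ⟫ = -⟪ζ, star x Ω⟫)
    (hA' : ∀ x ∈ A.commutant, ⟪x Ω, ζ⟫ = ⟪ζ, star x Ω⟫) :
    -‖(orbitGraph A Ω ζ).starProjection (WithLp.toLp 2 (ζ, 0))‖ ^ 2 =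
      ‖WithLp.toLp 2 (0, ζ) - (orbitGraph A Ω ζ).starProjection (WithLp.toLp 2 (0, ζ))‖ ^ 2 := by
  set G := orbitGraph A Ω ζ
  have hfst : corner A Ω ζ Ω = -(G.starProjection (WithLp.toLp 2 (ζ, 0))).fst := by
    rw [corner_apply, eq_neg_of_add_eq_zero_right (starProjection_orbitGraph_swap hA)]; rfl
  have hsnd : star (corner A Ω ζ) Ω =
      (WithLp.toLp 2 (0, ζ) - G.starProjection (WithLp.toLp 2 (0, ζ))).snd := by
    rw [star_corner_apply, eq_sub_of_add_eq starProjection_orbitGraph_fst_add_snd]; rfl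
  have hproj : ⟪(G.starProjection (WithLp.toLp 2 (ζ, 0))).fst, ζ⟫.re =
      ‖G.starProjection (WithLp.toLp 2 (ζ, 0))‖ ^ 2 := by
    refine Eq.trans ?_ (G.re_inner_starProjection_eq_normSq (WithLp.toLp 2 (ζ, 0)))
    rw [WithLp.prod_inner_apply]
    simp
  have hproj' : ⟪ζ, (WithLp.toLp 2 (0, ζ) - G.starProjection (WithLp.toLp 2 (0, ζ))).snd⟫.re =
      ‖WithLp.toLp 2 (0, ζ) - G.starProjection (WithLp.toLp 2 (0, ζ))‖ ^ 2 := by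
    rw [← G.starProjection_orthogonal_val]
    refine Eq.trans ?_ (Gᗮ.re_inner_starProjection_eq_normSq (WithLp.toLp 2 (0, ζ)))
    rw [inner_re_symm, WithLp.prod_inner_apply, WithLp.ofLp_toLp, inner_zero_left, zero_add]
    rfl
  have hre := congrArg Complex.re (hA' _ (corner_mem_commutant (A := A) (Ω := Ω) (ζ := ζ)))
  rwa [hfst, hsnd, inner_neg_left, Complex.neg_re, hproj, hproj'] at hre

-- By `hA'` for the corner, the projection onto the orbit graph kills `(ζ, 0)` and fixes `(0, ζ)`,
-- hence fixes `(Ω, 0)`, hence `(x Ω, 0)` for `x ∈ A`, hence by density also `(ζ, 0)`.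
lemma eq_zero_of_inner_skew_of_inner_symm (hcyc : IsCyclicVector (A : Set (H →L[ℂ] H)) Ω)
    (hA : ∀ x ∈ A, ⟪x Ω, ζ⟫ = -⟪ζ, star x Ω⟫)
    (hA' : ∀ x ∈ A.commutant, ⟪x Ω, ζ⟫ = ⟪ζ, star x Ω⟫) : ζ = 0 := by
  have hnorm := norm_sq_starProjection_orbitGraph hA hA'
  have hfix := starProjection_orbitGraph_fst_add_snd (A := A) (Ω := Ω) (ζ := ζ)
  set p := (orbitGraph A Ω ζ).starProjection
  have hζ : p (WithLp.toLp 2 (ζ, 0)) = 0 := by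
    rw [← norm_eq_zero, ← sq_eq_zero_iff]
    exact (neg_nonneg.1 (hnorm ▸ sq_nonneg _)).antisymm (sq_nonneg _)
  have hζ' : p (WithLp.toLp 2 (0, ζ)) = WithLp.toLp 2 (0, ζ) := by
    rw [hζ, norm_zero, zero_pow two_ne_zero, neg_zero, eq_comm, sq_eq_zero_iff, norm_eq_zero,
      sub_eq_zero] at hnorm
    exact hnorm.symm
  have hΩ : p (WithLp.toLp 2 (Ω, 0)) = WithLp.toLp 2 (Ω, 0) := by
    rw [hζ', toLp_eq_add Ω ζ] at hfix
    exact add_right_cancel hfix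
  have hid : (fun x : H => p (WithLp.toLp 2 (x, 0))) = fun x => WithLp.toLp 2 (x, 0) :=
    hcyc.funext (by fun_prop) (by fun_prop) fun a ha => by
      have hdiag : WithLp.toLp 2 (a Ω, 0) = diagonal a (WithLp.toLp 2 (Ω, 0)) := by
        simp [diagonal_apply]
      rw [hdiag, starProjection_orbitGraph_diagonal ha, hΩ]
  have := congrFun hid ζ
  simpa using congrArg WithLp.fst (this.symm.trans hζ)

end Density

section RealSubspaces

variable {E : Type*} [NormedAddCommGroup E] [InnerProductSpace ℂ E]

lemma map_complex_smul {f : E →L[ℝ] E} {w : ℂ} (hf : ∀ x, f (Complex.I • x) = w • f x) (c : ℂ)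
    (x : E) : f (c • x) = ((c.re : ℂ) + c.im * w) • f x := by
  conv_lhs => rw [← Complex.re_add_im c]
  rw [add_smul, mul_smul, Complex.coe_smul, Complex.coe_smul, map_add, map_smul, map_smul, hf,
    add_smul, mul_smul, Complex.coe_smul, Complex.coe_smul]

/-- Multiplication by `i`, as a real linear isometry. -/
def mulI : E ≃ₗᵢ[ℝ] E where
  toFun x := Complex.I • x
  invFun x := -(Complex.I • x)
  map_add' := smul_add _
  map_smul' r x := smul_comm _ _ _
  left_inv x := by simp [smul_smul]
  right_inv x := by simp [smul_smul]
  norm_map' x := by simp [norm_smul]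

lemma mulI_apply (x : E) : mulI x = Complex.I • x := rfl

lemma mulI_symm_apply (x : E) : mulI.symm x = -(Complex.I • x) := rfl

variable (K : Submodule ℝ E)

/-- The real subspace `iK`. -/
def rotate : Submodule ℝ E := K.map (mulI (E := E)).toLinearEquiv.toLinearMap

/-- The symplectic complement of a real subspace: the vectors `x` with `Im ⟪x, κ⟫ = 0` for all
`κ ∈ K`, encoded as the real orthogonal complement of `iK`. -/
def symplecticComplement : Submodule ℝ E := (rotate K)ᗮ

variable {K} in
lemma mem_symplecticComplement {x : E} :
    x ∈ symplecticComplement K ↔ ∀ κ ∈ K, (⟪x, κ⟫).im = 0 := by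
  have hI : ∀ κ, inner ℝ (Complex.I • κ) x = -(⟪x, κ⟫).im := fun κ => by
    rw [real_inner_comm]
    change (⟪x, Complex.I • κ⟫).re = _
    rw [inner_smul_right, Complex.I_mul_re]
  simp only [symplecticComplement, rotate, Submodule.mem_orthogonal, Submodule.mem_map,
    forall_exists_index, and_imp, forall_apply_eq_imp_iff₂, LinearEquiv.coe_coe,
    LinearIsometryEquiv.coe_toLinearEquiv, mulI_apply, hI, neg_eq_zero]

variable [K.HasOrthogonalProjection]

instance : (rotate K).HasOrthogonalProjection :=
  inferInstanceAs (K.map (mulI (E := E)).toLinearEquiv.toLinearMap).HasOrthogonalProjection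

instance : (symplecticComplement K).HasOrthogonalProjection :=
  inferInstanceAs (rotate K)ᗮ.HasOrthogonalProjection

lemma starProjection_rotate (x : E) :
    (rotate K).starProjection x = -(Complex.I • K.starProjection (Complex.I • x)) := by
  have := Submodule.starProjection_map_apply mulI K x
  rw [mulI_symm_apply, map_neg, map_neg, mulI_apply] at this
  exact this

lemma starProjection_rotate_I_smul (x : E) :
    (rotate K).starProjection (Complex.I • x) = Complex.I • K.starProjection x := by
  rw [starProjection_rotate, smul_smul, Complex.I_mul_I, neg_one_smul, map_neg, smul_neg, neg_neg]

lemma starProjection_I_smul (x : E) :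
    K.starProjection (Complex.I • x) = Complex.I • (rotate K).starProjection x := by
  rw [starProjection_rotate, smul_neg, smul_smul, Complex.I_mul_I, neg_one_smul, neg_neg]

/-- The sum of the real orthogonal projections onto `K` and `iK`; it is complex linear. -/
def projSum : E →L[ℂ] E where
  toFun x := K.starProjection x + (rotate K).starProjection x
  map_add' x y := by rw [map_add, map_add, add_add_add_comm]
  map_smul' c x := by
    have hI : ∀ x, (K.starProjection + (rotate K).starProjection) (Complex.I • x) =
        Complex.I • (K.starProjection + (rotate K).starProjection) x := fun x => by
      rw [add_apply, starProjection_I_smul, starProjection_rotate_I_smul, add_apply, smul_add,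
        add_comm]
    have := map_complex_smul hI c x
    rwa [Complex.re_add_im] at this
  cont := (K.starProjection + (rotate K).starProjection).continuous

/-- The difference of the real orthogonal projections onto `K` and `iK`; it is antilinear. -/
def projDiff : E →SL[starRingEnd ℂ] E where
  toFun x := K.starProjection x - (rotate K).starProjection x
  map_add' x y := by rw [map_add, map_add, add_sub_add_comm]
  map_smul' c x := by
    have hI : ∀ x, (K.starProjection - (rotate K).starProjection) (Complex.I • x) =
        -Complex.I • (K.starProjection - (rotate K).starProjection) x := fun x => by
      rw [sub_apply, starProjection_I_smul, starProjection_rotate_I_smul, sub_apply, neg_smul,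
        smul_sub, neg_sub]
    have hconj : (c.re : ℂ) + c.im * -Complex.I = starRingEnd ℂ c := by
      apply Complex.ext <;> simp
    have := map_complex_smul hI c x
    rwa [hconj] at this
  cont := (K.starProjection - (rotate K).starProjection).continuous

lemma projSum_apply (x : E) :
    projSum K x = K.starProjection x + (rotate K).starProjection x := rfl

lemma projDiff_apply (x : E) :
    projDiff K x = K.starProjection x - (rotate K).starProjection x := rfl

lemma two_sub_projSum_apply (x : E) :
    (2 - projSum K) x = (x - K.starProjection x) + (x - (rotate K).starProjection x) := by
  rw [sub_apply, ContinuousLinearMap.ofNat_apply, projSum_apply, ofNat_smul_eq_nsmul, two_nsmul]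
  abel

lemma starProjection_symplecticComplement (x : E) :
    (symplecticComplement K).starProjection x = x - (rotate K).starProjection x :=
  Submodule.starProjection_orthogonal_val x

lemma starProjection_rotate_symplecticComplement (x : E) :
    (rotate (symplecticComplement K)).starProjection x = x - K.starProjection x := by
  rw [starProjection_rotate, starProjection_symplecticComplement, starProjection_rotate_I_smul,
    ← smul_sub, smul_smul, Complex.I_mul_I, neg_one_smul, neg_neg]

lemma projSum_symplecticComplement : projSum (symplecticComplement K) = 2 - projSum K := by
  ext x
  rw [projSum_apply, starProjection_symplecticComplement,
    starProjection_rotate_symplecticComplement, two_sub_projSum_apply, add_comm]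

lemma projDiff_symplecticComplement : projDiff (symplecticComplement K) = projDiff K := by
  ext x
  rw [projDiff_apply, starProjection_symplecticComplement,
    starProjection_rotate_symplecticComplement, projDiff_apply, sub_sub_sub_cancel_left]

lemma projDiff_projDiff (x : E) :
    projDiff K (projDiff K x) = projSum K ((2 - projSum K) x) := by
  simp only [projDiff_apply, projSum_apply, two_sub_projSum_apply, map_add, map_sub,
    K.starProjection_eq_self_iff.2 (K.starProjection_apply_mem _),
    (rotate K).starProjection_eq_self_iff.2 ((rotate K).starProjection_apply_mem _)]
  abel

lemma projDiff_projSum (x : E) :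
    projDiff K (projSum K x) = (2 - projSum K) (projDiff K x) := by
  simp only [projDiff_apply, projSum_apply, two_sub_projSum_apply, map_add, map_sub,
    K.starProjection_eq_self_iff.2 (K.starProjection_apply_mem _),
    (rotate K).starProjection_eq_self_iff.2 ((rotate K).starProjection_apply_mem _)]
  abel

lemma re_inner_projSum_left (x y : E) : (⟪projSum K x, y⟫).re = (⟪x, projSum K y⟫).re := by
  rw [projSum_apply, projSum_apply, inner_add_left, inner_add_right, Complex.add_re, Complex.add_re]
  exact congrArg₂ (· + ·) (K.inner_starProjection_left_eq_right x y)
    ((rotate K).inner_starProjection_left_eq_right x y)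

lemma re_inner_projDiff_left (x y : E) : (⟪projDiff K x, y⟫).re = (⟪projDiff K y, x⟫).re := by
  rw [projDiff_apply, projDiff_apply, inner_sub_left, inner_sub_left, Complex.sub_re,
    Complex.sub_re]
  exact congrArg₂ (· - ·)
    ((K.inner_starProjection_left_eq_right x y).trans (real_inner_comm _ _))
    (((rotate K).inner_starProjection_left_eq_right x y).trans (real_inner_comm _ _))

lemma inner_projSum_left (x y : E) : ⟪projSum K x, y⟫ = ⟪x, projSum K y⟫ := by
  have hI := re_inner_projSum_left K x (Complex.I • y)
  rw [map_smul, inner_smul_right, inner_smul_right, Complex.I_mul_re, Complex.I_mul_re] at hI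
  exact Complex.ext (re_inner_projSum_left K x y) (neg_inj.1 hI)

lemma inner_projDiff_left (x y : E) : ⟪projDiff K x, y⟫ = ⟪projDiff K y, x⟫ := by
  have hI := re_inner_projDiff_left K x (Complex.I • y)
  rw [map_smulₛₗ, inner_smul_right, inner_smul_left, Complex.conj_conj, Complex.I_mul_re,
    Complex.I_mul_re] at hI
  exact Complex.ext (re_inner_projDiff_left K x y) (neg_inj.1 hI)

lemma re_inner_projSum_self (x : E) :
    (⟪projSum K x, x⟫).re = ‖K.starProjection x‖ ^ 2 + ‖(rotate K).starProjection x‖ ^ 2 := by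
  rw [projSum_apply, inner_add_left, Complex.add_re]
  exact congrArg₂ (· + ·) (K.re_inner_starProjection_eq_normSq x)
    ((rotate K).re_inner_starProjection_eq_normSq x)

variable {K}

lemma projDiff_of_mem {κ : E} (hκ : κ ∈ K) : projDiff K κ = (2 - projSum K) κ := by
  rw [projDiff_apply, two_sub_projSum_apply, Submodule.starProjection_eq_self_iff.2 hκ, sub_self,
    zero_add]

lemma projSum_eq_projDiff {α β : E} (h : ∀ κ ∈ K, ⟪α, κ⟫ = ⟪κ, β⟫) :
    projSum K α = projDiff K β := by
  refine ext_inner_right ℝ fun ξ => ?_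
  have hP : ⟪α, K.starProjection ξ⟫ = ⟪K.starProjection ξ, β⟫ :=
    h _ (Submodule.starProjection_apply_mem _ _)
  have hQ : ⟪α, (rotate K).starProjection ξ⟫ = -⟪(rotate K).starProjection ξ, β⟫ := by
    rw [starProjection_rotate, inner_neg_right, inner_neg_left, inner_smul_right, inner_smul_left,
      h _ (Submodule.starProjection_apply_mem _ _), Complex.conj_I, neg_mul, neg_neg]
  change (⟪projSum K α, ξ⟫).re = (⟪projDiff K β, ξ⟫).re
  rw [inner_projSum_left, inner_projDiff_left, projSum_apply, projDiff_apply, inner_add_right,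
    inner_sub_left, hP, hQ, sub_eq_add_neg]

lemma inner_eq_zero_of_projSum_eq_zero {x κ : E} (hx : projSum K x = 0) (hκ : κ ∈ K) :
    ⟪x, κ⟫ = 0 := by
  have hsum := re_inner_projSum_self K x
  rw [hx, inner_zero_left, Complex.zero_re, eq_comm,
    add_eq_zero_iff_of_nonneg (sq_nonneg _) (sq_nonneg _), sq_eq_zero_iff, sq_eq_zero_iff,
    norm_eq_zero, norm_eq_zero, Submodule.starProjection_apply_eq_zero_iff,
    Submodule.starProjection_apply_eq_zero_iff] at hsum
  rw [inner_eq_zero_symm]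
  exact Complex.ext (hsum.1 κ hκ) (by
    rw [← inner_conj_symm, Complex.conj_im, mem_symplecticComplement.1 hsum.2 κ hκ, neg_zero]; rfl)

variable (K)

lemma projSum_nonneg [CompleteSpace E] : 0 ≤ projSum K := by
  rw [ContinuousLinearMap.nonneg_iff_isPositive, ContinuousLinearMap.isPositive_def]
  refine ⟨inner_projSum_left K, fun x => ?_⟩
  change 0 ≤ (⟪projSum K x, x⟫).re
  rw [re_inner_projSum_self]
  positivity

lemma two_sub_projSum_nonneg [CompleteSpace E] : 0 ≤ 2 - projSum K := by
  rw [← projSum_symplecticComplement]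
  exact projSum_nonneg _

end RealSubspaces

section ModularProjections

variable {A : VonNeumannAlgebra H} {Ω : H}

lemma induction_selfAdjoint {p : (H →L[ℂ] H) → Prop} (hsa : ∀ a ∈ A, IsSelfAdjoint a → p a)
    (hadd : ∀ a b, p a → p b → p (a + b)) (hI : ∀ a, p a → p (Complex.I • a))
    {a : H →L[ℂ] H} (ha : a ∈ A) : p a := by
  rw [← realPart_add_I_smul_imaginaryPart a]
  refine hadd _ _ (hsa _ ?_ (realPart a).2) (hI _ (hsa _ ?_ (imaginaryPart a).2))
  · rw [realPart_apply_coe, ← Complex.coe_smul]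
    exact smul_mem _ (add_mem ha (star_mem ha))
  · rw [imaginaryPart_apply_coe, ← Complex.coe_smul]
    exact smul_mem _ (smul_mem _ (sub_mem ha (star_mem ha)))

variable (A Ω)

/-- The real space of the vectors `a Ω` with `a ∈ A` self-adjoint. -/
def selfAdjointOrbit : Submodule ℝ H :=
  (realSubmodule A ⊓ selfAdjoint.submodule ℝ (H →L[ℂ] H)).map
    ((ContinuousLinearMap.apply ℂ H Ω).restrictScalars ℝ).toLinearMap

/-- The closed real subspace `{a Ω | a ∈ A self-adjoint}⁻` of Rieffel and van Daele. -/
def realSubspace : Submodule ℝ H := (selfAdjointOrbit A Ω).topologicalClosure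

instance : (realSubspace A Ω).HasOrthogonalProjection :=
  inferInstanceAs (selfAdjointOrbit A Ω).topologicalClosure.HasOrthogonalProjection

variable {A}

lemma apply_mem_realSubspace {a : H →L[ℂ] H} (ha : a ∈ A) (hsa : IsSelfAdjoint a) :
    a Ω ∈ realSubspace A Ω :=
  Submodule.le_topologicalClosure _ ⟨a, ⟨ha, hsa⟩, rfl⟩

lemma realSubspace_le {L : Submodule ℝ H} (hL : IsClosed (L : Set H))
    (h : ∀ a ∈ A, IsSelfAdjoint a → a Ω ∈ L) : realSubspace A Ω ≤ L := by
  refine Submodule.topologicalClosure_minimal _ ?_ hL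
  rintro _ ⟨a, ⟨ha, hsa⟩, rfl⟩
  exact h a ha hsa

lemma im_inner_apply_apply {a b : H →L[ℂ] H} (ha : a ∈ A) (hb : b ∈ A.commutant)
    (hsa : IsSelfAdjoint a) (hsb : IsSelfAdjoint b) : (⟪a Ω, b Ω⟫).im = 0 := by
  rw [← Complex.conj_eq_iff_im, inner_conj_symm]
  calc ⟪b Ω, a Ω⟫ = ⟪star b Ω, a Ω⟫ := by rw [hsb.star_eq]
    _ = ⟪Ω, a (b Ω)⟫ := by rw [star_apply_inner, apply_comm_of_mem_commutant ha hb]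
    _ = ⟪star a Ω, b Ω⟫ := (star_apply_inner _ _ _).symm
    _ = ⟪a Ω, b Ω⟫ := by rw [hsa.star_eq]

lemma realSubspace_commutant_le :
    realSubspace A.commutant Ω ≤ symplecticComplement (realSubspace A Ω) := by
  refine realSubspace_le Ω (Submodule.isClosed_orthogonal _) fun b hb hsb => ?_
  rw [mem_symplecticComplement]
  have hclosed : IsClosed {κ | (⟪b Ω, κ⟫).im = 0} := isClosed_eq (by fun_prop) continuous_const
  refine fun κ hκ => hclosed.closure_subset_iff.2 ?_ hκ
  rintro _ ⟨a, ⟨ha, hsa⟩, rfl⟩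
  exact im_inner_apply_apply Ω hb (A.commutant_commutant.symm ▸ ha) hsb hsa

lemma inner_skew_of_mem_orthogonal {ζ : H} (hζ : ζ ∈ (realSubspace A Ω)ᗮ) {a : H →L[ℂ] H}
    (ha : a ∈ A) : ⟪a Ω, ζ⟫ = -⟪ζ, star a Ω⟫ := by
  refine induction_selfAdjoint (p := fun a => ⟪a Ω, ζ⟫ = -⟪ζ, star a Ω⟫) (fun a ha hsa => ?_)
    (fun a b ha hb => ?_) (fun a ha => ?_) ha
  · have hre : (⟪a Ω, ζ⟫).re = 0 := hζ _ (apply_mem_realSubspace Ω ha hsa)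
    rw [hsa.star_eq, ← inner_conj_symm ζ]
    exact Complex.ext (by rw [Complex.neg_re, Complex.conj_re, hre, neg_zero])
      (by rw [Complex.neg_im, Complex.conj_im, neg_neg])
  · rw [star_add, add_apply, add_apply, inner_add_left, inner_add_right, ha, hb, neg_add]
  · rw [star_smul, smul_apply, smul_apply, inner_smul_left, inner_smul_right, ha, mul_neg]
    rfl

lemma inner_symm_of_mem_symplecticComplement {ζ : H}
    (hζ : ζ ∈ symplecticComplement (realSubspace A Ω)) {a : H →L[ℂ] H} (ha : a ∈ A) :
    ⟪a Ω, ζ⟫ = ⟪ζ, star a Ω⟫ := by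
  refine induction_selfAdjoint (p := fun a => ⟪a Ω, ζ⟫ = ⟪ζ, star a Ω⟫) (fun a ha hsa => ?_)
    (fun a b ha hb => ?_) (fun a ha => ?_) ha
  · have him := mem_symplecticComplement.1 hζ _ (apply_mem_realSubspace Ω ha hsa)
    rw [hsa.star_eq, ← inner_conj_symm (a Ω), Complex.conj_eq_iff_im.2 him]
  · rw [star_add, add_apply, add_apply, inner_add_left, inner_add_right, ha, hb]
  · rw [star_smul, smul_apply, smul_apply, inner_smul_left, inner_smul_right, ha]
    rfl

variable {Ω}

theorem realSubspace_commutant (hsep : IsCyclicVector (A.commutant : Set (H →L[ℂ] H)) Ω) :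
    realSubspace A.commutant Ω = symplecticComplement (realSubspace A Ω) := by
  have hbot : (realSubspace A.commutant Ω)ᗮ ⊓ symplecticComplement (realSubspace A Ω) = ⊥ := by
    refine (Submodule.eq_bot_iff _).2 fun ζ hζ => ?_
    refine eq_zero_of_inner_skew_of_inner_symm hsep
      (fun a ha => inner_skew_of_mem_orthogonal Ω hζ.1 ha) fun a ha => ?_
    rw [VonNeumannAlgebra.commutant_commutant] at ha
    exact inner_symm_of_mem_symplecticComplement Ω hζ.2 ha
  rw [← Submodule.sup_orthogonal_inf_of_hasOrthogonalProjection (realSubspace_commutant_le Ω),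
    hbot, sup_bot_eq]

lemma projDiff_star_apply {a : H →L[ℂ] H} (ha : a ∈ A) :
    projDiff (realSubspace A Ω) (star a Ω) = (2 - projSum (realSubspace A Ω)) (a Ω) := by
  refine induction_selfAdjoint (p := fun a => projDiff (realSubspace A Ω) (star a Ω) =
    (2 - projSum (realSubspace A Ω)) (a Ω)) (fun a ha hsa => ?_) (fun a b ha hb => ?_)
    (fun a ha => ?_) ha
  · rw [hsa.star_eq, projDiff_of_mem (apply_mem_realSubspace Ω ha hsa)]
  · rw [star_add, add_apply, add_apply, map_add, map_add, ha, hb]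
  · rw [star_smul, smul_apply, smul_apply, map_smulₛₗ, map_smul, ha]
    simp

lemma projSum_eq_projDiff_of_inner_apply {α β : H}
    (h : ∀ k ∈ A, ⟪α, k Ω⟫ = ⟪star k Ω, β⟫) :
    projSum (realSubspace A Ω) α = projDiff (realSubspace A Ω) β := by
  have hclosed : IsClosed {κ | ⟪α, κ⟫ = ⟪κ, β⟫} := isClosed_eq (by fun_prop) (by fun_prop)
  refine projSum_eq_projDiff fun κ hκ => hclosed.closure_subset_iff.2 ?_ hκ
  rintro _ ⟨a, ⟨ha, hsa⟩, rfl⟩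
  have hinner := h a ha
  rwa [IsSelfAdjoint.star_eq hsa] at hinner

lemma eq_zero_of_projSum_eq_zero (hcyc : IsCyclicVector (A : Set (H →L[ℂ] H)) Ω) {x : H}
    (hx : projSum (realSubspace A Ω) x = 0) : x = 0 := by
  refine hcyc.ext_inner fun a ha => ?_
  rw [inner_zero_left]
  refine induction_selfAdjoint (p := fun a => ⟪x, a Ω⟫ = 0) (fun a ha hsa => ?_)
    (fun a b ha hb => ?_) (fun a ha => ?_) ha
  · exact inner_eq_zero_of_projSum_eq_zero hx (apply_mem_realSubspace Ω ha hsa)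
  · rw [add_apply, inner_add_right, ha, hb, add_zero]
  · rw [smul_apply, inner_smul_right, ha, mul_zero]

end ModularProjections

section PolarDecomposition

variable {V : H →SL[starRingEnd ℂ] H}

/-- The modulus `√(V²)` of a symmetric antilinear operator `V`. -/
@[irreducible] def modulus (V : H →SL[starRingEnd ℂ] H) : H →L[ℂ] H := CFC.sqrt (V.comp V)

lemma modulus_nonneg : 0 ≤ modulus V := by
  rw [modulus]
  exact CFC.sqrt_nonneg _

lemma isSelfAdjoint_modulus : IsSelfAdjoint (modulus V) := .of_nonneg modulus_nonneg

omit [CompleteSpace H] in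
lemma comp_comp_nonneg (hV : ∀ x y, ⟪V x, y⟫ = ⟪V y, x⟫) {a : H →L[ℂ] H} (ha : 0 ≤ a) :
    0 ≤ (V.comp (a.comp V) : H →L[ℂ] H) := by
  rw [ContinuousLinearMap.nonneg_iff_isPositive] at ha ⊢
  refine ContinuousLinearMap.isPositive_def.2 ⟨fun x y => ?_, fun x => ?_⟩
  · change ⟪V (a (V x)), y⟫ = ⟪x, V (a (V y))⟫
    rw [hV, ← inner_conj_symm x, hV (a (V y)), inner_conj_symm]
    exact (ha.isSymmetric _ _).symm
  · change 0 ≤ (⟪V (a (V x)), x⟫).re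
    rw [hV]
    exact ha.re_inner_nonneg_right _

lemma modulus_mul_modulus (hV : ∀ x y, ⟪V x, y⟫ = ⟪V y, x⟫) :
    modulus V * modulus V = V.comp V := by
  rw [modulus]
  exact CFC.sqrt_mul_sqrt_self _ (comp_comp_nonneg hV zero_le_one)

lemma modulus_modulus_apply (hV : ∀ x y, ⟪V x, y⟫ = ⟪V y, x⟫) (x : H) :
    modulus V (modulus V x) = V (V x) :=
  DFunLike.congr_fun (modulus_mul_modulus hV) x

lemma inner_modulus_left (x y : H) : ⟪modulus V x, y⟫ = ⟪x, modulus V y⟫ := by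
  rw [← star_apply_inner, isSelfAdjoint_modulus.star_eq]

lemma denseRange_of_symm (hV : ∀ x y, ⟪V x, y⟫ = ⟪V y, x⟫) (hinj : ∀ x, V x = 0 → x = 0) :
    DenseRange V := by
  have hbot : (LinearMap.range V.toLinearMap)ᗮ = ⊥ := by
    refine (Submodule.eq_bot_iff _).2 fun y hy => hinj y (ext_inner_right ℂ fun x => ?_)
    rw [inner_zero_left, ← hV]
    exact hy (V x) ⟨x, rfl⟩
  have hdense : Dense (LinearMap.range V.toLinearMap : Set H) :=
    Submodule.dense_iff_topologicalClosure_eq_top.2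
      (Submodule.topologicalClosure_eq_top_iff.2 hbot)
  exact hdense

-- Both sides are positive square roots of `V⁶`.
lemma comp_modulus_comp (hV : ∀ x y, ⟪V x, y⟫ = ⟪V y, x⟫) :
    (V.comp ((modulus V).comp V) : H →L[ℂ] H) = modulus V * modulus V * modulus V := by
  have hT := modulus_modulus_apply hV
  refine (CFC.mul_self_eq_mul_self_iff _ _ (comp_comp_nonneg hV modulus_nonneg)
    (isSelfAdjoint_modulus.conjugate_nonneg modulus_nonneg)).1 ?_
  ext x
  calc V (modulus V (V (V (modulus V (V x)))))
      = V (modulus V (modulus V (modulus V (modulus V (V x))))) := by rw [← hT (modulus V (V x))]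
    _ = modulus V (modulus V (modulus V (modulus V (modulus V (modulus V x))))) := by simp only [hT]

lemma modulus_apply_comm (hV : ∀ x y, ⟪V x, y⟫ = ⟪V y, x⟫) (hinj : ∀ x, V x = 0 → x = 0)
    (x : H) : modulus V (V x) = V (modulus V x) := by
  have hT := modulus_modulus_apply hV
  refine (denseRange_of_symm hV hinj).induction_on
    (p := fun x => modulus V (V x) = V (modulus V x)) x
    (isClosed_eq (by fun_prop) (by fun_prop)) fun x => ?_
  calc modulus V (V (V x)) = modulus V (modulus V (modulus V x)) := by rw [hT x]
    _ = V (modulus V (V x)) := (DFunLike.congr_fun (comp_modulus_comp hV) x).symm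

/-- The antiunitary phase `J` in the polar decomposition `V = J |V|` of an injective symmetric
antilinear operator `V`. -/
@[irreducible] def phase (V : H →SL[starRingEnd ℂ] H) : H →SL[starRingEnd ℂ] H :=
  V.toLinearMap.extendOfNorm (modulus V).toLinearMap

section

variable (hV : ∀ x y, ⟪V x, y⟫ = ⟪V y, x⟫) (hinj : ∀ x, V x = 0 → x = 0)
include hV hinj

lemma denseRange_modulus : DenseRange (modulus V) := by
  have hVV : DenseRange (V ∘ V) :=
    (denseRange_of_symm hV hinj).comp (denseRange_of_symm hV hinj) V.continuous
  refine hVV.mono ?_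
  rintro _ ⟨x, rfl⟩
  exact ⟨modulus V x, modulus_modulus_apply hV x⟩

lemma phase_modulus (x : H) : phase V (modulus V x) = V x := by
  rw [phase]
  refine LinearMap.extendOfNorm_eq (denseRange_modulus hV hinj) ⟨1, fun x => ?_⟩ x
  have hinner : ⟪V x, V x⟫ = ⟪modulus V x, modulus V x⟫ := by
    rw [hV, ← modulus_modulus_apply hV, inner_modulus_left]
  rw [inner_self_eq_norm_sq_to_K, inner_self_eq_norm_sq_to_K] at hinner
  rw [one_mul]
  have hsq : ‖V x‖ ^ 2 = ‖modulus V x‖ ^ 2 := by exact_mod_cast hinner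
  exact ((sq_eq_sq₀ (norm_nonneg _) (norm_nonneg _)).1 hsq).le

lemma modulus_phase (x : H) : modulus V (phase V x) = V x := by
  refine (denseRange_modulus hV hinj).induction_on (p := fun x => modulus V (phase V x) = V x) x
    (isClosed_eq ((modulus V).continuous.comp (phase V).continuous) V.continuous) fun x => ?_
  rw [phase_modulus hV hinj, modulus_apply_comm hV hinj]

lemma phase_apply (x : H) : phase V (V x) = modulus V x := by
  refine (denseRange_modulus hV hinj).induction_on (p := fun x => phase V (V x) = modulus V x) x
    (isClosed_eq ((phase V).continuous.comp V.continuous) (modulus V).continuous) fun x => ?_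
  rw [← modulus_apply_comm hV hinj, phase_modulus hV hinj, modulus_modulus_apply hV]

lemma phase_phase (x : H) : phase V (phase V x) = x := by
  refine (denseRange_modulus hV hinj).induction_on (p := fun x => phase V (phase V x) = x) x
    (isClosed_eq ((phase V).continuous.comp (phase V).continuous) continuous_id) fun x => ?_
  rw [phase_modulus hV hinj, phase_apply hV hinj]

lemma inner_phase_phase (x y : H) : ⟪phase V x, phase V y⟫ = ⟪y, x⟫ := by
  refine (denseRange_modulus hV hinj).induction_on₂
    (p := fun x y => ⟪phase V x, phase V y⟫ = ⟪y, x⟫)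
    (isClosed_eq (((phase V).continuous.comp continuous_fst).inner
      ((phase V).continuous.comp continuous_snd)) (by fun_prop)) (fun x y => ?_) x y
  rw [phase_modulus hV hinj, phase_modulus hV hinj, hV, ← modulus_modulus_apply hV,
    inner_modulus_left]

end

end PolarDecomposition

/-- The operators attached to a cyclic and separating vector `Ω` of `A`: in terms of the closed real
space `K` generated by the self-adjoint part of `A` at `Ω`, the operators `R` and `S` are the
complex linear sums of the real projections onto `K` and `iK`, respectively onto their real
orthogonal complements, and `V = J T` is the polar decomposition of the difference of the
projections onto `K` and `iK`. The modular operator is `S R⁻¹`. -/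
structure IsModularData (A : VonNeumannAlgebra H) (Ω : H) (R S T : H →L[ℂ] H)
    (J : H →SL[starRingEnd ℂ] H) : Prop where
  cyclic : IsCyclicVector (A : Set (H →L[ℂ] H)) Ω
  separating : IsCyclicVector (A.commutant : Set (H →L[ℂ] H)) Ω
  nonneg_left : 0 ≤ R
  nonneg_right : 0 ≤ S
  add_eq_two : R + S = 2
  injective_left : ∀ x, R x = 0 → x = 0
  injective_right : ∀ x, S x = 0 → x = 0
  modulus_nonneg : 0 ≤ T
  modulus_mul_modulus : T * T = R * S
  inner_conj_conj : ∀ x y, ⟪J x, J y⟫ = ⟪y, x⟫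
  conj_conj : ∀ x, J (J x) = x
  conj_modulus : ∀ x, J (T x) = T (J x)
  conj_left : ∀ x, J (R x) = S (J x)
  conj_right : ∀ x, J (S x) = R (J x)
  conj_modulus_star : ∀ a ∈ A, J (T (star a Ω)) = S (a Ω)
  conj_modulus_star' : ∀ a ∈ A.commutant, J (T (star a Ω)) = R (a Ω)
  left_eq_of_inner : ∀ α β, (∀ k ∈ A, ⟪α, k Ω⟫ = ⟪star k Ω, β⟫) → R α = J (T β)
  right_eq_of_inner : ∀ α β, (∀ k ∈ A.commutant, ⟪α, k Ω⟫ = ⟪star k Ω, β⟫) → S α = J (T β)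

namespace IsModularData

variable {A : VonNeumannAlgebra H} {Ω : H} {R S T : H →L[ℂ] H} {J : H →SL[starRingEnd ℂ] H}

lemma right_eq (m : IsModularData A Ω R S T J) : S = 2 - R := eq_sub_of_add_eq' m.add_eq_two

theorem symm (m : IsModularData A Ω R S T J) : IsModularData A.commutant Ω S R T J where
  cyclic := m.separating
  separating := A.commutant_commutant.symm ▸ m.cyclic
  nonneg_left := m.nonneg_right
  nonneg_right := m.nonneg_left
  add_eq_two := add_comm S R ▸ m.add_eq_two
  injective_left := m.injective_right
  injective_right := m.injective_left
  modulus_nonneg := m.modulus_nonneg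
  modulus_mul_modulus := by rw [m.modulus_mul_modulus, m.right_eq]; noncomm_ring
  inner_conj_conj := m.inner_conj_conj
  conj_conj := m.conj_conj
  conj_modulus := m.conj_modulus
  conj_left := m.conj_right
  conj_right := m.conj_left
  conj_modulus_star := m.conj_modulus_star'
  conj_modulus_star' := A.commutant_commutant.symm ▸ m.conj_modulus_star
  left_eq_of_inner := m.right_eq_of_inner
  right_eq_of_inner := A.commutant_commutant.symm ▸ m.left_eq_of_inner

end IsModularData

section Existence

variable {A : VonNeumannAlgebra H} {Ω : H}

lemma eq_zero_of_projDiff_eq_zero (hcyc : IsCyclicVector (A : Set (H →L[ℂ] H)) Ω)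
    (hsep : IsCyclicVector (A.commutant : Set (H →L[ℂ] H)) Ω) {x : H}
    (hx : projDiff (realSubspace A Ω) x = 0) : x = 0 := by
  have hR := projDiff_projDiff (realSubspace A Ω) x
  rw [hx, map_zero] at hR
  refine eq_zero_of_projSum_eq_zero hsep ?_
  have := eq_zero_of_projSum_eq_zero hcyc hR.symm
  simpa only [realSubspace_commutant hsep, projSum_symplecticComplement] using this

lemma phase_apply_comm (K : Submodule ℝ H) [K.HasOrthogonalProjection]
    (hinj : ∀ x, projDiff K x = 0 → x = 0) (x : H) :
    phase (projDiff K) (projSum K x) = (2 - projSum K) (phase (projDiff K) x) := by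
  have hV := inner_projDiff_left K
  have hcomm : Commute (modulus (projDiff K)) (projSum K) := by
    rw [modulus]
    refine Commute.cfcₙ_nnreal ?_ _
    rw [show (projDiff K).comp (projDiff K) = projSum K * (2 - projSum K) from
      ContinuousLinearMap.ext (projDiff_projDiff K)]
    exact (Commute.refl _).mul_left ((Commute.ofNat_left 2 _).sub_left (Commute.refl _))
  refine (denseRange_modulus hV hinj).induction_on
    (p := fun x => phase (projDiff K) (projSum K x) = (2 - projSum K) (phase (projDiff K) x)) x
    (isClosed_eq (by fun_prop) (by fun_prop)) fun x => ?_
  have hTR : projSum K (modulus (projDiff K) x) = modulus (projDiff K) (projSum K x) :=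
    (DFunLike.congr_fun hcomm.eq x).symm
  rw [hTR, phase_modulus hV hinj, phase_modulus hV hinj, projDiff_projSum]

theorem exists_isModularData (hcyc : IsCyclicVector (A : Set (H →L[ℂ] H)) Ω)
    (hsep : IsCyclicVector (A.commutant : Set (H →L[ℂ] H)) Ω) :
    ∃ R S T J, IsModularData A Ω R S T J := by
  set K := realSubspace A Ω with hK
  have hV := inner_projDiff_left K
  have hinj : ∀ x, projDiff K x = 0 → x = 0 := fun x => eq_zero_of_projDiff_eq_zero hcyc hsep
  have hR' : projSum (realSubspace A.commutant Ω) = 2 - projSum K := by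
    simp only [realSubspace_commutant hsep, projSum_symplecticComplement, hK]
  have hV' : projDiff (realSubspace A.commutant Ω) = projDiff K := by
    simp only [realSubspace_commutant hsep, projDiff_symplecticComplement, hK]
  have hJR := phase_apply_comm K hinj
  have hJJ := phase_phase hV hinj
  refine ⟨projSum K, 2 - projSum K, modulus (projDiff K), phase (projDiff K), ?_⟩
  exact
  { cyclic := hcyc
    separating := hsep
    nonneg_left := projSum_nonneg K
    nonneg_right := two_sub_projSum_nonneg K
    add_eq_two := add_sub_cancel _ _
    injective_left := fun x => eq_zero_of_projSum_eq_zero hcyc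
    injective_right := fun x hx => eq_zero_of_projSum_eq_zero hsep (hR' ▸ hx)
    modulus_nonneg := modulus_nonneg
    modulus_mul_modulus := by
      ext x
      exact (modulus_modulus_apply hV x).trans (projDiff_projDiff K x)
    inner_conj_conj := inner_phase_phase hV hinj
    conj_conj := hJJ
    conj_modulus := fun x => by rw [phase_modulus hV hinj, modulus_phase hV hinj]
    conj_left := hJR
    conj_right := fun x => by rw [← hJJ (projSum K (phase (projDiff K) x)), hJR, hJJ]
    conj_modulus_star := fun a ha => by rw [phase_modulus hV hinj, projDiff_star_apply ha]
    conj_modulus_star' := fun a ha => by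
      rw [phase_modulus hV hinj, ← hV', projDiff_star_apply ha, hR', sub_sub_cancel]
    left_eq_of_inner := fun α β h => by
      rw [phase_modulus hV hinj, projSum_eq_projDiff_of_inner_apply h]
    right_eq_of_inner := fun α β h => by
      rw [phase_modulus hV hinj, ← hV', ← hR', projSum_eq_projDiff_of_inner_apply h] }

end Existence

section HeatKernel

open Real

/-- The function `r e^{-xδ}` of the spectral parameter `r` of `R`, where `δ = (2 - r) / r` is the
corresponding spectral parameter of the modular operator. The factor `r` makes it continuous at
`r = 0`, where `δ` takes a junk value. -/
def modularHeat (x r : ℝ) : ℝ := r * exp (-(x * ((2 - r) / r)))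

variable {x y r : ℝ}

lemma modularHeat_nonneg (hr : r ∈ Set.Icc 0 2) : 0 ≤ modularHeat x r :=
  mul_nonneg hr.1 (exp_nonneg _)

lemma modularHeat_le (hx : 0 ≤ x) (hr : r ∈ Set.Icc 0 2) : modularHeat x r ≤ r :=
  mul_le_of_le_one_right hr.1 <| exp_le_one_iff.2 <| neg_nonpos.2 <|
    mul_nonneg hx (div_nonneg (sub_nonneg.2 hr.2) hr.1)

lemma mul_modularHeat_le (hr : r ∈ Set.Icc 0 2) : x * ((2 - r) * modularHeat x r) ≤ r ^ 2 := by
  obtain rfl | hr0 := hr.1.eq_or_lt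
  · simp [modularHeat]
  set t := x * ((2 - r) / r) with ht
  calc x * ((2 - r) * modularHeat x r) = r ^ 2 * (t * exp (-t)) := by
        rw [modularHeat, ← ht, ht]; field_simp
    _ ≤ r ^ 2 * 1 := by
        gcongr
        rw [exp_neg, mul_inv_le_iff₀ (exp_pos t), one_mul]
        linarith [add_one_le_exp t]
    _ = r ^ 2 := mul_one _

lemma continuousOn_modularHeat :
    ContinuousOn (fun z : ℝ × ℝ => modularHeat z.1 z.2) (Set.Ici 0 ×ˢ Set.Icc 0 2) := by
  rintro ⟨x, r⟩ ⟨hx, hr⟩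
  obtain rfl | hr0 := hr.1.eq_or_lt
  · have h0 : Tendsto (fun z : ℝ × ℝ => z.2) (𝓝[Set.Ici 0 ×ˢ Set.Icc 0 2] (x, 0)) (𝓝 0) :=
      continuousWithinAt_snd
    rw [ContinuousWithinAt, show modularHeat (x, (0 : ℝ)).1 (x, (0 : ℝ)).2 = 0 from zero_mul _]
    refine squeeze_zero' ?_ ?_ h0 <;> filter_upwards [self_mem_nhdsWithin] with z hz
    exacts [modularHeat_nonneg hz.2, modularHeat_le hz.1 hz.2]
  · refine ContinuousAt.continuousWithinAt ?_
    unfold modularHeat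
    have : (x, r).2 ≠ 0 := hr0.ne'
    fun_prop (disch := assumption)

lemma abs_exp_neg_sub_le {a b : ℝ} (ha : 0 ≤ a) (hb : 0 ≤ b) :
    |exp (-b) - exp (-a) + (b - a) * exp (-a)| ≤ (b - a) ^ 2 := by
  have tangent (s t : ℝ) : exp (-s) * (1 + (s - t)) ≤ exp (-t) := by
    calc exp (-s) * (1 + (s - t)) ≤ exp (-s) * exp (s - t) := by
          gcongr
          linarith [add_one_le_exp (s - t)]
      _ = exp (-t) := by rw [← exp_add]; ring_nf
  have hea : exp (-a) ≤ 1 := exp_le_one_iff.2 (neg_nonpos.2 ha)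
  have heb : exp (-b) ≤ 1 := exp_le_one_iff.2 (neg_nonpos.2 hb)
  have hab := tangent a b
  have hba := tangent b a
  rw [abs_of_nonneg (by linarith)]
  rcases le_total a b with h | h
  · nlinarith [mul_le_mul_of_nonneg_left hab (sub_nonneg.2 h),
      mul_le_mul_of_nonneg_left hea (sq_nonneg (b - a))]
  · nlinarith [mul_le_mul_of_nonneg_left hba (sub_nonneg.2 h),
      mul_le_mul_of_nonneg_left heb (sq_nonneg (b - a))]

lemma abs_modularHeat_sub_le (hx : 0 ≤ x) (hy : 0 ≤ y) (hr : r ∈ Set.Icc 0 2) :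
    |r * modularHeat y r - r * modularHeat x r + (y - x) * ((2 - r) * modularHeat x r)|
      ≤ (y - x) ^ 2 * (2 - r) ^ 2 := by
  obtain rfl | hr0 := hr.1.eq_or_lt
  · simp only [modularHeat, zero_mul, sub_zero, mul_zero, add_zero, abs_zero]
    positivity
  set δ := (2 - r) / r with hδ
  have hδ0 : 0 ≤ δ := div_nonneg (sub_nonneg.2 hr.2) hr.1
  have hrδ : 2 - r = r * δ := by rw [hδ]; field_simp
  calc _ = |r ^ 2 * (exp (-(y * δ)) - exp (-(x * δ)) + (y * δ - x * δ) * exp (-(x * δ)))| := by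
        rw [modularHeat, modularHeat, ← hδ, hrδ]; ring_nf
    _ ≤ r ^ 2 * (y * δ - x * δ) ^ 2 := by
        rw [abs_mul, abs_of_nonneg (sq_nonneg r)]
        gcongr
        exact abs_exp_neg_sub_le (mul_nonneg hx hδ0) (mul_nonneg hy hδ0)
    _ = (y - x) ^ 2 * (2 - r) ^ 2 := by rw [hrδ]; ring

lemma integral_exp_mul_exp_neg_sq {δ : ℝ} :
    ∫ p : ℝ, exp p * exp (-(exp (2 * p) * δ)) = √(π / δ) / 2 := by
  have h := integral_image_eq_integral_abs_deriv_smul MeasurableSet.univ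
    (fun p _ => (hasDerivAt_exp p).hasDerivWithinAt) exp_injective.injOn
    fun u => exp (-δ * u ^ 2)
  rw [Set.image_univ, range_exp, integral_gaussian_Ioi, setIntegral_univ] at h
  rw [h]
  refine integral_congr_ae (.of_forall fun p => ?_)
  simp only [abs_exp, smul_eq_mul, ← exp_nat_mul, Nat.cast_ofNat, neg_mul, mul_comm δ]

/-- The symbol of the operator `heatDensity`. -/
def heatDensitySymbol (p r : ℝ) : ℝ :=
  exp p * ((2 - r) ^ 2 * √(r * (2 - r)) * modularHeat (exp (2 * p)) r)

lemma integral_heatDensitySymbol (hr : r ∈ Set.Icc 0 2) :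
    ∫ p, heatDensitySymbol p r = √π / 2 * (r * (2 - r)) ^ 2 := by
  obtain rfl | hr0 := hr.1.eq_or_lt
  · simp [heatDensitySymbol, modularHeat]
  obtain rfl | hr2 := hr.2.eq_or_lt
  · simp [heatDensitySymbol]
  have : 0 < 2 - r := sub_pos.2 hr2
  have hsqrt : √(r * (2 - r)) * √(π / ((2 - r) / r)) = √π * r := by
    have hmul : r * (2 - r) * (π / ((2 - r) / r)) = π * r ^ 2 := by field_simp
    rw [← sqrt_mul (by positivity), hmul, sqrt_mul pi_pos.le, sqrt_sq hr.1]
  calc ∫ p, heatDensitySymbol p r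
      = ∫ p, (2 - r) ^ 2 * √(r * (2 - r)) * r * (exp p * exp (-(exp (2 * p) * ((2 - r) / r)))) :=
        integral_congr_ae (.of_forall fun p => by simp only [heatDensitySymbol, modularHeat]; ring)
    _ = (2 - r) ^ 2 * r * (√(r * (2 - r)) * √(π / ((2 - r) / r))) / 2 := by
        rw [integral_const_mul, integral_exp_mul_exp_neg_sq]; ring
    _ = √π / 2 * (r * (2 - r)) ^ 2 := by rw [hsqrt]; ring

lemma abs_heatDensitySymbol_le (hr : r ∈ Set.Icc 0 2) (p : ℝ) :
    |heatDensitySymbol p r| ≤ 8 * exp (-|p|) := by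
  have hs : 0 ≤ 2 - r := sub_nonneg.2 hr.2
  have hs2 : 2 - r ≤ 2 := by linarith [hr.1]
  have hφ := modularHeat_nonneg (x := exp (2 * p)) hr
  have hsqrt : √(r * (2 - r)) ≤ 1 := sqrt_le_one.2 (by nlinarith [sq_nonneg (r - 1)])
  rw [heatDensitySymbol, abs_of_nonneg (by positivity)]
  rcases le_total p 0 with hp | hp
  · calc exp p * ((2 - r) ^ 2 * √(r * (2 - r)) * modularHeat (exp (2 * p)) r)
        ≤ exp p * (2 ^ 2 * 1 * 2) := by
          gcongr
          exact (modularHeat_le (exp_pos _).le hr).trans hr.2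
      _ = 8 * exp (-|p|) := by rw [abs_of_nonpos hp, neg_neg]; ring
  · have hexp : exp p = exp (-p) * exp (2 * p) := by rw [← exp_add]; ring_nf
    calc exp p * ((2 - r) ^ 2 * √(r * (2 - r)) * modularHeat (exp (2 * p)) r)
        = exp (-p) * ((2 - r) * √(r * (2 - r)) *
            (exp (2 * p) * ((2 - r) * modularHeat (exp (2 * p)) r))) := by rw [hexp]; ring
      _ ≤ exp (-p) * (2 * 1 * 2 ^ 2) := by
          gcongr
          exact (mul_modularHeat_le hr).trans (pow_le_pow_left₀ hr.1 hr.2 2)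
      _ = 8 * exp (-|p|) := by rw [abs_of_nonneg hp]; ring

lemma integrable_exp_neg_abs : Integrable fun p : ℝ => exp (-|p|) := by
  rw [← integrableOn_univ, ← Set.Iic_union_Ioi (a := 0), integrableOn_union]
  constructor
  · refine (integrableOn_exp_Iic 0).congr_fun (fun p hp => ?_) measurableSet_Iic
    rw [abs_of_nonpos hp, neg_neg]
  · refine (integrableOn_exp_neg_Ioi 0).congr_fun (fun p hp => ?_) measurableSet_Ioi
    rw [abs_of_pos hp]

lemma continuousOn_heatDensitySymbol :
    ContinuousOn (Function.uncurry heatDensitySymbol) (Set.univ ×ˢ Set.Icc 0 2) := by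
  have h : ContinuousOn (fun z : ℝ × ℝ => modularHeat (exp (2 * z.1)) z.2)
      (Set.univ ×ˢ Set.Icc 0 2) :=
    continuousOn_modularHeat.comp (f := fun z : ℝ × ℝ => (exp (2 * z.1), z.2)) (by fun_prop)
      fun z hz => ⟨(exp_pos _).le, hz.2⟩
  unfold Function.uncurry heatDensitySymbol
  fun_prop

end HeatKernel

section Inversion

variable {B : Type*} [CStarAlgebra B] {R : B}

lemma continuousOn_modularHeat_right {x : ℝ} (hx : 0 ≤ x) :
    ContinuousOn (modularHeat x) (Set.Icc 0 2) :=
  continuousOn_modularHeat.comp (f := fun r => (x, r)) (by fun_prop) fun _ hr => ⟨hx, hr⟩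

/-- The operator `R S² e^{-xΔ}`, where `S = 2 - R` and `Δ = S R⁻¹` is the modular operator. -/
def heat (R : B) (x : ℝ) : B := cfc (fun r => (2 - r) ^ 2 * modularHeat x r) R

/-- The operator `e^p R S² T e^{-exp(2p)Δ}`, where `S = 2 - R`, `T = √(RS)` and `Δ = S R⁻¹` is the
modular operator. Its integral over `p` is a multiple of `(RS)²`. -/
def heatDensity (R : B) (p : ℝ) : B := cfc (heatDensitySymbol p) R

lemma cfc_mul_heat (hsp : spectrum ℝ R ⊆ Set.Icc 0 2) {f : ℝ → ℝ}
    (hf : Continuous f) {x : ℝ} (hx : 0 ≤ x) :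
    cfc f R * heat R x = cfc (fun r => f r * ((2 - r) ^ 2 * modularHeat x r)) R := by
  have := (continuousOn_modularHeat_right hx).mono hsp
  rw [heat, ← cfc_mul f (fun r => (2 - r) ^ 2 * modularHeat x r) R]

lemma heat_mul_cfc (f : ℝ → ℝ) (x : ℝ) : heat R x * cfc f R = cfc f R * heat R x :=
  (cfc_commute_cfc _ f R).eq

lemma cfc_two_sub (hR : IsSelfAdjoint R) : cfc (fun r : ℝ => 2 - r) R = 2 - R := by
  rw [cfc_sub (fun _ : ℝ => (2 : ℝ)) (fun x => x) R, cfc_id' ℝ R, cfc_const (2 : ℝ) R,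
    map_ofNat (algebraMap ℝ B) 2]

lemma sq_mul_two_sub_eq_cfc (hR : IsSelfAdjoint R) :
    (R * (2 - R)) ^ 2 = cfc (fun r : ℝ => (r * (2 - r)) ^ 2) R := by
  rw [cfc_pow (fun r : ℝ => r * (2 - r)) 2 R, cfc_mul (fun r : ℝ => r) (fun r => 2 - r) R,
    cfc_id' ℝ R, cfc_two_sub hR]

lemma mul_heat (hR : IsSelfAdjoint R) (hsp : spectrum ℝ R ⊆ Set.Icc 0 2) {x : ℝ} (hx : 0 ≤ x) :
    R * heat R x = cfc (fun r => r * ((2 - r) ^ 2 * modularHeat x r)) R := by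
  rw [← cfc_mul_heat hsp continuous_id' hx, cfc_id' ℝ R]

lemma two_sub_mul_heat (hR : IsSelfAdjoint R) (hsp : spectrum ℝ R ⊆ Set.Icc 0 2) {x : ℝ}
    (hx : 0 ≤ x) :
    (2 - R) * heat R x = cfc (fun r => (2 - r) * ((2 - r) ^ 2 * modularHeat x r)) R := by
  rw [← cfc_mul_heat hsp (by fun_prop) hx, cfc_two_sub hR]

lemma heatDensity_eq (hsp : spectrum ℝ R ⊆ Set.Icc 0 2) (p : ℝ) :
    heatDensity R p =
      Real.exp p • (cfc (fun r => √(r * (2 - r))) R * heat R (Real.exp (2 * p))) := by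
  have := (continuousOn_modularHeat_right (Real.exp_pos (2 * p)).le).mono hsp
  rw [cfc_mul_heat hsp (by fun_prop) (Real.exp_pos _).le, ← cfc_smul ..]
  refine cfc_congr fun r _ => ?_
  simp only [heatDensitySymbol, smul_eq_mul]
  ring

lemma mul_heat_zero (hR : IsSelfAdjoint R) (hsp : spectrum ℝ R ⊆ Set.Icc 0 2) :
    R * heat R 0 = (R * (2 - R)) ^ 2 := by
  rw [mul_heat hR hsp le_rfl, sq_mul_two_sub_eq_cfc hR]
  refine cfc_congr fun r _ => ?_
  simp only [modularHeat, zero_mul, neg_zero, Real.exp_zero]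
  ring

lemma hasDerivWithinAt_mul_heat (hR : IsSelfAdjoint R) (hsp : spectrum ℝ R ⊆ Set.Icc 0 2) {x : ℝ}
    (hx : 0 ≤ x) :
    HasDerivWithinAt (fun x => R * heat R x) (-((2 - R) * heat R x)) (Set.Ici 0) x := by
  rw [hasDerivWithinAt_iff_isLittleO]
  refine (Asymptotics.IsBigO.of_bound 16 ?_).trans_isLittleO
    ((Asymptotics.isLittleO_pow_sub_sub x one_lt_two).mono nhdsWithin_le_nhds)
  filter_upwards [self_mem_nhdsWithin] with y hy
  have hcx := (continuousOn_modularHeat_right hx).mono hsp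
  have hcy := (continuousOn_modularHeat_right hy).mono hsp
  rw [mul_heat hR hsp hx, mul_heat hR hsp hy, two_sub_mul_heat hR hsp hx, smul_neg, sub_neg_eq_add,
    ← cfc_sub .., ← cfc_smul .., ← cfc_add ..]
  refine norm_cfc_le (by positivity) fun r hr => ?_
  have hr := hsp hr
  have hs : 0 ≤ 2 - r := sub_nonneg.2 hr.2
  have hs2 : 2 - r ≤ 2 := by linarith [hr.1]
  rw [Real.norm_eq_abs]
  calc _ = (2 - r) ^ 2 * |r * modularHeat y r - r * modularHeat x r
          + (y - x) * ((2 - r) * modularHeat x r)| := by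
        rw [← abs_of_nonneg (sq_nonneg (2 - r)), ← abs_mul, abs_of_nonneg (sq_nonneg (2 - r)),
          smul_eq_mul]
        ring_nf
    _ ≤ 2 ^ 2 * ((y - x) ^ 2 * 2 ^ 2) := by
        gcongr
        refine (abs_modularHeat_sub_le hx hy hr).trans ?_
        gcongr
    _ = 16 * ‖‖y - x‖ ^ 2‖ := by rw [norm_pow, norm_norm, Real.norm_eq_abs, sq_abs]; ring

lemma norm_mul_heat_le (hR : IsSelfAdjoint R) (hsp : spectrum ℝ R ⊆ Set.Icc 0 2) {x : ℝ}
    (hx : 0 < x) : ‖R * heat R x‖ ≤ 16 * x⁻¹ := by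
  rw [mul_heat hR hsp hx.le]
  refine norm_cfc_le (by positivity) fun r hr => ?_
  have hr := hsp hr
  have hs : 0 ≤ 2 - r := sub_nonneg.2 hr.2
  have hs2 : 2 - r ≤ 2 := by linarith [hr.1]
  have h0 := modularHeat_nonneg (x := x) hr
  rw [Real.norm_of_nonneg (mul_nonneg hr.1 (by positivity)), le_mul_inv_iff₀ hx]
  calc r * ((2 - r) ^ 2 * modularHeat x r) * x
      = r * (2 - r) * (x * ((2 - r) * modularHeat x r)) := by ring
    _ ≤ 2 * 2 * 2 ^ 2 := by
        gcongr
        exacts [hr.2, (mul_modularHeat_le hr).trans (pow_le_pow_left₀ hr.1 hr.2 2)]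
    _ = 16 := by norm_num

lemma hasDerivAt_mul_heat_exp (hR : IsSelfAdjoint R) (hsp : spectrum ℝ R ⊆ Set.Icc 0 2) (p : ℝ) :
    HasDerivAt (fun p => R * heat R (Real.exp (2 * p)))
      (-(2 * Real.exp (2 * p)) • ((2 - R) * heat R (Real.exp (2 * p)))) p := by
  have hexp : HasDerivAt (fun p => Real.exp (2 * p)) (Real.exp (2 * p) * 2) p := by
    simpa only [mul_one] using ((hasDerivAt_id' p).const_mul 2).exp
  have h := (hasDerivWithinAt_mul_heat hR hsp (Real.exp_pos (2 * p)).le).hasDerivAt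
    (Ici_mem_nhds (Real.exp_pos _))
  rw [neg_smul, ← smul_neg, mul_comm]
  exact h.scomp p hexp

lemma tendsto_mul_heat_exp_atBot (hR : IsSelfAdjoint R) (hsp : spectrum ℝ R ⊆ Set.Icc 0 2) :
    Tendsto (fun p => R * heat R (Real.exp (2 * p))) atBot (𝓝 ((R * (2 - R)) ^ 2)) := by
  rw [← mul_heat_zero hR hsp]
  refine (hasDerivWithinAt_mul_heat hR hsp le_rfl).continuousWithinAt.tendsto.comp ?_
  refine tendsto_nhdsWithin_iff.2 ⟨?_, .of_forall fun p => (Real.exp_pos _).le⟩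
  exact Real.tendsto_exp_atBot.comp (tendsto_id.const_mul_atBot two_pos)

lemma tendsto_mul_heat_exp_atTop (hR : IsSelfAdjoint R) (hsp : spectrum ℝ R ⊆ Set.Icc 0 2) :
    Tendsto (fun p => R * heat R (Real.exp (2 * p))) atTop (𝓝 0) := by
  refine squeeze_zero_norm (fun p => norm_mul_heat_le hR hsp (Real.exp_pos _)) ?_
  have : Tendsto (fun p : ℝ => Real.exp (2 * p)) atTop atTop :=
    Real.tendsto_exp_atTop.comp (tendsto_id.const_mul_atTop two_pos)
  simpa only [mul_zero, Pi.inv_apply] using this.inv_tendsto_atTop.const_mul 16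

lemma norm_heatDensity_le (hsp : spectrum ℝ R ⊆ Set.Icc 0 2) (p : ℝ) :
    ‖heatDensity R p‖ ≤ 8 * Real.exp (-|p|) :=
  norm_cfc_le (by positivity) fun _ hr => abs_heatDensitySymbol_le (hsp hr) p

lemma integrable_heatDensity (hR : IsSelfAdjoint R) (hsp : spectrum ℝ R ⊆ Set.Icc 0 2) :
    Integrable (heatDensity R) :=
  integrable_cfc heatDensitySymbol _ R
    (continuousOn_heatDensitySymbol.mono (Set.prod_mono subset_rfl hsp))
    (.of_forall fun p _ hr => abs_heatDensitySymbol_le (hsp hr) p)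
    (integrable_exp_neg_abs.const_mul 8).2

lemma integral_heatDensity (hR : IsSelfAdjoint R) (hsp : spectrum ℝ R ⊆ Set.Icc 0 2) :
    ∫ p, heatDensity R p = (√Real.pi / 2) • (R * (2 - R)) ^ 2 := by
  have h := cfc_integral heatDensitySymbol _ R (μ := volume)
    (continuousOn_heatDensitySymbol.mono (Set.prod_mono subset_rfl hsp))
    (.of_forall fun p _ hr => abs_heatDensitySymbol_le (hsp hr) p)
    (integrable_exp_neg_abs.const_mul 8).2
  rw [sq_mul_two_sub_eq_cfc hR, ← cfc_smul ..]
  exact h.symm.trans (cfc_congr fun r hr => integral_heatDensitySymbol (hsp hr))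

lemma hasDerivAt_mul_heat_mul_mul_heat (hR : IsSelfAdjoint R) (hsp : spectrum ℝ R ⊆ Set.Icc 0 2)
    {X h T : B} (hT : T = cfc (fun r => √(r * (2 - r))) R) {q : ℝ}
    (hX : (2 : ℝ) • (T * X * T) =
      Real.exp (-q) • ((2 - R) * h * R) + Real.exp q • (R * h * (2 - R))) (p : ℝ) :
    HasDerivAt (fun p => R * heat R (Real.exp (2 * p)) * h * (R * heat R (Real.exp (2 * (q + p)))))
      (-(4 : ℝ) • (heatDensity R p * X * heatDensity R (q + p))) p := by
  set g := heat R (Real.exp (2 * p)) with hg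
  set g' := heat R (Real.exp (2 * (q + p))) with hg'
  have hTg : T * g = g * T := hT ▸ (heat_mul_cfc _ _).symm
  have hRg : R * g = g * R := by
    simpa only [cfc_id' ℝ R] using (heat_mul_cfc (R := R) (fun r => r) (Real.exp (2 * p))).symm
  have hSg : (2 - R) * g = g * (2 - R) := by
    rw [sub_mul, mul_sub, hRg, ← Nat.cast_ofNat, Nat.cast_comm]
  have hd := ((hasDerivAt_mul_heat_exp hR hsp p).mul_const h).mul
    ((hasDerivAt_mul_heat_exp hR hsp (q + p)).comp_const_add q p)
  refine hd.congr_deriv (Eq.symm ?_)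
  rw [heatDensity_eq hsp, heatDensity_eq hsp, ← hT, ← hg, ← hg', hTg, hRg, hSg]
  have hexp : Real.exp (2 * p) = Real.exp (2 * p + q) * Real.exp (-q) := by
    rw [← Real.exp_add]; ring_nf
  have hexp' : Real.exp (2 * (q + p)) = Real.exp (2 * p + q) * Real.exp q := by
    rw [← Real.exp_add]; ring_nf
  calc -(4 : ℝ) • (Real.exp p • (g * T) * X * Real.exp (q + p) • (T * g'))
      = (-2 * Real.exp (2 * p + q)) • (g * ((2 : ℝ) • (T * X * T)) * g') := by
        simp only [smul_mul_assoc, mul_smul_comm, smul_smul, mul_assoc]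
        congr 1
        rw [show 2 * p + q = q + p + p by ring, Real.exp_add (q + p)]
        ring
    _ = _ := by
        rw [hX, hexp, hexp']
        simp only [mul_add, add_mul, smul_add, smul_mul_assoc, mul_smul_comm, smul_smul, mul_assoc]
        congr 2 <;> ring

theorem integral_heatDensity_mul_mul_heatDensity (hR : IsSelfAdjoint R)
    (hsp : spectrum ℝ R ⊆ Set.Icc 0 2) {X h T : B} (hT : T = cfc (fun r => √(r * (2 - r))) R)
    {q : ℝ} (hX : (2 : ℝ) • (T * X * T) =
      Real.exp (-q) • ((2 - R) * h * R) + Real.exp q • (R * h * (2 - R))) :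
    ∫ p, heatDensity R p * X * heatDensity R (q + p) =
      (4 : ℝ)⁻¹ • ((R * (2 - R)) ^ 2 * h * (R * (2 - R)) ^ 2) := by
  have hint : Integrable fun p => heatDensity R p * X * heatDensity R (q + p) := by
    refine ((integrable_heatDensity hR hsp).mul_const X).mul_bdd (c := 8)
      ((integrable_heatDensity hR hsp).comp_add_left q).aestronglyMeasurable
      (.of_forall fun p => (norm_heatDensity_le hsp _).trans ?_)
    exact mul_le_of_le_one_right (by norm_num) (Real.exp_le_one_iff.2 (neg_nonpos.2 (abs_nonneg _)))
  have hbot := ((tendsto_mul_heat_exp_atBot hR hsp).mul_const h).mul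
    ((tendsto_mul_heat_exp_atBot hR hsp).comp (tendsto_atBot_add_const_left _ q tendsto_id))
  have htop := ((tendsto_mul_heat_exp_atTop hR hsp).mul_const h).mul
    ((tendsto_mul_heat_exp_atTop hR hsp).comp (tendsto_atTop_add_const_left _ q tendsto_id))
  have h := integral_of_hasDerivAt_of_tendsto
    (hasDerivAt_mul_heat_mul_mul_heat hR hsp hT hX) (hint.smul (-(4 : ℝ))) hbot htop
  rw [integral_smul, mul_zero, zero_sub, neg_smul, neg_inj] at h
  rw [← h, inv_smul_smul₀ four_ne_zero]

theorem integral_sq_mul_mul_sq (hR : IsSelfAdjoint R)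
    (hsp : spectrum ℝ R ⊆ Set.Icc 0 2) {X T : B} (hT : T = cfc (fun r => √(r * (2 - r))) R)
    {h : ℝ → B}
    (hX : ∀ q, (2 : ℝ) • (T * X * T) =
      Real.exp (-q) • ((2 - R) * h q * R) + Real.exp q • (R * h q * (2 - R))) :
    Integrable (fun q => (R * (2 - R)) ^ 2 * h q * (R * (2 - R)) ^ 2) ∧
      ∫ q, (R * (2 - R)) ^ 2 * h q * (R * (2 - R)) ^ 2 =
        Real.pi • ((R * (2 - R)) ^ 2 * X * (R * (2 - R)) ^ 2) := by
  have hF := (integrable_heatDensity hR hsp).comp_neg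
  have hG := (integrable_heatDensity hR hsp).const_mul X
  have hconv : (fun q => (4 : ℝ) • convolution (fun p => heatDensity R (-p))
      (fun p => X * heatDensity R p) (ContinuousLinearMap.mul ℝ B) volume q) =
      fun q => (R * (2 - R)) ^ 2 * h q * (R * (2 - R)) ^ 2 := by
    ext q
    rw [convolution_def, ← integral_neg_eq_self]
    simp only [neg_neg, sub_neg_eq_add, ContinuousLinearMap.mul_apply', ← mul_assoc]
    rw [integral_heatDensity_mul_mul_heatDensity hR hsp hT (hX q), smul_inv_smul₀ four_ne_zero]
  rw [← hconv]
  refine ⟨(hF.integrable_convolution _ hG).smul _, ?_⟩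
  rw [integral_smul, integral_convolution _ hF hG, integral_neg_eq_self,
    integral_const_mul_of_integrable (integrable_heatDensity hR hsp), integral_heatDensity hR hsp,
    ContinuousLinearMap.mul_apply']
  simp only [smul_mul_assoc, mul_smul_comm, smul_smul, ← mul_assoc]
  congr 1
  rw [show (4 : ℝ) * (√Real.pi / 2) * (√Real.pi / 2) = √Real.pi * √Real.pi by ring,
    Real.mul_self_sqrt Real.pi_pos.le]

end Inversion

section Resolvent

open Real

/-- The symbol of `2 T (R S)² (e^{-q} S + e^q R)⁻¹` in the functional calculus of `R`, where
`S = 2 - R` and `T = √(RS)`. -/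
def resolventSymbol (q r : ℝ) : ℝ :=
  2 * √(r * (2 - r)) * (r * (2 - r)) ^ 2 * (exp (-q) * (2 - r) + exp q * r)⁻¹

lemma resolvent_denom_pos (q : ℝ) {r : ℝ} (hr : r ∈ Set.Icc 0 2) :
    0 < exp (-q) * (2 - r) + exp q * r := by
  obtain ⟨h0, h2⟩ := hr
  rcases h0.eq_or_lt with rfl | h0
  · positivity
  · have : 0 ≤ 2 - r := sub_nonneg.2 h2
    positivity

lemma abs_resolventSymbol_le (q : ℝ) {r : ℝ} (hr : r ∈ Set.Icc 0 2) :
    |resolventSymbol q r| ≤ 4 * exp (-|q|) := by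
  have hpos := resolvent_denom_pos q hr
  have hs : 0 ≤ 2 - r := sub_nonneg.2 hr.2
  have hrs : 0 ≤ r * (2 - r) := mul_nonneg hr.1 hs
  have hrs1 : r * (2 - r) ≤ 1 := by linarith [sq_nonneg (r - 1)]
  have hsqrt : √(r * (2 - r)) * (r * (2 - r)) ^ 2 ≤ r * (2 - r) :=
    (mul_le_of_le_one_left (sq_nonneg _) (sqrt_le_one.2 hrs1)).trans
      (pow_le_of_le_one hrs hrs1 two_ne_zero)
  have hr2 : r * (2 - r) ≤ 2 * r := by linarith [sq_nonneg r]
  have hs2 : r * (2 - r) ≤ 2 * (2 - r) := mul_le_mul_of_nonneg_right hr.2 hs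
  rw [abs_of_nonneg (by unfold resolventSymbol; positivity), resolventSymbol,
    ← div_eq_mul_inv, div_le_iff₀ hpos]
  rcases le_total 0 q with hq | hq
  · rw [abs_of_nonneg hq, mul_add, mul_assoc 4, mul_assoc 4, ← mul_assoc _ (exp q), ← exp_add,
      neg_add_cancel, exp_zero, one_mul]
    have : 0 ≤ 4 * (exp (-q) * (exp (-q) * (2 - r))) := by positivity
    linarith
  · rw [abs_of_nonpos hq, neg_neg, mul_add, mul_assoc 4, mul_assoc 4, ← mul_assoc _ (exp (-q)),
      ← exp_add, add_neg_cancel, exp_zero, one_mul]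
    have : 0 ≤ 4 * (exp q * (exp q * r)) := by have := hr.1; positivity
    linarith

lemma continuousOn_resolventSymbol :
    ContinuousOn (Function.uncurry resolventSymbol) (Set.univ ×ˢ Set.Icc 0 2) := by
  unfold Function.uncurry resolventSymbol
  exact .mul (by fun_prop) (.inv₀ (by fun_prop) fun z hz => (resolvent_denom_pos z.1 hz.2).ne')

variable {B : Type*} [CStarAlgebra B] {R : B}

lemma integrable_cfc_resolventSymbol (hR : IsSelfAdjoint R) (hsp : spectrum ℝ R ⊆ Set.Icc 0 2) :
    Integrable fun q => cfc (resolventSymbol q) R :=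
  integrable_cfc resolventSymbol _ R
    (continuousOn_resolventSymbol.mono (Set.prod_mono subset_rfl hsp))
    (.of_forall fun q _ hr => abs_resolventSymbol_le q (hsp hr))
    (integrable_exp_neg_abs.const_mul 4).2

lemma exists_leftInverse_resolvent (hR : IsSelfAdjoint R) (hsp : spectrum ℝ R ⊆ Set.Icc 0 2)
    (q : ℝ) :
    ∃ K : B, K * (exp (-q) • (2 - R) + exp q • R) = 1 ∧
      K * ((2 : ℝ) • (cfc (fun r => √(r * (2 - r))) R * (R * (2 - R)) ^ 2)) =
        cfc (resolventSymbol q) R := by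
  have hcont : ContinuousOn (fun r => (exp (-q) * (2 - r) + exp q * r)⁻¹) (spectrum ℝ R) :=
    .inv₀ (by fun_prop) fun r hr => (resolvent_denom_pos q (hsp hr)).ne'
  refine ⟨cfc (fun r => (exp (-q) * (2 - r) + exp q * r)⁻¹) R, ?_, ?_⟩
  · rw [← cfc_two_sub hR]
    nth_rw 3 [← cfc_id' ℝ R]
    rw [← cfc_smul .., ← cfc_smul .., ← cfc_add .., ← cfc_mul .., ← cfc_one ℝ R]
    exact cfc_congr fun r hr => inv_mul_cancel₀ (resolvent_denom_pos q (hsp hr)).ne'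
  · rw [sq_mul_two_sub_eq_cfc hR, ← cfc_mul .., ← cfc_smul .., ← cfc_mul ..]
    refine cfc_congr fun r _ => ?_
    simp only [resolventSymbol, smul_eq_mul]
    ring

end Resolvent

lemma le_topologicalClosure_map {E : Type*} [NormedAddCommGroup E] [InnerProductSpace ℝ E]
    [CompleteSpace E] {D : Submodule ℝ E} {B : E →L[ℝ] E}
    (hB : ∀ x y, inner ℝ (B x) y = inner ℝ x (B y)) (hinj : Function.Injective B)
    (hD : ∀ x ∈ D, B x ∈ D) : D ≤ (D.map B.toLinearMap).topologicalClosure := by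
  set K := (D.map B.toLinearMap).topologicalClosure
  have hKD : K ≤ D.topologicalClosure :=
    Submodule.topologicalClosure_mono (Submodule.map_le_iff_le_comap.2 hD)
  intro x hx
  set w := x - K.starProjection x with hw
  have hwD : w ∈ D.topologicalClosure :=
    sub_mem (D.le_topologicalClosure hx) (hKD (K.starProjection_apply_mem x))
  have hwK : w ∈ Kᗮ := K.sub_starProjection_mem_orthogonal x
  have hBwD : B w ∈ D.topologicalClosure := map_mem_closure B.continuous hwD hD
  have hBw : B w ∈ (D.topologicalClosure)ᗮ := by
    rw [Submodule.orthogonal_closure]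
    refine (Submodule.mem_orthogonal' _ _).2 fun d hd => ?_
    rw [hB]
    exact Submodule.inner_left_of_mem_orthogonal
      (Submodule.le_topologicalClosure _ (Submodule.mem_map_of_mem hd)) hwK
  have hw0 : w = 0 := hinj <| by
    rw [map_zero, ← inner_self_eq_zero (𝕜 := ℝ)]
    exact Submodule.inner_right_of_mem_orthogonal hBwD hBw
  exact sub_eq_zero.1 (hw.symm.trans hw0) ▸ K.starProjection_apply_mem x

lemma exists_norm_smul_le_one (𝕜 : Type*) [RCLike 𝕜] {E : Type*} [NormedAddCommGroup E]
    [NormedSpace 𝕜 E] (x : E) : ∃ c : 𝕜, c ≠ 0 ∧ ‖c • x‖ ≤ 1 := by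
  have hpos : 0 < ‖x‖ + 1 := by positivity
  refine ⟨((‖x‖ + 1 : ℝ) : 𝕜)⁻¹, inv_ne_zero (RCLike.ofReal_ne_zero.2 hpos.ne'), ?_⟩
  rw [norm_smul, norm_inv, RCLike.norm_of_nonneg hpos.le, inv_mul_le_one₀ hpos]
  exact le_add_of_nonneg_right zero_le_one

namespace IsModularData

variable {A : VonNeumannAlgebra H} {Ω : H} {R S T : H →L[ℂ] H} {J : H →SL[starRingEnd ℂ] H}

lemma isSelfAdjoint_left (m : IsModularData A Ω R S T J) : IsSelfAdjoint R :=
  IsSelfAdjoint.of_nonneg m.nonneg_left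

lemma inner_left (m : IsModularData A Ω R S T J) (x y : H) : ⟪R x, y⟫ = ⟪x, R y⟫ := by
  rw [← star_apply_inner, m.isSelfAdjoint_left.star_eq]

lemma inner_modulus (m : IsModularData A Ω R S T J) (x y : H) : ⟪T x, y⟫ = ⟪x, T y⟫ := by
  rw [← star_apply_inner, (IsSelfAdjoint.of_nonneg m.modulus_nonneg).star_eq]

lemma left_add_right_apply (m : IsModularData A Ω R S T J) (x : H) : R x + S x = (2 : ℂ) • x := by
  have : R x + S x = (2 : H →L[ℂ] H) x := DFunLike.congr_fun m.add_eq_two x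
  rw [this, two_smul, ← one_add_one_eq_two]
  rfl

lemma left_right_apply_comm (m : IsModularData A Ω R S T J) (x : H) : R (S x) = S (R x) := by
  simp only [eq_sub_of_add_eq' (m.left_add_right_apply _), map_sub, map_smul]

lemma modulus_modulus_apply (m : IsModularData A Ω R S T J) (x : H) : T (T x) = R (S x) :=
  DFunLike.congr_fun m.modulus_mul_modulus x

lemma right_eq_cfc (m : IsModularData A Ω R S T J) : S = cfc (fun r : ℝ => 2 - r) R := by
  rw [m.right_eq, cfc_two_sub m.isSelfAdjoint_left]

lemma spectrum_subset (m : IsModularData A Ω R S T J) : spectrum ℝ R ⊆ Set.Icc 0 2 := by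
  have := m.isSelfAdjoint_left
  have hS := m.nonneg_right
  rw [m.right_eq_cfc, cfc_nonneg_iff (fun x : ℝ => 2 - x) R] at hS
  exact fun x hx => ⟨spectrum_nonneg_of_nonneg m.nonneg_left hx, sub_nonneg.1 (hS x hx)⟩

lemma mul_eq_cfc (m : IsModularData A Ω R S T J) : R * S = cfc (fun r : ℝ => r * (2 - r)) R := by
  have := m.isSelfAdjoint_left
  rw [cfc_mul (fun r : ℝ => r) (fun r => 2 - r) R, cfc_id' ℝ R, ← m.right_eq_cfc]

lemma modulus_eq_cfc (m : IsModularData A Ω R S T J) :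
    T = cfc (fun r : ℝ => √(r * (2 - r))) R := by
  have := m.isSelfAdjoint_left
  have hsq : cfc (fun r : ℝ => √(r * (2 - r))) R * cfc (fun r : ℝ => √(r * (2 - r))) R = R * S := by
    rw [m.mul_eq_cfc, ← cfc_mul (fun r : ℝ => √(r * (2 - r))) (fun r : ℝ => √(r * (2 - r))) R]
    refine cfc_congr fun r hr => Real.mul_self_sqrt ?_
    exact mul_nonneg (m.spectrum_subset hr).1 (sub_nonneg.2 (m.spectrum_subset hr).2)
  rw [← CFC.sqrt_unique hsq (cfc_nonneg fun r _ => Real.sqrt_nonneg _),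
    CFC.sqrt_unique m.modulus_mul_modulus m.modulus_nonneg]

lemma modulus_left_apply (m : IsModularData A Ω R S T J) (x : H) : T (R x) = R (T x) := by
  have : Commute T R := by
    rw [m.modulus_eq_cfc]
    exact (Commute.refl R).cfc_real _
  exact DFunLike.congr_fun this.eq x

lemma injective_left' (m : IsModularData A Ω R S T J) : Function.Injective R :=
  (injective_iff_map_eq_zero R).2 m.injective_left

lemma injective_right' (m : IsModularData A Ω R S T J) : Function.Injective S :=
  m.symm.injective_left'

lemma injective_conj (m : IsModularData A Ω R S T J) : Function.Injective J :=
  Function.LeftInverse.injective m.conj_conj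

lemma inner_conj_right (m : IsModularData A Ω R S T J) (x y : H) : ⟪x, J y⟫ = ⟪y, J x⟫ := by
  rw [← m.inner_conj_conj, m.conj_conj]

lemma inner_conj_left (m : IsModularData A Ω R S T J) (x y : H) : ⟪J x, y⟫ = ⟪J y, x⟫ := by
  rw [← m.inner_conj_conj, m.conj_conj]

lemma left_vacuum (m : IsModularData A Ω R S T J) : R Ω = Ω := by
  have hS : J (T Ω) = S Ω := by
    simpa only [star_one] using! m.conj_modulus_star 1 (one_mem A)
  have hR : J (T Ω) = R Ω := by
    simpa only [star_one] using! m.conj_modulus_star' 1 (one_mem A.commutant)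
  have h2 := m.left_add_right_apply Ω
  rw [← hS, hR, ← two_smul ℂ] at h2
  exact smul_right_injective H (two_ne_zero (α := ℂ)) h2

lemma right_vacuum (m : IsModularData A Ω R S T J) : S Ω = Ω := m.symm.left_vacuum

lemma modulus_vacuum (m : IsModularData A Ω R S T J) : T Ω = Ω := by
  have hneg : T (T Ω - Ω) = -(T Ω - Ω) := by
    rw [map_sub, m.modulus_modulus_apply, m.right_vacuum, m.left_vacuum, neg_sub]
  have h := re_inner_nonneg m.modulus_nonneg (T Ω - Ω)
  rw [hneg, inner_neg_left, Complex.neg_re, neg_nonneg] at h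
  exact sub_eq_zero.1 (re_inner_self_nonpos (𝕜 := ℂ).1 h)

lemma conj_vacuum (m : IsModularData A Ω R S T J) : J Ω = Ω := by
  have h := m.conj_modulus_star 1 (one_mem A)
  rwa [star_one, one_apply_eq_self, m.modulus_vacuum, m.right_vacuum] at h

end IsModularData

/-- The conjugate `J x J` of a linear operator `x` by an antilinear operator `J`. -/
def conjBy (J : H →SL[starRingEnd ℂ] H) (x : H →L[ℂ] H) : H →L[ℂ] H := J.comp (x.comp J)

omit [CompleteSpace H] in
@[simp]
lemma conjBy_apply (J : H →SL[starRingEnd ℂ] H) (x : H →L[ℂ] H) (y : H) :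
    conjBy J x y = J (x (J y)) := rfl

namespace IsModularData

variable {A : VonNeumannAlgebra H} {Ω : H} {R S T : H →L[ℂ] H} {J : H →SL[starRingEnd ℂ] H}
  {x' h : H →L[ℂ] H}

theorem add_apply_vacuum_eq (m : IsModularData A Ω R S T J) (hh : h ∈ A) {c : ℝ}
    (hrn : ∀ k ∈ A,
      2 * ⟪x' Ω, k Ω⟫ = c * ⟪star h Ω, k Ω⟫ + (c : ℂ)⁻¹ * ⟪star k Ω, h Ω⟫) :
    (c : ℂ) • S (h Ω) + (c : ℂ)⁻¹ • R (h Ω) = (2 : ℂ) • T (J (x' Ω)) := by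
  have hR : R ((2 : ℂ) • x' Ω - (c : ℂ) • star h Ω) = J (T ((c : ℂ)⁻¹ • h Ω)) := by
    refine m.left_eq_of_inner _ _ fun k hk => ?_
    rw [inner_sub_left, inner_smul_left, inner_smul_left, inner_smul_right, map_ofNat,
      Complex.conj_ofReal, hrn k hk]
    ring
  have hstar : T (star h Ω) = R (J (h Ω)) := by
    apply m.injective_conj
    rw [m.conj_modulus_star h hh, m.conj_left, m.conj_conj]
  have hTJT : T (J (T (h Ω))) = R (S (J (h Ω))) := by
    rw [← m.conj_modulus, m.modulus_modulus_apply, m.conj_left, m.conj_right,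
      m.left_right_apply_comm]
  have hRT := congrArg T hR
  rw [m.modulus_left_apply, map_sub, map_smul, map_smul, hstar, map_smul, map_smulₛₗ, map_smul,
    hTJT, ← map_smul R _ (S (J (h Ω)))] at hRT
  have hT := congrArg J (sub_eq_iff_eq_add.1 (m.injective_left' hRT))
  simp only [map_add, map_smulₛₗ, m.conj_modulus, m.conj_left, m.conj_right, m.conj_conj, map_inv₀,
    Complex.conj_ofReal, map_ofNat] at hT
  rw [hT, add_comm]

theorem exists_apply_vacuum_eq_modulus_conj (m : IsModularData A Ω R S T J)
    (hx : x' ∈ A.commutant) : ∃ h ∈ A, h Ω = T (J (x' Ω)) := by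
  obtain ⟨c, hc, hle⟩ := exists_norm_smul_le_one ℂ x'
  obtain ⟨h, hh, -, hrn⟩ := exists_radonNikodym m.separating (smul_mem c hx) hle one_pos
  have e := m.add_apply_vacuum_eq hh hrn
  rw [Complex.ofReal_one, inv_one, one_smul, one_smul, add_comm, m.left_add_right_apply] at e
  have e := smul_right_injective H (two_ne_zero (α := ℂ)) e
  refine ⟨(starRingEnd ℂ c)⁻¹ • h, smul_mem _ hh, ?_⟩
  rw [smul_apply, e, smul_apply, map_smulₛₗ, map_smul, inv_smul_smul₀ ((map_ne_zero _).2 hc)]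

theorem star_apply_vacuum_eq (m : IsModularData A Ω R S T J) {b : H →L[ℂ] H} (hb : b ∈ A) {η : H}
    (h : b Ω = T (J η)) : star b Ω = R η := by
  apply m.injective_right'
  rw [← m.conj_modulus_star _ (star_mem hb), star_star, h, m.conj_modulus, m.conj_modulus,
    m.conj_conj, m.modulus_modulus_apply, m.left_right_apply_comm]

theorem exists_apply_vacuum_eq_left_right (m : IsModularData A Ω R S T J) (hx : x' ∈ A.commutant) :
    ∃ y ∈ A.commutant, y Ω = R (S (x' Ω)) ∧ star y Ω = R (S (star x' Ω)) := by
  obtain ⟨h, hh, ehx⟩ := m.exists_apply_vacuum_eq_modulus_conj hx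
  obtain ⟨y, hy, eyh⟩ := m.symm.exists_apply_vacuum_eq_modulus_conj
    (A.commutant_commutant.symm ▸ hh)
  refine ⟨y, hy, ?_, ?_⟩
  · rw [eyh, ehx, m.conj_modulus, m.conj_conj, m.modulus_modulus_apply]
  · rw [m.symm.star_apply_vacuum_eq hy eyh, ehx, ← m.conj_modulus, ← m.conj_left,
      ← m.modulus_left_apply, ← m.conj_modulus_star' _ hx, m.conj_modulus, m.conj_conj,
      m.modulus_modulus_apply]

theorem modulus_conjBy_modulus (m : IsModularData A Ω R S T J) (hx : x' ∈ A.commutant)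
    (hh : h ∈ A) {c : ℝ} (hrn : ∀ k ∈ A,
      2 * ⟪x' Ω, k Ω⟫ = c * ⟪star h Ω, k Ω⟫ + (c : ℂ)⁻¹ * ⟪star k Ω, h Ω⟫) :
    (2 : ℝ) • (T * conjBy J x' * T) = c • (S * h * R) + c⁻¹ • (R * h * S) := by
  refine DFunLike.coe_injective (m.separating.funext (by fun_prop) (by fun_prop)
    fun z hz => m.separating.ext_inner fun y hy => ?_)
  obtain ⟨a, ha, eay⟩ := m.exists_apply_vacuum_eq_modulus_conj hy
  obtain ⟨b, hb, ebz⟩ := m.exists_apply_vacuum_eq_modulus_conj hz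
  have hX : ⟪y Ω, T (J (x' (J (T (z Ω)))))⟫ = ⟪x' Ω, (star b * a) Ω⟫ := by
    rw [← m.inner_modulus, m.inner_conj_right, m.conj_modulus, m.conj_modulus, ← eay, ← ebz,
      mul_apply_eq_comp, inner_star_apply, apply_comm_of_mem_commutant hb hx]
  have hSR : ⟪star h Ω, (star b * a) Ω⟫ = ⟪y Ω, S (h (R (z Ω)))⟫ := by
    have k := m.conj_modulus_star (h * star b) (mul_mem hh (star_mem hb))
    rw [star_mul, star_star, mul_apply_eq_comp, mul_apply_eq_comp,
      m.star_apply_vacuum_eq hb ebz] at k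
    rw [mul_apply_eq_comp, inner_star_apply, eay, ← m.conj_modulus, m.inner_conj_right,
      m.inner_modulus, ← m.conj_modulus, k]
  have hRS : ⟪star (star b * a) Ω, h Ω⟫ = ⟪y Ω, R (h (S (z Ω)))⟫ := by
    have k := m.conj_modulus_star (star h * star a) (mul_mem (star_mem hh) (star_mem ha))
    rw [star_mul, star_star, star_star, mul_apply_eq_comp, mul_apply_eq_comp,
      m.star_apply_vacuum_eq ha eay] at k
    rw [star_mul, star_star, mul_apply_eq_comp, star_apply_inner, ebz, ← m.conj_modulus,
      m.inner_conj_left, ← m.inner_modulus, ← m.conj_modulus, k, m.symm.inner_left,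
      star_apply_inner, m.inner_left]
  have e := hrn (star b * a) (mul_mem (star_mem hb) ha)
  rw [← hX, hSR, hRS] at e
  rw [← inner_conj_symm, ← inner_conj_symm _ (y Ω)]
  congr 1
  change ⟪y Ω, (2 : ℝ) • T (J (x' (J (T (z Ω)))))⟫
    = ⟪y Ω, c • S (h (R (z Ω))) + c⁻¹ • R (h (S (z Ω)))⟫
  simp only [inner_add_right, ← Complex.coe_smul, inner_smul_right]
  exact_mod_cast e

lemma conj_sq (m : IsModularData A Ω R S T J) (x : H) :
    J (((R * S) ^ 2) x) = ((R * S) ^ 2) (J x) := by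
  simp only [sq, mul_apply_eq_comp, m.conj_left, m.conj_right, m.left_right_apply_comm]

lemma sq_vacuum (m : IsModularData A Ω R S T J) : ((R * S) ^ 2) Ω = Ω := by
  simp only [sq, mul_apply_eq_comp, m.left_vacuum, m.right_vacuum]

lemma injective_sq (m : IsModularData A Ω R S T J) : Function.Injective ⇑((R * S) ^ 2) := by
  have h := m.injective_left'.comp m.injective_right'
  exact h.comp h

lemma conjBy_vacuum (m : IsModularData A Ω R S T J) (x : H →L[ℂ] H) :
    conjBy J x Ω = J (x Ω) := by
  rw [conjBy_apply, m.conj_vacuum]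

lemma eq_cfc_resolventSymbol_apply (m : IsModularData A Ω R S T J) {q : ℝ} {ξ η : H}
    (h : Real.exp (-q) • S ξ + Real.exp q • R ξ = (2 : ℝ) • T (((R * S) ^ 2) η)) :
    ξ = cfc (resolventSymbol q) R η := by
  obtain ⟨K, hK, hK'⟩ := exists_leftInverse_resolvent m.isSelfAdjoint_left m.spectrum_subset q
  rw [← m.right_eq] at hK
  rw [← m.right_eq, ← m.modulus_eq_cfc] at hK'
  calc ξ = (K * (Real.exp (-q) • S + Real.exp q • R)) ξ := by rw [hK, one_apply_eq_self]
    _ = K ((2 : ℝ) • T (((R * S) ^ 2) η)) := congrArg K h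
    _ = (K * ((2 : ℝ) • (T * (R * S) ^ 2))) η := rfl
    _ = cfc (resolventSymbol q) R η := by rw [hK']

lemma exists_radonNikodym_family (m : IsModularData A Ω R S T J) {x : H →L[ℂ] H}
    (hx : x ∈ A.commutant) (hx1 : ‖x‖ ≤ 1) {χ : H} (hχ : x Ω = ((R * S) ^ 2) χ) :
    ∃ h : ℝ → H →L[ℂ] H, (∀ q, h q ∈ A) ∧ (∀ q, h q Ω = cfc (resolventSymbol q) R (J χ)) ∧
      ∀ η, ∫ q, ((R * S) ^ 2) (h q (((R * S) ^ 2) η)) =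
        Real.pi • ((R * S) ^ 2) (conjBy J x (((R * S) ^ 2) η)) := by
  choose h hA _ hrn using fun q => exists_radonNikodym m.separating hx hx1 (Real.exp_pos (-q))
  refine ⟨h, hA, fun q => m.eq_cfc_resolventSymbol_apply ?_, fun η => ?_⟩
  · have := m.add_apply_vacuum_eq (hA q) (hrn q)
    rw [hχ, m.conj_sq] at this
    simpa only [← Complex.ofReal_inv, ← Complex.ofReal_ofNat, Complex.coe_smul, Real.exp_neg,
      inv_inv] using this
  · have hX (q : ℝ) : (2 : ℝ) • (T * conjBy J x * T) =
        Real.exp (-q) • ((2 - R) * h q * R) + Real.exp q • (R * h q * (2 - R)) := by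
      rw [m.modulus_conjBy_modulus hx (hA q) (hrn q), Real.exp_neg, inv_inv, m.right_eq]
    obtain ⟨hint, hval⟩ :=
      integral_sq_mul_mul_sq m.isSelfAdjoint_left m.spectrum_subset m.modulus_eq_cfc hX
    rw [← m.right_eq] at hint hval
    have := ContinuousLinearMap.integral_comp_comm (ContinuousLinearMap.apply ℂ H η) hint
    rw [hval] at this
    exact this

lemma conjBy_apply_comm_of_norm_le_one (m : IsModularData A Ω R S T J) {x y : H →L[ℂ] H}
    (hx : x ∈ A.commutant) (hx1 : ‖x‖ ≤ 1) (hy : y ∈ A.commutant) {χ ζ : H}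
    (hχ : x Ω = ((R * S) ^ 2) χ) (hζ : y Ω = ((R * S) ^ 2) ζ) :
    conjBy J x (y Ω) = y (conjBy J x Ω) := by
  obtain ⟨h, hA, hh, hWhW⟩ := m.exists_radonNikodym_family hx hx1 hχ
  set W := (R * S) ^ 2 with hW
  set G : ℝ → H →L[ℂ] H := fun q => cfc (resolventSymbol q) R with hGdef
  have hG : Integrable G := integrable_cfc_resolventSymbol m.isSelfAdjoint_left m.spectrum_subset
  have hDG (D : H →L[ℂ] H) : ∫ q, D (G q (J χ)) = D ((∫ q, G q) (J χ)) :=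
    ContinuousLinearMap.integral_comp_comm (D ∘L ContinuousLinearMap.apply ℂ H (J χ)) hG
  have hGΩ : (∫ q, G q) (J χ) = Real.pi • conjBy J x Ω := by
    apply m.injective_sq
    have hΩ := hWhW Ω
    simp only [hW, m.sq_vacuum, hh] at hΩ
    rw [← hDG, hΩ, ContinuousLinearMap.map_smul_of_tower]
  apply m.injective_sq
  refine smul_right_injective H Real.pi_ne_zero ?_
  calc Real.pi • W (conjBy J x (y Ω)) = ∫ q, W (h q (y Ω)) := by rw [hζ, hWhW]
    _ = ∫ q, (W * y) (G q (J χ)) := by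
        simp only [apply_comm_of_mem_commutant (hA _) hy, hh, mul_apply_eq_comp, hGdef]
    _ = (W * y) (Real.pi • conjBy J x Ω) := by rw [hDG, hGΩ]
    _ = Real.pi • W (y (conjBy J x Ω)) := (W * y).map_smul_of_tower _ _

theorem conjBy_apply_comm (m : IsModularData A Ω R S T J) {x y : H →L[ℂ] H}
    (hx : x ∈ A.commutant) (hy : y ∈ A.commutant) {χ ζ : H}
    (hχ : x Ω = ((R * S) ^ 2) χ) (hζ : y Ω = ((R * S) ^ 2) ζ) :
    conjBy J x (y Ω) = y (conjBy J x Ω) := by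
  obtain ⟨c, hc, hc1⟩ := exists_norm_smul_le_one ℂ x
  have hχ' : (c • x) Ω = ((R * S) ^ 2) (c • χ) := by rw [map_smul, ← hχ]; rfl
  have := m.conjBy_apply_comm_of_norm_le_one (smul_mem c hx) hc1 hy hχ' hζ
  simp only [conjBy_apply, smul_apply, map_smulₛₗ] at this
  exact smul_right_injective H ((map_ne_zero _).2 hc) this

lemma inner_sq (m : IsModularData A Ω R S T J) (x y : H) :
    ⟪((R * S) ^ 2) x, y⟫ = ⟪x, ((R * S) ^ 2) y⟫ := by
  simp only [sq, mul_apply_eq_comp, m.inner_left, m.symm.inner_left, m.left_right_apply_comm]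

lemma exists_apply_vacuum_eq_sq (m : IsModularData A Ω R S T J) {x : H →L[ℂ] H}
    (hx : x ∈ A.commutant) :
    ∃ y ∈ A.commutant, y Ω = ((R * S) ^ 2) (x Ω) ∧ star y Ω = ((R * S) ^ 2) (star x Ω) := by
  obtain ⟨y, hy, e, e'⟩ := m.exists_apply_vacuum_eq_left_right hx
  obtain ⟨z, hz, f, f'⟩ := m.exists_apply_vacuum_eq_left_right hy
  exact ⟨z, hz, by rw [f, e]; rfl, by rw [f', e']; rfl⟩

lemma starGraph_mem_closure (m : IsModularData A Ω R S T J) {y : H →L[ℂ] H}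
    (hy : y ∈ A.commutant) :
    starGraph 1 Ω y ∈
      closure (starGraph 1 Ω '' {z | z ∈ A.commutant ∧ z Ω ∈ Set.range ⇑((R * S) ^ 2)}) := by
  have hdiag (u : WithLp 2 (H × H)) : diagonal ((R * S) ^ 2) u =
      WithLp.toLp 2 (((R * S) ^ 2) u.fst, ((R * S) ^ 2) u.snd) := diagonal_apply _ u
  have hgraph (x : H →L[ℂ] H) (hx : x ∈ A.commutant) : ∃ z ∈ A.commutant,
      z Ω ∈ Set.range ⇑((R * S) ^ 2) ∧
        starGraph 1 Ω z = diagonal ((R * S) ^ 2) (starGraph 1 Ω x) := by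
    obtain ⟨z, hz, e, e'⟩ := m.exists_apply_vacuum_eq_sq hx
    refine ⟨z, hz, ⟨_, e.symm⟩, ?_⟩
    simp only [hdiag, starGraph_apply, inv_one, one_smul, e, e',
      WithLp.toLp_fst, WithLp.toLp_snd]
  have hle := le_topologicalClosure_map (E := WithLp 2 (H × H))
    (D := (realSubmodule A.commutant).map (starGraph 1 Ω).toLinearMap)
    (B := (diagonal ((R * S) ^ 2)).restrictScalars ℝ) (fun u v => ?_) ?_ ?_
    (Submodule.mem_map_of_mem hy)
  · refine closure_mono ?_ hle
    rintro _ ⟨_, ⟨x, hx, rfl⟩, rfl⟩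
    obtain ⟨z, hz, hr, e⟩ := hgraph x hx
    exact ⟨z, ⟨hz, hr⟩, e⟩
  · simp only [ContinuousLinearMap.coe_restrictScalars', hdiag, WithLp.prod_inner_apply]
    have h (x y : H) : inner ℝ (((R * S) ^ 2) x) y = inner ℝ x (((R * S) ^ 2) y) :=
      congrArg Complex.re (m.inner_sq x y)
    exact congrArg₂ (· + ·) (h _ _) (h _ _)
  · intro u v huv
    simp only [ContinuousLinearMap.coe_restrictScalars', hdiag] at huv
    have huv := Prod.ext_iff.1 (WithLp.toLp_injective 2 huv)
    exact WithLp.ofLp_injective 2 (Prod.ext (m.injective_sq huv.1) (m.injective_sq huv.2))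
  · rintro _ ⟨x, hx, rfl⟩
    obtain ⟨z, hz, -, e⟩ := hgraph x hx
    exact ⟨z, hz, e⟩

theorem mem_of_apply_vacuum_comm (m : IsModularData A Ω R S T J) {Z : H →L[ℂ] H}
    (hZ : ∀ y ∈ A.commutant, y Ω ∈ Set.range ⇑((R * S) ^ 2) → Z (y Ω) = y (Z Ω)) : Z ∈ A := by
  have hvac (y : H →L[ℂ] H) (hy : y ∈ A.commutant) : Z (y Ω) = y (Z Ω) := by
    refine m.cyclic.ext_inner fun a ha => ?_
    have hcl : closure (starGraph 1 Ω '' {z | z ∈ A.commutant ∧ z Ω ∈ Set.range ⇑((R * S) ^ 2)}) ⊆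
        {u | ⟪Z u.fst, a Ω⟫ = ⟪Z Ω, a u.snd⟫} := by
      refine closure_minimal ?_ (isClosed_eq (by fun_prop) (by fun_prop))
      rintro _ ⟨z, ⟨hz, hr⟩, rfl⟩
      simp only [Set.mem_ofPred_eq, starGraph_apply, inv_one, one_smul,
        WithLp.toLp_fst, WithLp.toLp_snd, hZ z hz hr,
        apply_comm_of_mem_commutant ha (star_mem hz), inner_star_apply]
    have := hcl (m.starGraph_mem_closure hy)
    simpa only [Set.mem_ofPred_eq, starGraph_apply, inv_one, one_smul,
        WithLp.toLp_fst, WithLp.toLp_snd,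
      apply_comm_of_mem_commutant ha (star_mem hy), inner_star_apply] using this
  refine mem_of_apply_comm fun y hy => congrFun (m.separating.funext (by fun_prop) (by fun_prop)
    fun z hz => ?_)
  rw [hvac z hz]
  exact hvac (y * z) (mul_mem hy hz)

theorem conjBy_mem (m : IsModularData A Ω R S T J) {y : H →L[ℂ] H} (hy : y ∈ A.commutant) :
    conjBy J y ∈ A := by
  refine m.mem_of_apply_vacuum_comm fun x hx ⟨χ, hχ⟩ => ?_
  have hxJ : conjBy J x ∈ A := m.mem_of_apply_vacuum_comm fun z hz ⟨ζ, hζ⟩ =>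
    m.conjBy_apply_comm hx hz hχ.symm hζ.symm
  calc conjBy J y (x Ω) = J (y (conjBy J x Ω)) := by rw [m.conjBy_vacuum]; rfl
    _ = J (conjBy J x (y Ω)) := by rw [apply_comm_of_mem_commutant hxJ hy]
    _ = x (conjBy J y Ω) := by rw [m.conjBy_vacuum, conjBy_apply, m.conj_conj]

end IsModularData

end TomitaTakesaki

/-- **Existence of a modular conjugation.**
If `Ω` is cyclic and separating for the von Neumann algebra `A`, then there exists an
antiunitary involution `J` on `H` (an additive, conjugate-linear, bijective map with
`⟪J x, J y⟫ = ⟪y, x⟫` and `J ∘ J = id`) conjugating `A` onto its commutant and the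
commutant onto `A`. -/
theorem exists_modular_conjugation
    (A : VonNeumannAlgebra H) (Ω : H)
    (hcyc : IsCyclicVector (A : Set (H →L[ℂ] H)) Ω)
    (hsep : IsCyclicVector (A.commutant : Set (H →L[ℂ] H)) Ω) :
    ∃ J : H → H,
      Function.Bijective J ∧
      (∀ x y : H, J (x + y) = J x + J y) ∧
      (∀ (c : ℂ) (x : H), J (c • x) = (starRingEnd ℂ c) • J x) ∧
      (∀ x y : H, ⟪J x, J y⟫ = ⟪y, x⟫) ∧
      (∀ x : H, J (J x) = x) ∧
      (∀ a ∈ A, ∃ a' ∈ A.commutant, ∀ x : H, J (a (J x)) = a' x) ∧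
      (∀ a' ∈ A.commutant, ∃ a ∈ A, ∀ x : H, J (a' (J x)) = a x) := by
  obtain ⟨R, S, T, J, m⟩ := TomitaTakesaki.exists_isModularData hcyc hsep
  refine ⟨J, Function.Involutive.bijective m.conj_conj, map_add J, map_smulₛₗ J, m.inner_conj_conj,
    m.conj_conj, fun a ha => ?_, fun a ha => ⟨_, m.conjBy_mem ha, fun _ => rfl⟩⟩
  rw [← A.commutant_commutant] at ha
  exact ⟨_, m.symm.conjBy_mem ha, fun _ => rfl⟩
end
end

section
/- Let H be a complex Hilbert space, 𝒜 a von Neumann algebra on H, and Ω ∈ H a vector that is cyclic and separating for 𝒜. Then the set of vectors x ∈ H such that x = a Ω for some a ∈ 𝒜 and simultaneously x = a' Ω for some a' in the commutant 𝒜' is dense in H; that is, 𝒜Ω ∩ 𝒜'Ω is dense in H. -/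
noncomputable section

variable {H : Type*} [NormedAddCommGroup H] [InnerProductSpace ℂ H] [CompleteSpace H]

/-!
The proof follows Rieffel and van Daele. Let `K` and `K'` be the closed real subspaces generated by
the vectors `h Ω` with `h` self-adjoint in `A`, resp. in `A'`; their mutual position is given by
`Kᗮ = i K'` for the real inner product. For `0 < re l` and a vector `v`, the Lax-Milgram theorem
yields a vector `T v` in `K` with `v - l (T v)` orthogonal to `K`, and similarly `T'` for `K'`. A
Radon-Nikodym theorem of Sakai shows that `T` maps `A' Ω` into `A Ω`, and `T'` maps `A Ω` into
`A' Ω`. For `l = 1 + i` the vector `i (T v - l (T' (T v)))` is the one obtained from `v` with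
`1 - i` in place of `l`, so if `v` lies in `A' Ω`, then `T' (T v)` lies in `A Ω` as well as in
`A' Ω`. The adjoints of `T` and `T'` are obtained by conjugating `l`, and a vector orthogonal to all
these `T' (T v)` vanishes because of the mutual position of `K` and `K'`.
-/

open scoped InnerProductSpace ComplexConjugate ComplexStarModule
open Complex (I)
open ContinuousLinearMap (adjoint adjoint_inner_left adjoint_inner_right)

section BoundedOperators

variable {𝕜 E F V : Type*} [RCLike 𝕜] [NormedAddCommGroup E] [InnerProductSpace 𝕜 E]
  [CompleteSpace E]

theorem adjoint_apply_apply_of_norm_eq [NormedAddCommGroup F] [InnerProductSpace 𝕜 F]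
    [CompleteSpace F] {u : E →L[𝕜] F} (hu : ‖u‖ ≤ 1) {x : E} (hx : ‖u x‖ = ‖x‖) :
    adjoint u (u x) = x := by
  refine eq_of_norm_le_re_inner_eq_norm_sq (𝕜 := 𝕜) ?_ ?_
  · calc ‖adjoint u (u x)‖ ≤ 1 * ‖u x‖ := (adjoint u).le_of_opNorm_le (by simpa using hu) _
      _ = ‖x‖ := by rw [one_mul, hx]
  · rw [adjoint_inner_left, inner_self_eq_norm_sq, hx]

theorem clm_ext_of_eqOn_orthogonal [NormedAddCommGroup F] [NormedSpace 𝕜 F] {u v : E →L[𝕜] F}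
    {M : Submodule 𝕜 E} (hM : ∀ x ∈ M, u x = v x) (hM' : ∀ x ∈ Mᗮ, u x = v x) : u = v := by
  set L : Submodule 𝕜 E := LinearMap.ker (u - v).toLinearMap with hL
  have mem_L (x : E) : x ∈ L ↔ u x = v x := by simp [hL, sub_eq_zero]
  have : CompleteSpace L := (u - v).isClosed_ker.completeSpace_coe
  have hLL : Lᗮ ≤ L := fun x hx =>
    (mem_L x).2 (hM' x (Submodule.orthogonal_le (fun y hy => (mem_L y).2 (hM y hy)) hx))
  have hbot : Lᗮ = ⊥ := by
    rw [eq_bot_iff, ← L.inf_orthogonal_eq_bot]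
    exact le_inf hLL le_rfl
  ext x
  exact (mem_L x).1 (by simp [Submodule.orthogonal_eq_bot_iff.1 hbot])

theorem exists_clm_apply_eq_of_norm_le [AddCommGroup V] [Module 𝕜 V] [NormedAddCommGroup F]
    [NormedSpace 𝕜 F] [CompleteSpace F] {e : V →ₗ[𝕜] E} {f : V →ₗ[𝕜] F} {C : ℝ} (hC : 0 ≤ C)
    (hef : ∀ x, ‖f x‖ ≤ C * ‖e x‖) :
    ∃ u : E →L[𝕜] F, ‖u‖ ≤ C ∧ (∀ x, u (e x) = f x) ∧ ∀ y ∈ (LinearMap.range e)ᗮ, u y = 0 := by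
  let M : Submodule 𝕜 E := (LinearMap.range e).topologicalClosure
  have : CompleteSpace M := (Submodule.isClosed_topologicalClosure _).completeSpace_coe
  let e' : V →ₗ[𝕜] M := e.codRestrict M fun x =>
    Submodule.le_topologicalClosure _ (LinearMap.mem_range_self e x)
  have he' : DenseRange e' := by
    rw [DenseRange, Subtype.dense_iff, ← Set.range_comp]
    exact subset_rfl
  have hef' : ∀ x, ‖f x‖ ≤ C * ‖e' x‖ := hef
  refine ⟨f.extendOfNorm e' ∘L M.orthogonalProjectionOnto, ?_, fun x => ?_, fun y hy => ?_⟩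
  · calc ‖f.extendOfNorm e' ∘L M.orthogonalProjectionOnto‖
        ≤ ‖f.extendOfNorm e'‖ * ‖M.orthogonalProjectionOnto‖ :=
          ContinuousLinearMap.opNorm_comp_le _ _
      _ ≤ C * 1 := by
        gcongr
        exacts [LinearMap.opNorm_extendOfNorm_le he' hC hef', M.orthogonalProjectionOnto_norm_le]
      _ = C := mul_one C
  · rw [ContinuousLinearMap.comp_apply, ← LinearMap.extendOfNorm_eq he' ⟨C, hef'⟩ x]
    exact congrArg _ (M.orthogonalProjectionOnto_mem_subspace_eq_self (e' x))
  · have hyM : y ∈ Mᗮ := by rwa [Submodule.orthogonal_closure]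
    rw [ContinuousLinearMap.comp_apply, Submodule.orthogonalProjectionOnto_eq_zero_iff.2 hyM,
      map_zero]

end BoundedOperators

section DampedSign

/-- The map `t ↦ t / (|t| + ε)`, for `0 < ε` a continuous substitute for the sign function: its
values lie in `[-1, 1]`, and `t * dampedSign ε t` is within `ε` of `|t|`. -/
def dampedSign (ε t : ℝ) : ℝ := t / (|t| + ε)

variable {ε : ℝ}

theorem continuous_dampedSign (hε : 0 < ε) : Continuous (dampedSign ε) := by
  have hpos (t : ℝ) : 0 < |t| + ε := by positivity
  unfold dampedSign
  fun_prop (disch := exact fun t => (hpos t).ne')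

theorem abs_dampedSign_le_one (hε : 0 < ε) (t : ℝ) : |dampedSign ε t| ≤ 1 := by
  have hpos : 0 < |t| + ε := by positivity
  rw [dampedSign, abs_div, abs_of_pos hpos, div_le_one hpos]
  exact le_add_of_nonneg_right hε.le

theorem abs_le_mul_dampedSign_add (hε : 0 < ε) (t : ℝ) : |t| ≤ t * dampedSign ε t + ε := by
  have hpos : 0 < |t| + ε := by positivity
  rw [dampedSign, ← mul_div_assoc, ← abs_mul_abs_self, ← sub_le_iff_le_add, le_div_iff₀ hpos]
  nlinarith

variable {B : Type*} [CStarAlgebra B] {a : B}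

theorem norm_cfc_dampedSign_le_one (hε : 0 < ε) (a : B) : ‖cfc (dampedSign ε) a‖ ≤ 1 :=
  norm_cfc_le zero_le_one fun t _ => abs_dampedSign_le_one hε t

theorem mul_cfc_dampedSign_add (hε : 0 < ε) (ha : IsSelfAdjoint a) :
    a * cfc (dampedSign ε) a + algebraMap ℝ B ε = cfc (fun t => t * dampedSign ε t + ε) a := by
  have hcont := continuous_dampedSign hε
  rw [cfc_add_const ε _ a, cfc_mul (fun t => t) (dampedSign ε) a, cfc_id' ℝ a]

variable [PartialOrder B] [StarOrderedRing B]

theorem le_mul_cfc_dampedSign_add (hε : 0 < ε) (ha : IsSelfAdjoint a) :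
    a ≤ a * cfc (dampedSign ε) a + algebraMap ℝ B ε := by
  have hcont := continuous_dampedSign hε
  rw [mul_cfc_dampedSign_add hε ha]
  conv_lhs => rw [← cfc_id ℝ a]
  exact cfc_mono fun t _ => (le_abs_self t).trans (abs_le_mul_dampedSign_add hε t)

theorem neg_le_mul_cfc_dampedSign_add (hε : 0 < ε) (ha : IsSelfAdjoint a) :
    -a ≤ a * cfc (dampedSign ε) a + algebraMap ℝ B ε := by
  have hcont := continuous_dampedSign hε
  rw [mul_cfc_dampedSign_add hε ha, ← cfc_neg_id (R := ℝ) (a := a)]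
  exact cfc_mono fun t _ => (neg_le_abs t).trans (abs_le_mul_dampedSign_add hε t)

end DampedSign

section RealInner

variable {E : Type*} [NormedAddCommGroup E] [InnerProductSpace ℝ E]

theorem mem_of_forall_exists_inner_le_add [CompleteSpace E] {S : Set E} (hconv : Convex ℝ S)
    (hclosed : IsClosed S) {ξ : E}
    (h : ∀ n : E, ∀ δ > 0, ∃ η ∈ S, ⟪n, ξ⟫_ℝ ≤ ⟪n, η⟫_ℝ + δ) : ξ ∈ S := by
  by_contra hξ
  obtain ⟨f, r, hfS, hfξ⟩ := geometric_hahn_banach_closed_point hconv hclosed hξ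
  obtain ⟨η, hη, hle⟩ := h ((InnerProductSpace.toDual ℝ E).symm f) (f ξ - r) (sub_pos.2 hfξ)
  rw [InnerProductSpace.toDual_symm_apply, InnerProductSpace.toDual_symm_apply] at hle
  linarith [hfS η hη]

theorem exists_inner_le_add_of_mem_closure {M S : Set E} (hS : Bornology.IsBounded S) {v : E}
    (h : ∀ x ∈ M, ∀ δ > 0, ∃ s ∈ S, ⟪x, v⟫_ℝ ≤ ⟪x, s⟫_ℝ + δ) {κ : E} (hκ : κ ∈ closure M)
    {δ : ℝ} (hδ : 0 < δ) : ∃ s ∈ S, ⟪κ, v⟫_ℝ ≤ ⟪κ, s⟫_ℝ + δ := by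
  obtain ⟨R, hR0, hR⟩ : ∃ R > 0, ∀ s ∈ S, ‖v - s‖ ≤ R := by
    obtain ⟨R, hR0, hR⟩ := hS.exists_pos_norm_le
    exact ⟨‖v‖ + R, by positivity, fun s hs =>
      (norm_sub_le v s).trans (add_le_add_right (hR s hs) _)⟩
  obtain ⟨x, hx, hxκ⟩ := Metric.mem_closure_iff.1 hκ (δ / (2 * R)) (by positivity)
  obtain ⟨s, hs, hle⟩ := h x hx (δ / 2) (half_pos hδ)
  have hdiff : ⟪κ - x, v - s⟫_ℝ ≤ δ / 2 :=
    calc ⟪κ - x, v - s⟫_ℝ ≤ ‖κ - x‖ * ‖v - s‖ := real_inner_le_norm _ _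
      _ ≤ δ / (2 * R) * R := by
        gcongr
        exacts [(dist_eq_norm κ x ▸ hxκ).le, hR s hs]
      _ = δ / 2 := by field_simp
  refine ⟨s, hs, ?_⟩
  simp only [inner_sub_left, inner_sub_right] at hdiff
  linarith

end RealInner

attribute [local instance] InnerProductSpace.complexToReal

section ComplexInner

variable {E : Type*} [NormedAddCommGroup E] [InnerProductSpace ℂ E]

theorem real_inner_complex_smul_left (c : ℂ) (x y : E) : ⟪c • x, y⟫_ℝ = ⟪x, conj c • y⟫_ℝ := by
  simp only [real_inner_eq_re_inner ℂ, inner_smul_left, inner_smul_right]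

theorem real_inner_complex_smul_self (c : ℂ) (x : E) : ⟪c • x, x⟫_ℝ = c.re * ‖x‖ ^ 2 := by
  rw [real_inner_eq_re_inner ℂ, inner_smul_left, inner_self_eq_norm_sq_to_K,
    ← RCLike.ofReal_pow, RCLike.re_mul_ofReal, RCLike.conj_re]
  rfl

end ComplexInner

section TiltedProjection

variable {E : Type*} [NormedAddCommGroup E] [InnerProductSpace ℂ E]

/-- `ξ` is the projection of `v` to the real subspace `K` tilted by the complex number `l`:
`ξ ∈ K` and `v - l • ξ ⟂ K` for the real inner product. For `l = 1` this is the orthogonal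
projection. -/
structure IsTiltedProjection (K : Submodule ℝ E) (l : ℂ) (v ξ : E) : Prop where
  mem : ξ ∈ K
  sub_mem_orthogonal : v - l • ξ ∈ Kᗮ

namespace IsTiltedProjection

variable {K : Submodule ℝ E} {l : ℂ} {v w ξ η ζ : E}

theorem inner_left_eq (h : IsTiltedProjection K l v ξ) (hζ : ζ ∈ K) : ⟪v, ζ⟫_ℝ = ⟪l • ξ, ζ⟫_ℝ :=
  sub_eq_zero.1 <| by rw [← inner_sub_left, Submodule.inner_left_of_mem_orthogonal hζ h.2]

theorem inner_right_eq (h : IsTiltedProjection K l v ξ) (hζ : ζ ∈ K) : ⟪ζ, v⟫_ℝ = ⟪ζ, l • ξ⟫_ℝ := by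
  rw [real_inner_comm, h.inner_left_eq hζ, real_inner_comm]

theorem mem_orthogonal (h : IsTiltedProjection K l v 0) : v ∈ Kᗮ := by
  simpa using h.sub_mem_orthogonal

theorem inner_adjoint (hv : IsTiltedProjection K l v ξ) (hw : IsTiltedProjection K (conj l) w η) :
    ⟪w, ξ⟫_ℝ = ⟪η, v⟫_ℝ := by
  rw [hw.inner_left_eq hv.mem, hv.inner_right_eq hw.mem, real_inner_complex_smul_left,
    Complex.conj_conj]

end IsTiltedProjection

theorem exists_isTiltedProjection (K : Submodule ℝ E) [CompleteSpace K] {l : ℂ} (hl : 0 < l.re)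
    (v : E) : ∃ ξ, IsTiltedProjection K l v ξ := by
  let B : K →L[ℝ] K →L[ℝ] ℝ :=
    (innerSL ℝ).bilinearComp (ContinuousLinearMap.lsmul ℝ ℂ l ∘L K.subtypeL) K.subtypeL
  have coercive : IsCoercive B := ⟨l.re, hl, fun x => by
    change l.re * ‖(x : E)‖ * ‖(x : E)‖ ≤ ⟪l • (x : E), x⟫_ℝ
    rw [real_inner_complex_smul_self, mul_assoc, sq]⟩
  let T := coercive.continuousLinearEquivOfBilin
  let ξ : K := T.symm (K.orthogonalProjectionOnto v)
  refine ⟨ξ, ξ.2, (Submodule.mem_orthogonal' K _).2 fun ζ hζ => ?_⟩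
  have h : ⟪K.orthogonalProjectionOnto v, (⟨ζ, hζ⟩ : K)⟫_ℝ = ⟪l • (ξ : E), ζ⟫_ℝ := by
    rw [← T.apply_symm_apply (K.orthogonalProjectionOnto v)]
    exact coercive.continuousLinearEquivOfBilin_apply _ _
  rw [inner_sub_left, ← h, Submodule.inner_orthogonalProjectionOnto_eq_of_mem_right, sub_self]

end TiltedProjection

section RealInnerOperators

theorem real_inner_apply_left (u : H →L[ℂ] H) (x y : H) : ⟪u x, y⟫_ℝ = ⟪x, adjoint u y⟫_ℝ := by
  simp only [real_inner_eq_re_inner ℂ, adjoint_inner_right]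

theorem real_inner_apply_smul_apply_of_commute {h k : H →L[ℂ] H} (hh : IsSelfAdjoint h)
    (hk : IsSelfAdjoint k) (hhk : Commute h k) (c : ℂ) (x : H) :
    ⟪h x, c • k x⟫_ℝ = c.re * ⟪h x, k x⟫_ℝ := by
  have hreal : conj ⟪h x, k x⟫_ℂ = ⟪h x, k x⟫_ℂ := by
    have hsymm {a : H →L[ℂ] H} (ha : IsSelfAdjoint a) (x y : H) : ⟪a x, y⟫_ℂ = ⟪x, a y⟫_ℂ :=
      ContinuousLinearMap.isSelfAdjoint_iff_isSymmetric.1 ha x y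
    rw [inner_conj_symm, hsymm hk, hsymm hh]
    exact congrArg (inner ℂ x) (DFunLike.congr_fun hhk.eq.symm x)
  rw [real_inner_eq_re_inner ℂ, inner_smul_right, real_inner_eq_re_inner ℂ,
    ← Complex.conj_eq_iff_re.1 hreal]
  simp

theorem abs_inner_apply_le_of_nonneg {q b : H →L[ℂ] H} (hq : 0 ≤ q) (hqb : Commute q b) (x : H) :
    |⟪q x, b x⟫_ℝ| ≤ ‖b‖ * ⟪q x, x⟫_ℝ := by
  let s := CFC.sqrt q
  have hs : adjoint s = s := (CFC.sqrt_nonneg q).isSelfAdjoint.adjoint_eq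
  have hsb : Commute (CFC.sqrt q) b := CFC.sqrt_eq_cfc (a := q) ▸ hqb.cfc_nnreal NNReal.sqrt
  have hsbx : s (b x) = b (s x) := DFunLike.congr_fun hsb x
  have hss (y : H) : ⟪q x, y⟫_ℝ = ⟪s x, s y⟫_ℝ := by
    conv_lhs => rw [← CFC.sqrt_mul_sqrt_self q hq]
    change ⟪s (s x), y⟫_ℝ = _
    rw [real_inner_apply_left, hs]
  calc |⟪q x, b x⟫_ℝ| = |⟪s x, b (s x)⟫_ℝ| := by rw [hss, hsbx]
    _ ≤ ‖s x‖ * (‖b‖ * ‖s x‖) := (abs_real_inner_le_norm _ _).trans (by gcongr; exact b.le_opNorm _)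
    _ = ‖b‖ * ⟪q x, x⟫_ℝ := by rw [hss, real_inner_self_eq_norm_sq]; ring

theorem inner_apply_le_of_neg_le_of_le {a p b : H →L[ℂ] H} (hle : a ≤ p) (hneg : -a ≤ p)
    (hab : Commute a b) (hpb : Commute p b) (x : H) : ⟪a x, b x⟫_ℝ ≤ ‖b‖ * ⟪p x, x⟫_ℝ := by
  have hadd := le_of_abs_le <|
    abs_inner_apply_le_of_nonneg (neg_le_iff_add_nonneg.1 hneg) (hpb.add_left hab) x
  have hsub := neg_le_of_abs_le <|
    abs_inner_apply_le_of_nonneg (sub_nonneg.2 hle) (hpb.sub_left hab) x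
  simp only [add_apply, sub_apply, inner_add_left, inner_sub_left, mul_add, mul_sub] at hadd hsub
  linarith

end RealInnerOperators

section Orbits

variable {A : VonNeumannAlgebra H} {a b u : H →L[ℂ] H} {ξ η Ω : H}

instance : SMulMemClass (VonNeumannAlgebra H) ℂ (H →L[ℂ] H) where
  smul_mem {A} c _ ha := A.toStarSubalgebra.smul_mem ha c

instance (A : VonNeumannAlgebra H) : IsClosed (A : Set (H →L[ℂ] H)) := by
  rw [← A.centralizer_centralizer]
  exact Set.isClosed_centralizer _

theorem real_smul_mem (c : ℝ) (ha : a ∈ A) : c • a ∈ A :=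
  SMulMemClass.smul_mem (c : ℂ) ha

theorem commute_of_mem_commutant (ha : a ∈ A) (hb : b ∈ A.commutant) : Commute a b :=
  VonNeumannAlgebra.mem_commutant_iff.1 hb a ha

theorem apply_apply_comm (ha : a ∈ A) (hb : b ∈ A.commutant) (x : H) : a (b x) = b (a x) :=
  DFunLike.congr_fun (commute_of_mem_commutant ha hb) x

theorem mem_of_forall_commute_commutant (h : ∀ b ∈ A.commutant, Commute b u) : u ∈ A := by
  rw [← A.commutant_commutant, VonNeumannAlgebra.mem_commutant_iff]
  exact h

theorem IsCyclicVector.eq_zero_of_apply_eq_zero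
    (hΩ : IsCyclicVector (A.commutant : Set (H →L[ℂ] H)) Ω) (ha : a ∈ A) (h : a Ω = 0) : a = 0 := by
  refine ContinuousLinearMap.coeFn_injective (Continuous.ext_on hΩ a.continuous continuous_const ?_)
  rintro _ ⟨b, hb, rfl⟩
  simp [apply_apply_comm ha hb, h]

/-- The linear map `a ↦ a ξ` on the von Neumann algebra `A`. -/
def evalAt (A : VonNeumannAlgebra H) (ξ : H) : A →ₗ[ℂ] H :=
  (ContinuousLinearMap.apply ℂ H ξ).toLinearMap ∘ₗ SMulMemClass.subtype A

/-- The subspace `A ξ = {a ξ : a ∈ A}`. -/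
def orbit (A : VonNeumannAlgebra H) (ξ : H) : Submodule ℂ H :=
  LinearMap.range (evalAt A ξ)

theorem mem_orbit {x : H} : x ∈ orbit A ξ ↔ ∃ a ∈ A, a ξ = x := by
  constructor
  · rintro ⟨⟨a, ha⟩, rfl⟩
    exact ⟨a, ha, rfl⟩
  · rintro ⟨a, ha, rfl⟩
    exact ⟨⟨a, ha⟩, rfl⟩

theorem exists_mem_norm_le_apply_eq_iff {c : ℝ} (hc : 0 ≤ c) :
    (∃ u ∈ A, ‖u‖ ≤ c ∧ u ξ = η) ↔ ∀ b ∈ A.commutant, ‖b η‖ ≤ c * ‖b ξ‖ := by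
  constructor
  · rintro ⟨u, hu, huc, rfl⟩ b hb
    rw [← apply_apply_comm hu hb]
    exact u.le_of_opNorm_le huc _
  · intro h
    obtain ⟨u, huc, hu, hu0⟩ := exists_clm_apply_eq_of_norm_le (e := evalAt A.commutant ξ)
      (f := evalAt A.commutant η) hc fun b => h b b.2
    replace hu : ∀ b ∈ A.commutant, u (b ξ) = b η := fun b hb => hu ⟨b, hb⟩
    refine ⟨u, mem_of_forall_commute_commutant fun b hb => ?_, huc, by simpa using hu 1 (one_mem _)⟩
    refine clm_ext_of_eqOn_orthogonal (M := orbit A.commutant ξ) ?_ fun y hy => ?_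
    · rintro _ ⟨⟨d, hd⟩, rfl⟩
      change b (u (d ξ)) = u ((b * d) ξ)
      rw [hu d hd, hu _ (mul_mem hb hd)]
      rfl
    · have hby : b y ∈ (orbit A.commutant ξ)ᗮ := by
        rintro _ ⟨⟨d, hd⟩, rfl⟩
        change ⟪d ξ, b y⟫_ℂ = 0
        rw [← adjoint_inner_left]
        exact hy _ ⟨⟨star b * d, mul_mem (star_mem hb) hd⟩, rfl⟩
      simp [hu0 y hy, hu0 _ hby]

theorem convex_setOf_exists_mem_norm_le (A : VonNeumannAlgebra H) (ξ : H) (c : ℝ) :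
    Convex ℝ {η : H | ∃ u ∈ A, ‖u‖ ≤ c ∧ u ξ = η} := by
  rintro _ ⟨u, hu, huc, rfl⟩ _ ⟨v, hv, hvc, rfl⟩ s t hs ht hst
  refine ⟨s • u + t • v, add_mem (real_smul_mem s hu) (real_smul_mem t hv), ?_, rfl⟩
  exact mem_closedBall_zero_iff.1 <| convex_closedBall (0 : H →L[ℂ] H) c
    (mem_closedBall_zero_iff.2 huc) (mem_closedBall_zero_iff.2 hvc) hs ht hst

theorem isClosed_setOf_exists_mem_norm_le (A : VonNeumannAlgebra H) (ξ : H) {c : ℝ} (hc : 0 ≤ c) :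
    IsClosed {η : H | ∃ u ∈ A, ‖u‖ ≤ c ∧ u ξ = η} := by
  simp only [exists_mem_norm_le_apply_eq_iff hc, Set.ofPred_forall]
  exact isClosed_biInter fun b _ => isClosed_le (by fun_prop) continuous_const

end Orbits

section RealSubspaces

variable {A : VonNeumannAlgebra H} {Ω : H}

/-- The real subspace `{h Ω : h = h* ∈ A}`. -/
def selfAdjointOrbit (A : VonNeumannAlgebra H) (Ω : H) : Submodule ℝ H where
  carrier := {x | ∃ h ∈ A, IsSelfAdjoint h ∧ h Ω = x}
  zero_mem' := ⟨0, zero_mem A, .zero _, rfl⟩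
  add_mem' := by
    rintro _ _ ⟨h, hA, hsa, rfl⟩ ⟨k, kA, ksa, rfl⟩
    exact ⟨h + k, add_mem hA kA, hsa.add ksa, rfl⟩
  smul_mem' := by
    rintro c _ ⟨h, hA, hsa, rfl⟩
    exact ⟨c • h, real_smul_mem c hA, .smul (.all c) hsa, rfl⟩

/-- The closed real subspace `K` of Rieffel and van Daele, the closure of `{h Ω : h = h* ∈ A}`. -/
def standardSubspace (A : VonNeumannAlgebra H) (Ω : H) : Submodule ℝ H :=
  (selfAdjointOrbit A Ω).topologicalClosure

instance : CompleteSpace (standardSubspace A Ω) :=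
  (Submodule.isClosed_topologicalClosure _).completeSpace_coe

theorem selfAdjointOrbit_le_standardSubspace : selfAdjointOrbit A Ω ≤ standardSubspace A Ω :=
  Submodule.le_topologicalClosure _

theorem orthogonal_standardSubspace : (standardSubspace A Ω)ᗮ = (selfAdjointOrbit A Ω)ᗮ :=
  Submodule.orthogonal_closure _

theorem I_smul_mem_orthogonal_commutant {x : H} (hx : x ∈ standardSubspace A Ω) :
    I • x ∈ (standardSubspace A.commutant Ω)ᗮ := by
  have I_smul_mem : ∀ k ∈ selfAdjointOrbit A.commutant Ω, I • k ∈ (standardSubspace A Ω)ᗮ := by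
    rw [orthogonal_standardSubspace]
    rintro _ ⟨k, hk, hksa, rfl⟩ _ ⟨h, hh, hhsa, rfl⟩
    have hhk : Commute h k := commute_of_mem_commutant hh hk
    simp [real_inner_apply_smul_apply_of_commute hhsa hksa hhk]
  rw [orthogonal_standardSubspace]
  intro k hk
  have hIk := Submodule.inner_left_of_mem_orthogonal hx (I_smul_mem k hk)
  rw [real_inner_complex_smul_left] at hIk
  simpa using hIk

theorem exists_apply_eq_add_I_smul {a : H →L[ℂ] H} (ha : a ∈ A) (Ω : H) :
    ∃ x ∈ selfAdjointOrbit A Ω, ∃ y ∈ selfAdjointOrbit A Ω, a Ω = x + I • y := by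
  have hre : (ℜ a : H →L[ℂ] H) ∈ A := by
    rw [realPart_apply_coe]
    exact real_smul_mem _ (add_mem ha (star_mem ha))
  have him : (ℑ a : H →L[ℂ] H) ∈ A := by
    rw [imaginaryPart_apply_coe]
    exact SMulMemClass.smul_mem _ (real_smul_mem _ (sub_mem ha (star_mem ha)))
  refine ⟨_, ⟨_, hre, (ℜ a).2, rfl⟩, _, ⟨_, him, (ℑ a).2, rfl⟩, ?_⟩
  conv_lhs => rw [← realPart_add_I_smul_imaginaryPart a]
  rfl

theorem IsCyclicVector.eq_zero_of_mem_orthogonal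
    (hΩ : IsCyclicVector (A : Set (H →L[ℂ] H)) Ω) {v : H}
    (hv : v ∈ (standardSubspace A Ω)ᗮ) (hIv : I • v ∈ (standardSubspace A Ω)ᗮ) : v = 0 := by
  rw [orthogonal_standardSubspace] at hv hIv
  refine Dense.eq_zero_of_inner_left ℝ hΩ ?_
  rintro _ ⟨a, ha, rfl⟩
  obtain ⟨x, hx, y, hy, h⟩ := exists_apply_eq_add_I_smul ha Ω
  have hvy := Submodule.inner_left_of_mem_orthogonal hy hIv
  rw [real_inner_complex_smul_left] at hvy
  rw [h, inner_add_right, Submodule.inner_left_of_mem_orthogonal hx hv]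
  simpa using hvy

theorem apply_eq_self_of_apply_add_eq_sub {θ : H} (hθ : θ ∈ (selfAdjointOrbit A Ω)ᗮ)
    {u : H →L[ℂ] H} (huA : u ∈ A) (hu1 : ‖u‖ ≤ 1) (hu : u (θ + I • Ω) = θ - I • Ω)
    (hu' : adjoint u (θ - I • Ω) = θ + I • Ω) : u θ = θ := by
  let X : H →L[ℂ] H := I • (u - star u)
  have hX : X Ω = (θ - u θ) + (θ - adjoint u θ) := by
    change I • (u Ω - adjoint u Ω) = _
    simp only [map_add, map_sub, map_smul] at hu hu'
    rw [smul_sub]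
    linear_combination (norm := module) hu + hu'
  have hXΩ : X Ω ∈ selfAdjointOrbit A Ω :=
    ⟨X, SMulMemClass.smul_mem _ (sub_mem huA (star_mem huA)),
      by simp [X, isSelfAdjoint_iff, ← smul_neg], rfl⟩
  have h0 : ⟪X Ω, θ⟫_ℝ = 0 := Submodule.inner_right_of_mem_orthogonal hXΩ hθ
  rw [hX, inner_add_left, inner_sub_left, inner_sub_left, real_inner_self_eq_norm_sq,
    real_inner_apply_left (adjoint u), ContinuousLinearMap.adjoint_adjoint,
    real_inner_comm (u θ)] at h0
  refine eq_of_norm_le_re_inner_eq_norm_sq (𝕜 := ℝ) ?_ ?_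
  · simpa using u.le_of_opNorm_le hu1 θ
  · change ⟪u θ, θ⟫_ℝ = _
    linarith

theorem norm_apply_sub_I_smul_eq_norm_apply_add_I_smul {θ : H}
    (hθ : I • θ ∈ (selfAdjointOrbit A.commutant Ω)ᗮ) {b : H →L[ℂ] H} (hb : b ∈ A.commutant) :
    ‖b (θ - I • Ω)‖ = ‖b (θ + I • Ω)‖ := by
  have hbb : (star b * b) Ω ∈ selfAdjointOrbit A.commutant Ω :=
    ⟨_, mul_mem (star_mem hb) hb, .star_mul_self b, rfl⟩
  have h : ⟪I • θ, adjoint b (b Ω)⟫_ℝ = 0 := Submodule.inner_left_of_mem_orthogonal hbb hθ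
  rw [← real_inner_apply_left, map_smul, real_inner_complex_smul_left, Complex.conj_I, neg_smul,
    inner_neg_right, neg_eq_zero] at h
  rw [map_sub, map_add, map_smul]
  exact norm_sub_eq_norm_add (by rwa [real_inner_comm])

-- By hypothesis `‖b (θ + i Ω)‖ = ‖b (θ - i Ω)‖` for all `b` in the commutant, so a contraction `u`
-- of `A` maps `θ + i Ω` to `θ - i Ω`. It fixes `θ`, hence sends `Ω` to `-Ω` and must be `-1`.
theorem IsCyclicVector.eq_zero_of_mem_orthogonal_of_I_smul_mem
    (hΩ : IsCyclicVector (A.commutant : Set (H →L[ℂ] H)) Ω) {θ : H}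
    (hθ : θ ∈ (standardSubspace A Ω)ᗮ)
    (hIθ : I • θ ∈ (standardSubspace A.commutant Ω)ᗮ) : θ = 0 := by
  rw [orthogonal_standardSubspace] at hθ hIθ
  have norm_eq {b : H →L[ℂ] H} (hb : b ∈ A.commutant) : ‖b (θ - I • Ω)‖ = ‖b (θ + I • Ω)‖ :=
    norm_apply_sub_I_smul_eq_norm_apply_add_I_smul hIθ hb
  obtain ⟨u, huA, hu1, hu⟩ := (exists_mem_norm_le_apply_eq_iff zero_le_one).2
    fun b hb => (norm_eq hb).le.trans_eq (one_mul _).symm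
  have hu' : adjoint u (θ - I • Ω) = θ + I • Ω := by
    rw [← hu]
    exact adjoint_apply_apply_of_norm_eq hu1 (by rw [hu]; exact norm_eq (one_mem _))
  have huθ : u θ = θ := apply_eq_self_of_apply_add_eq_sub hθ huA hu1 hu hu'
  have huΩ : (u + 1) Ω = 0 := by
    rw [map_add, huθ, map_smul, sub_eq_add_neg, ← smul_neg] at hu
    have huΩ' : u Ω = -Ω := smul_right_injective H Complex.I_ne_zero (add_left_cancel hu)
    simpa [add_eq_zero_iff_eq_neg] using huΩ'
  have hu_neg : u = -1 := eq_neg_of_add_eq_zero_left <|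
    hΩ.eq_zero_of_apply_eq_zero (add_mem huA (one_mem A)) huΩ
  have hneg : -θ = θ := by simpa [hu_neg] using huθ
  linear_combination (norm := module) (-(1 / 2) : ℂ) • hneg

theorem I_smul_mem_standardSubspace (hΩ : IsCyclicVector (A.commutant : Set (H →L[ℂ] H)) Ω) {ζ : H}
    (hζ : ζ ∈ (standardSubspace A.commutant Ω)ᗮ) : I • ζ ∈ standardSubspace A Ω := by
  let K := standardSubspace A Ω
  let θ : H := I • ζ - K.starProjection (I • ζ)
  have hIθ : I • θ ∈ (standardSubspace A.commutant Ω)ᗮ := by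
    rw [smul_sub, smul_smul, Complex.I_mul_I, neg_one_smul]
    exact sub_mem (neg_mem hζ) (I_smul_mem_orthogonal_commutant (K.starProjection_apply_mem _))
  have hθ : θ = 0 := hΩ.eq_zero_of_mem_orthogonal_of_I_smul_mem
    (K.sub_starProjection_mem_orthogonal _) hIθ
  rw [sub_eq_zero.1 hθ]
  exact K.starProjection_apply_mem _

theorem eq_zero_of_mem_commutant_of_mem_orthogonal
    (hΩ : IsCyclicVector (A : Set (H →L[ℂ] H)) Ω) {κ : H}
    (hκ : κ ∈ standardSubspace A.commutant Ω) (hκ' : κ ∈ (standardSubspace A Ω)ᗮ) : κ = 0 :=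
  hΩ.eq_zero_of_mem_orthogonal hκ' <| by simpa using I_smul_mem_orthogonal_commutant hκ

end RealSubspaces

section RadonNikodym

variable {A : VonNeumannAlgebra H} {Ω : H}

-- For `h` close to the sign of `a`, `⟪a x, b x⟫ ≤ ‖b‖ * ⟪|a| x, x⟫` is close to `‖b‖ * ⟪a x, h x⟫`.
theorem exists_selfAdjoint_inner_le_add {a b : H →L[ℂ] H} (ha : a ∈ A) (hasa : IsSelfAdjoint a)
    (hb : b ∈ A.commutant) (x : H) {δ : ℝ} (hδ : 0 < δ) :
    ∃ h ∈ A, IsSelfAdjoint h ∧ Commute a h ∧ ‖h‖ ≤ 1 ∧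
      ⟪a x, b x⟫_ℝ ≤ ‖b‖ * ⟪a x, h x⟫_ℝ + δ := by
  let ε := δ / (‖b‖ * ‖x‖ ^ 2 + 1)
  have hε : ‖b‖ * (ε * ‖x‖ ^ 2) ≤ δ :=
    calc ‖b‖ * (ε * ‖x‖ ^ 2) = ε * (‖b‖ * ‖x‖ ^ 2) := by ring
      _ ≤ ε * (‖b‖ * ‖x‖ ^ 2 + 1) := by gcongr; exact le_add_of_nonneg_right zero_le_one
      _ = δ := div_mul_cancel₀ δ (by positivity)
  have hε0 : 0 < ε := by positivity
  let h := cfc (dampedSign ε) a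
  have hA : h ∈ A := cfc_mem (𝕜' := ℂ) _ ha
  have hpb : Commute (a * h + algebraMap ℝ (H →L[ℂ] H) ε) b :=
    (commute_of_mem_commutant (mul_mem ha hA) hb).add_left (Algebra.commute_algebraMap_left _ _)
  refine ⟨h, hA, cfc_predicate _ a, ((Commute.refl a).cfc_real _).symm,
    norm_cfc_dampedSign_le_one hε0 a, ?_⟩
  have hbound := inner_apply_le_of_neg_le_of_le (le_mul_cfc_dampedSign_add hε0 hasa)
    (neg_le_mul_cfc_dampedSign_add hε0 hasa) (commute_of_mem_commutant ha hb) hpb x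
  have happly : (a * h + algebraMap ℝ (H →L[ℂ] H) ε) x = a (h x) + ε • x := rfl
  rw [happly, inner_add_left, real_inner_apply_left a (h x), hasa.adjoint_eq,
    real_inner_comm (a x), real_inner_smul_left, real_inner_self_eq_norm_sq] at hbound
  linarith

theorem exists_selfAdjoint_inner_smul_le_add {l : ℂ} (hl : 0 < l.re) {b : H →L[ℂ] H}
    (hb : b ∈ A.commutant) {κ : H} (hκ : κ ∈ standardSubspace A Ω) {δ : ℝ} (hδ : 0 < δ) :
    ∃ h ∈ A, IsSelfAdjoint h ∧ ‖h‖ ≤ ‖b‖ / l.re ∧ ⟪κ, b Ω⟫_ℝ ≤ ⟪κ, l • h Ω⟫_ℝ + δ := by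
  let c : ℝ := ‖b‖ / l.re
  let S : Set H := {s | ∃ h ∈ A, IsSelfAdjoint h ∧ ‖h‖ ≤ c ∧ l • h Ω = s}
  have hS : Bornology.IsBounded S := by
    refine isBounded_iff_forall_norm_le.2 ⟨‖l‖ * (c * ‖Ω‖), ?_⟩
    rintro _ ⟨h, -, -, hc, rfl⟩
    rw [norm_smul]
    gcongr
    exact h.le_of_opNorm_le hc Ω
  have horbit : ∀ x ∈ selfAdjointOrbit A Ω, ∀ δ > 0, ∃ s ∈ S, ⟪x, b Ω⟫_ℝ ≤ ⟪x, s⟫_ℝ + δ := by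
    rintro _ ⟨a, ha, hasa, rfl⟩ δ hδ
    obtain ⟨h, hA, hsa, hah, h1, hle⟩ := exists_selfAdjoint_inner_le_add ha hasa hb Ω hδ
    refine ⟨_, ⟨c • h, real_smul_mem c hA, .smul (.all c) hsa, ?_, rfl⟩, ?_⟩
    · calc ‖c • h‖ = c * ‖h‖ := by rw [norm_smul, Real.norm_of_nonneg (by positivity)]
        _ ≤ c := mul_le_of_le_one_right (by positivity) h1
    · have hlc : (l * c).re = ‖b‖ := by
        rw [Complex.re_mul_ofReal, mul_div_cancel₀ _ hl.ne']
      rwa [← Complex.coe_smul c h, smul_apply, smul_smul,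
        real_inner_apply_smul_apply_of_commute hasa hsa hah, hlc]
  obtain ⟨_, ⟨h, hA, hsa, hc, rfl⟩, hle⟩ := exists_inner_le_add_of_mem_closure hS horbit hκ hδ
  exact ⟨h, hA, hsa, hc, hle⟩

-- Sakai's Radon-Nikodym theorem: a Hahn-Banach separation of `ξ` from the closed convex set of all
-- `u Ω` with `‖u‖ ≤ ‖b‖ / l.re` would contradict the preceding inequality.
theorem IsTiltedProjection.exists_mem_apply_eq {l : ℂ} (hl : 0 < l.re) {b : H →L[ℂ] H}
    (hb : b ∈ A.commutant) {ξ : H} (hξ : IsTiltedProjection (standardSubspace A Ω) l (b Ω) ξ) :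
    ∃ u ∈ A, ‖u‖ ≤ ‖b‖ / l.re ∧ u Ω = ξ := by
  refine mem_of_forall_exists_inner_le_add (convex_setOf_exists_mem_norm_le A Ω _)
    (isClosed_setOf_exists_mem_norm_le A Ω (by positivity)) fun n δ hδ => ?_
  obtain ⟨κ, hκ⟩ := exists_isTiltedProjection (standardSubspace A Ω) (l := conj l) hl n
  obtain ⟨h, hA, hsa, hc, hle⟩ := exists_selfAdjoint_inner_smul_le_add hl hb hκ.mem hδ
  have hhK : h Ω ∈ standardSubspace A Ω :=
    selfAdjointOrbit_le_standardSubspace ⟨h, hA, hsa, rfl⟩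
  refine ⟨h Ω, ⟨h, hA, hc, rfl⟩, ?_⟩
  rwa [hξ.inner_adjoint hκ, hκ.inner_left_eq hhK, real_inner_complex_smul_left, Complex.conj_conj]

end RadonNikodym

section Density

variable {A : VonNeumannAlgebra H} {Ω : H}

theorem IsTiltedProjection.I_smul_sub (hΩ : IsCyclicVector (A.commutant : Set (H →L[ℂ] H)) Ω)
    {α ξ β : H} (hξ : IsTiltedProjection (standardSubspace A Ω) (1 + I) α ξ)
    (hβ : IsTiltedProjection (standardSubspace A.commutant Ω) (1 + I) ξ β) :
    IsTiltedProjection (standardSubspace A Ω) (1 - I) α (I • (ξ - (1 + I) • β)) := by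
  refine ⟨I_smul_mem_standardSubspace hΩ hβ.sub_mem_orthogonal, ?_⟩
  have hIβ : I • β ∈ (standardSubspace A Ω)ᗮ := by
    simpa using I_smul_mem_orthogonal_commutant hβ.mem
  have hmul : (1 - I) * I = 1 + I := by
    linear_combination -Complex.I_mul_I
  have hsq : (1 + I) * (1 + I) = 2 * I := by
    linear_combination Complex.I_mul_I
  have hsplit : α - (1 - I) • I • (ξ - (1 + I) • β) =
      (α - (1 + I) • ξ) + (I • β + I • β) := by
    rw [smul_smul, hmul, smul_sub, smul_smul, hsq]
    module
  rw [hsplit]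
  exact add_mem hξ.sub_mem_orthogonal (add_mem hIβ hIβ)

theorem IsTiltedProjection.mem_orbit_inf_orbit_commutant
    (hΩ : IsCyclicVector (A.commutant : Set (H →L[ℂ] H)) Ω)
    {b : H →L[ℂ] H} (hb : b ∈ A.commutant) {ξ β : H}
    (hξ : IsTiltedProjection (standardSubspace A Ω) (1 + I) (b Ω) ξ)
    (hβ : IsTiltedProjection (standardSubspace A.commutant Ω) (1 + I) ξ β) :
    β ∈ orbit A Ω ⊓ orbit A.commutant Ω := by
  obtain ⟨u, hu, -, rfl⟩ := hξ.exists_mem_apply_eq (by simp) hb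
  obtain ⟨v, hv, -, hvη⟩ := (hξ.I_smul_sub hΩ hβ).exists_mem_apply_eq (by simp) hb
  obtain ⟨w, hw, -, rfl⟩ := hβ.exists_mem_apply_eq (by simp) (A.commutant_commutant.symm ▸ hu)
  refine ⟨mem_orbit.2 ⟨(1 + I)⁻¹ • (u + I • v), ?_, ?_⟩, mem_orbit.2 ⟨w, hw, rfl⟩⟩
  · exact SMulMemClass.smul_mem _ (add_mem hu (SMulMemClass.smul_mem _ hv))
  · have hl : (1 + I) ≠ 0 := fun h => by simpa using congrArg Complex.re h
    rw [smul_apply, inv_smul_eq_iff₀ hl, add_apply, smul_apply, hvη, smul_smul,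
      Complex.I_mul_I]
    module

theorem mem_orthogonal_of_mem_orthogonal_orbit_inf_orbit
    (hcyc : IsCyclicVector (A : Set (H →L[ℂ] H)) Ω)
    (hsep : IsCyclicVector (A.commutant : Set (H →L[ℂ] H)) Ω) {θ : H}
    (hθ : θ ∈ (orbit A Ω ⊓ orbit A.commutant Ω)ᗮ) :
    θ ∈ (standardSubspace A.commutant Ω)ᗮ := by
  let K := standardSubspace A Ω
  let K' := standardSubspace A.commutant Ω
  have hl : 0 < (1 + I).re := by simp
  obtain ⟨κ, hκ⟩ := exists_isTiltedProjection K' (l := conj (1 + I)) (by simp) θ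
  obtain ⟨τ, hτ⟩ := exists_isTiltedProjection K (l := conj (1 + I)) (by simp) κ
  have hτ0 : τ = 0 := by
    refine Dense.eq_zero_of_inner_left ℝ hsep ?_
    rintro _ ⟨b, hb, rfl⟩
    obtain ⟨ξ, hξ⟩ := exists_isTiltedProjection K hl (b Ω)
    obtain ⟨β, hβ⟩ := exists_isTiltedProjection K' hl ξ
    rw [← hξ.inner_adjoint hτ, ← hβ.inner_adjoint hκ]
    have hβD := IsTiltedProjection.mem_orbit_inf_orbit_commutant hsep hb hξ hβ
    rw [real_inner_eq_re_inner ℂ, Submodule.inner_left_of_mem_orthogonal hβD hθ, map_zero]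
  have hκ0 : κ = 0 :=
    eq_zero_of_mem_commutant_of_mem_orthogonal hcyc hκ.mem (hτ0 ▸ hτ).mem_orthogonal
  exact (hκ0 ▸ hκ).mem_orthogonal

end Density

/-- If `Ω` is cyclic and separating for the von Neumann algebra `A`, then the set of
vectors lying simultaneously in `A Ω` and in `A' Ω` is dense in `H`. -/
theorem dense_inter_of_cyclic_separating
    (A : VonNeumannAlgebra H) (Ω : H)
    (hcyc : IsCyclicVector (A : Set (H →L[ℂ] H)) Ω)
    (hsep : IsCyclicVector (A.commutant : Set (H →L[ℂ] H)) Ω) :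
    Dense ({x : H | ∃ a ∈ A, a Ω = x} ∩ {x : H | ∃ a' ∈ A.commutant, a' Ω = x}) := by
  let D : Submodule ℂ H := orbit A Ω ⊓ orbit A.commutant Ω
  have hD : (D : Set H) =
      {x : H | ∃ a ∈ A, a Ω = x} ∩ {x : H | ∃ a' ∈ A.commutant, a' Ω = x} := by
    ext x
    simp [D, mem_orbit]
  rw [← hD, Submodule.dense_iff_topologicalClosure_eq_top,
    Submodule.topologicalClosure_eq_top_iff, eq_bot_iff]
  intro θ hθ
  have hDK {φ : H} (hφ : φ ∈ Dᗮ) : φ ∈ (standardSubspace A.commutant Ω)ᗮ :=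
    mem_orthogonal_of_mem_orthogonal_orbit_inf_orbit hcyc hsep hφ
  exact hsep.eq_zero_of_mem_orthogonal (hDK hθ) (hDK (Dᗮ.smul_mem I hθ))
end
end

section
/- Let H be a complex Hilbert space, 𝒜 a von Neumann algebra on H, and Ω ∈ H a vector that is cyclic and separating for 𝒜. If (a_n) is a sequence of elements of 𝒜 such that a_n Ω → 0 in H and the sequence of vectors a_n* Ω converges to some ψ ∈ H, then ψ = 0. (Equivalently: the conjugate-linear operator S₀ defined on the dense domain 𝒜Ω by S₀(a Ω) = a* Ω is closable.) -/
noncomputable section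

variable {H : Type*} [NormedAddCommGroup H] [InnerProductSpace ℂ H] [CompleteSpace H]

/-!
An operator `b` commuting with every `a i` satisfies `⟪b x, (a i)† y⟫ = ⟪a i x, b† y⟫`, and this
identity passes to limits. Hence, if `a i x → 0`, every limit of `(a i)† y` is orthogonal to all
the vectors `b x`, which are dense when `x` is cyclic for the commutant.
-/

section

open Filter Topology

open scoped InnerProduct InnerProductSpace

variable {𝕜 E ι : Type*} [RCLike 𝕜] [NormedAddCommGroup E] [InnerProductSpace 𝕜 E]
  [CompleteSpace E] {x y φ ψ : E}

theorem inner_apply_adjoint_apply_of_commute {a b : E →L[𝕜] E} (hab : Commute a b) (x y : E) :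
    ⟪b x, (a†) y⟫_𝕜 = ⟪a x, (b†) y⟫_𝕜 := by
  have hx : a (b x) = b (a x) := DFunLike.congr_fun hab.eq x
  rw [ContinuousLinearMap.adjoint_inner_right, ContinuousLinearMap.adjoint_inner_right, hx]

theorem inner_apply_eq_of_tendsto_of_tendsto_adjoint {l : Filter ι} [l.NeBot]
    {a : ι → E →L[𝕜] E} {b : E →L[𝕜] E} (hab : ∀ᶠ i in l, Commute (a i) b)
    (hφ : Tendsto (fun i ↦ a i x) l (𝓝 φ)) (hψ : Tendsto (fun i ↦ ((a i)†) y) l (𝓝 ψ)) :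
    ⟪b x, ψ⟫_𝕜 = ⟪φ, (b†) y⟫_𝕜 := by
  have hlim : Tendsto (fun i ↦ ⟪b x, ((a i)†) y⟫_𝕜) l (𝓝 ⟪φ, (b†) y⟫_𝕜) :=
    (hφ.inner tendsto_const_nhds).congr' <| hab.mono fun i hi ↦
      (inner_apply_adjoint_apply_of_commute hi x y).symm
  exact tendsto_nhds_unique (tendsto_const_nhds.inner hψ) hlim

theorem tomita_operator_closable_general {S : Set (E →L[𝕜] E)}
    (hx : Dense {z : E | ∃ b ∈ S.centralizer, b x = z}) {l : Filter ι} [l.NeBot]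
    {a : ι → E →L[𝕜] E} (ha : ∀ᶠ i in l, a i ∈ S)
    (h0 : Tendsto (fun i ↦ a i x) l (𝓝 0)) (hψ : Tendsto (fun i ↦ ((a i)†) y) l (𝓝 ψ)) :
    ψ = 0 := by
  refine hx.eq_zero_of_inner_right 𝕜 ?_
  rintro _ ⟨b, hb, rfl⟩
  have hab : ∀ᶠ i in l, Commute (a i) b := ha.mono fun i hi ↦ hb (a i) hi
  simpa only [inner_zero_left] using inner_apply_eq_of_tendsto_of_tendsto_adjoint hab h0 hψ

end

/-- **Closability of the Tomita operator.**
Let `Ω` be cyclic and separating for the von Neumann algebra `A`. If `(aₙ)` is a sequence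
in `A` with `aₙ Ω → 0` and `aₙ* Ω → ψ`, then `ψ = 0`. -/
theorem tomita_operator_closable
    (A : VonNeumannAlgebra H) (Ω : H)
    (hcyc : IsCyclicVector (A : Set (H →L[ℂ] H)) Ω)
    (hsep : IsCyclicVector (A.commutant : Set (H →L[ℂ] H)) Ω)
    (a : ℕ → (H →L[ℂ] H)) (ha : ∀ n, a n ∈ A) (ψ : H)
    (h0 : Filter.Tendsto (fun n => a n Ω) Filter.atTop (nhds 0))
    (hψ : Filter.Tendsto (fun n => (ContinuousLinearMap.adjoint (a n)) Ω)
      Filter.atTop (nhds ψ)) :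
    ψ = 0 :=
  tomita_operator_closable_general (A.coe_commutant ▸ hsep) (.of_forall ha) h0 hψ
end
end

section
/- Let H be a complex Hilbert space, 𝒜 a von Neumann algebra on H, and Ω ∈ H a vector that is cyclic and separating for 𝒜. Let 𝒮 ⊆ 𝒜 be a subset with the property that for every a ∈ 𝒜 there exists a sequence (a_n) in 𝒮 with a_n Ω → a Ω and a_n* Ω → a* Ω in H. Then every bounded operator O on H that commutes with every element of 𝒮 also commutes with every element of 𝒜; consequently the double commutant of 𝒮 equals 𝒜. -/
noncomputable section

variable {H : Type*} [NormedAddCommGroup H] [InnerProductSpace ℂ H] [CompleteSpace H]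

/-!
A commutation relation `O a = a O` can be tested on matrix elements between vectors `b Ω` and `c Ω`
with `b`, `c` in the commutant. There the commutant elements move past `a` and `a†`, so the relation
only involves `a` through the pair `(a Ω, a† Ω)`, on which it is a closed condition. Thus it passes
from the elements of `S` to their limits in the graph topology.
-/

section GraphTopology

open Filter Topology
open scoped InnerProduct InnerProductSpace

variable {𝕜 E : Type*} [RCLike 𝕜] [NormedAddCommGroup E] [InnerProductSpace 𝕜 E]

theorem eq_of_forall_inner_apply_eq_of_dense {F : Type*} [TopologicalSpace F]
    [AddCommMonoid F] [Module 𝕜 F] {P Q : F →L[𝕜] E} {s : Set F} {t : Set E}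
    (hs : Dense s) (ht : Dense t) (h : ∀ x ∈ s, ∀ y ∈ t, ⟪y, P x⟫_𝕜 = ⟪y, Q x⟫_𝕜) : P = Q :=
  ContinuousLinearMap.coeFn_injective <|
    Continuous.ext_on hs P.continuous Q.continuous fun x hx =>
      ht.eq_of_inner_right (𝕜 := 𝕜) (h x hx)

variable [CompleteSpace E]

/-- The point of the graph of the Tomita operator `a Ω ↦ a† Ω` given by `a`. The graph topology on
operators is the one induced by this map. -/
def tomitaGraphPoint (Ω : E) (a : E →L[𝕜] E) : E × E :=
  (a Ω, (a†) Ω)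

theorem commute_iff_forall_inner_eq {Ω : E} {a O : E →L[𝕜] E} {T : Set (E →L[𝕜] E)}
    (hT : Dense ((fun t : E →L[𝕜] E => t Ω) '' T))
    (ha : ∀ t ∈ T, Commute t a) (ha' : ∀ t ∈ T, Commute t (a†)) :
    Commute O a ↔ ∀ b ∈ T, ∀ c ∈ T, ⟪b Ω, O (c (a Ω))⟫_𝕜 = ⟪b ((a†) Ω), O (c Ω)⟫_𝕜 := by
  have inner_Oa (b : E →L[𝕜] E) {c : E →L[𝕜] E} (hc : c ∈ T) :
      ⟪b Ω, (O * a) (c Ω)⟫_𝕜 = ⟪b Ω, O (c (a Ω))⟫_𝕜 :=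
    congr(⟪b Ω, O ($((ha c hc).eq) Ω)⟫_𝕜).symm
  have inner_aO {b : E →L[𝕜] E} (hb : b ∈ T) (c : E →L[𝕜] E) :
      ⟪b Ω, (a * O) (c Ω)⟫_𝕜 = ⟪b ((a†) Ω), O (c Ω)⟫_𝕜 := calc
    ⟪b Ω, a (O (c Ω))⟫_𝕜 = ⟪(a†) (b Ω), O (c Ω)⟫_𝕜 := (a.adjoint_inner_left _ _).symm
    _ = ⟪b ((a†) Ω), O (c Ω)⟫_𝕜 := congr(⟪$((ha' b hb).eq) Ω, O (c Ω)⟫_𝕜).symm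
  constructor
  · intro h b hb c hc
    rw [← inner_Oa b hc, h.eq, inner_aO hb c]
  · intro h
    refine eq_of_forall_inner_apply_eq_of_dense hT hT ?_
    rintro _ ⟨c, hc, rfl⟩ _ ⟨b, hb, rfl⟩
    rw [inner_Oa b hc, inner_aO hb c, h b hb c hc]

theorem commute_of_tomitaGraphPoint_mem_closure {Ω : E} {A S : Set (E →L[𝕜] E)}
    (hA : ∀ a ∈ A, a† ∈ A)
    (hΩ : Dense ((fun t : E →L[𝕜] E => t Ω) '' A.centralizer)) (hSA : S ⊆ A)
    {a O : E →L[𝕜] E} (ha : a ∈ A)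
    (haS : tomitaGraphPoint Ω a ∈ closure (tomitaGraphPoint Ω '' S))
    (hO : ∀ s ∈ S, Commute O s) : Commute O a := by
  have commute_iff {x : E →L[𝕜] E} (hx : x ∈ A) := commute_iff_forall_inner_eq (O := O) hΩ
    (fun _ ht => (ht x hx).symm) (fun _ ht => (ht _ (hA x hx)).symm)
  refine (commute_iff ha).2 fun b hb c hc => ?_
  have isClosed_eq_inner : IsClosed {p : E × E | ⟪b Ω, O (c p.1)⟫_𝕜 = ⟪b p.2, O (c Ω)⟫_𝕜} :=
    isClosed_eq (by fun_prop) (by fun_prop)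
  refine closure_minimal ?_ isClosed_eq_inner haS
  rintro _ ⟨s, hs, rfl⟩
  exact (commute_iff (hSA hs)).1 (hO s hs) b hb c hc

theorem generating_of_dense_in_graph_topology_general {Ω : E} {A S : Set (E →L[𝕜] E)}
    (hA : ∀ a ∈ A, a† ∈ A)
    (hsep : Dense ((fun t : E →L[𝕜] E => t Ω) '' A.centralizer)) (hS : S ⊆ A)
    (happrox : ∀ a ∈ A, ∃ seq : ℕ → (E →L[𝕜] E), (∀ n, seq n ∈ S) ∧
      Tendsto (fun n => seq n Ω) atTop (𝓝 (a Ω)) ∧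
      Tendsto (fun n => ((seq n)†) Ω) atTop (𝓝 ((a†) Ω))) :
    (∀ O : E →L[𝕜] E, (∀ s ∈ S, O * s = s * O) → ∀ a ∈ A, O * a = a * O) ∧
      S.centralizer.centralizer = A.centralizer.centralizer := by
  have commute_of_commute (O : E →L[𝕜] E) (hO : ∀ s ∈ S, Commute O s) (a) (ha : a ∈ A) :
      Commute O a := by
    obtain ⟨seq, hseq, hlim, hlim_adjoint⟩ := happrox a ha
    exact commute_of_tomitaGraphPoint_mem_closure hA hsep hS ha
      (mem_closure_of_tendsto (hlim.prodMk_nhds hlim_adjoint)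
        (.of_forall fun n => Set.mem_image_of_mem _ (hseq n))) hO
  have centralizer_eq : S.centralizer = A.centralizer :=
    (Set.centralizer_subset hS).antisymm' fun O hO a ha =>
      (commute_of_commute O (fun s hs => (hO s hs).symm) a ha).symm
  exact ⟨commute_of_commute, by rw [centralizer_eq]⟩

end GraphTopology

/-- Let `Ω` be cyclic and separating for the von Neumann algebra `A`, and let `S ⊆ A`
be such that every `a ∈ A` is approximated by a sequence `(aₙ)` in `S` with
`aₙ Ω → a Ω` and `aₙ* Ω → a* Ω`. Then every bounded operator commuting with every element
of `S` commutes with every element of `A`; consequently the double commutant of `S` is `A`. -/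
theorem generating_of_dense_in_graph_topology
    (A : VonNeumannAlgebra H) (Ω : H)
    (hcyc : IsCyclicVector (A : Set (H →L[ℂ] H)) Ω)
    (hsep : IsCyclicVector (A.commutant : Set (H →L[ℂ] H)) Ω)
    (S : Set (H →L[ℂ] H)) (hS : S ⊆ (A : Set (H →L[ℂ] H)))
    (happrox : ∀ a ∈ A, ∃ seq : ℕ → (H →L[ℂ] H), (∀ n, seq n ∈ S) ∧
      Filter.Tendsto (fun n => seq n Ω) Filter.atTop (nhds (a Ω)) ∧
      Filter.Tendsto (fun n => (ContinuousLinearMap.adjoint (seq n)) Ω)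
        Filter.atTop (nhds ((ContinuousLinearMap.adjoint a) Ω))) :
    (∀ O : H →L[ℂ] H, (∀ s ∈ S, O * s = s * O) → ∀ a ∈ A, O * a = a * O) ∧
      Set.centralizer (Set.centralizer S) = (A : Set (H →L[ℂ] H)) := by
  simpa only [A.centralizer_centralizer, SetLike.mem_coe] using
    generating_of_dense_in_graph_topology_general (fun _ => star_mem (s := A))
      (A.coe_commutant ▸ hsep) hS happrox
end
end
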